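/- arXiv:alg-geom/9506002 — 3 statements merged into one kernel-verified Lean document; each statement's English description precedes it below -/
import Mathlib

section
/- Let f : ℝ² → ℝ be a nonconstant real polynomial function of degree d in two variables with only finitely many critical points, and suppose that the homogeneous part f_d of degree d has no repeated real linear factors, i.e., for every (a,b) ≠ (0,0) the square (b·x − a·y)² does not divide f_d. Then for every admissible radius R the index i of grad f around the circle of radius R equals 1 − d_R, where d_R is the real degree of f. -/
open MvPolynomial Filter

/-- Evaluation of a polynomial in two variables at the point `(x, y)`. -/
noncomputable def evalP (f : MvPolynomial (Fin 2) ℝ) (x y : ℝ) : ℝ :=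
  MvPolynomial.eval ![x, y] f

/-- `p` is a critical point of `f`: both partial derivatives vanish at `p`. -/
def IsCriticalPt (f : MvPolynomial (Fin 2) ℝ) (p : ℝ × ℝ) : Prop :=
  evalP (pderiv 0 f) p.1 p.2 = 0 ∧ evalP (pderiv 1 f) p.1 p.2 = 0

/-- `u(t) = f_x(R cos t, R sin t)`. -/
noncomputable def uFun (f : MvPolynomial (Fin 2) ℝ) (R t : ℝ) : ℝ :=
  evalP (pderiv 0 f) (R * Real.cos t) (R * Real.sin t)

/-- `v(t) = f_y(R cos t, R sin t)`. -/
noncomputable def vFun (f : MvPolynomial (Fin 2) ℝ) (R t : ℝ) : ℝ :=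
  evalP (pderiv 1 f) (R * Real.cos t) (R * Real.sin t)

/-- The index of `grad f` around the circle of radius `R`, as the winding-number
integral `(1/(2π)) ∫₀^{2π} (u v' - v u')/(u² + v²) dt`. -/
noncomputable def gradIndex (f : MvPolynomial (Fin 2) ℝ) (R : ℝ) : ℝ :=
  (1 / (2 * Real.pi)) *
    ∫ t in (0:ℝ)..(2 * Real.pi),
      (uFun f R t * deriv (vFun f R) t - vFun f R t * deriv (uFun f R) t) /
        ((uFun f R t) ^ 2 + (vFun f R t) ^ 2)

/-- The multiplicity of the real linear form `b·x − a·y` in `F`: the largest `m`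
such that `(b·x − a·y)^m` divides `F` in `ℝ[x,y]`. -/
noncomputable def linMult (F : MvPolynomial (Fin 2) ℝ) (a b : ℝ) : ℕ :=
  sSup {m : ℕ | (C b * X 0 - C a * X 1) ^ m ∣ F}

/-- The "real degree" of a homogeneous polynomial `F`: the sum, over the points
`[a : b]` of the real projective line (represented by `[a : 1]` for `a ∈ ℝ`,
together with `[1 : 0]`), of the multiplicity of the real linear factor
`b·x − a·y` in `F`; i.e. the sum of the multiplicities of the real linear
factors of `F`. -/
noncomputable def realDegreeOf (F : MvPolynomial (Fin 2) ℝ) : ℕ :=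
  (∑ᶠ a : ℝ, linMult F a 1) + linMult F 1 0

/-- The angular speed of a plane curve `(x, y)` with velocity `(x', y')`. -/
noncomputable def angSpeed (x y x' y' : ℝ → ℝ) (t : ℝ) : ℝ :=
  (x t * y' t - y t * x' t) / (x t ^ 2 + y t ^ 2)

theorem sq_add_sq_pos_of {a b : ℝ} (h : ¬ (a = 0 ∧ b = 0)) : 0 < a ^ 2 + b ^ 2 := by
  by_contra hc
  apply h
  constructor <;> nlinarith [sq_nonneg a, sq_nonneg b]

theorem angSpeed_continuous {x y x' y' : ℝ → ℝ} (hx : ∀ t, HasDerivAt x (x' t) t)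
    (hy : ∀ t, HasDerivAt y (y' t) t) (hx' : Continuous x') (hy' : Continuous y')
    (hne : ∀ t, ¬ (x t = 0 ∧ y t = 0)) : Continuous (angSpeed x y x' y') := by
  have cx : Continuous x := continuous_iff_continuousAt.2 fun t => (hx t).continuousAt
  have cy : Continuous y := continuous_iff_continuousAt.2 fun t => (hy t).continuousAt
  unfold angSpeed
  refine Continuous.div (by fun_prop) (by fun_prop) fun t => (sq_add_sq_pos_of (hne t)).ne'

/-- Phase lemma: a function with derivative the angular speed which is correct (mod `π`) at `0`
is the phase (mod `π`) everywhere. -/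
theorem phase_eq {x y x' y' φ : ℝ → ℝ} (hx : ∀ t, HasDerivAt x (x' t) t)
    (hy : ∀ t, HasDerivAt y (y' t) t)
    (hne : ∀ t, ¬ (x t = 0 ∧ y t = 0))
    (hφ : ∀ t, HasDerivAt φ (angSpeed x y x' y' t) t)
    (h0 : y 0 * Real.cos (φ 0) - x 0 * Real.sin (φ 0) = 0) (t : ℝ) :
    y t * Real.cos (φ t) - x t * Real.sin (φ t) = 0 := by
  have key : ∀ t, HasDerivAt (fun t => (y t * Real.cos (φ t) - x t * Real.sin (φ t)) ^ 2 /
      (x t ^ 2 + y t ^ 2)) 0 t := by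
    intro t
    have hpos := sq_add_sq_pos_of (hne t)
    have h := ((((hy t).mul (hφ t).cos).sub ((hx t).mul (hφ t).sin)).pow 2).div
      (((hx t).pow 2).add ((hy t).pow 2)) hpos.ne'
    refine h.congr_deriv ?_
    rw [div_eq_zero_iff]
    left
    simp only [Pi.add_apply, Pi.sub_apply, Pi.mul_apply, Pi.pow_apply, angSpeed]
    set X := x t
    set Y := y t
    set c := Real.cos (φ t)
    set s := Real.sin (φ t)
    field_simp
    ring
  have hc := is_const_of_deriv_eq_zero (fun t => (key t).differentiableAt)
    (fun t => (key t).deriv) t 0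
  have hpos := sq_add_sq_pos_of (hne t)
  simp only [h0] at hc
  rw [div_eq_iff hpos.ne'] at hc
  simpa using hc

theorem hasDerivAt_primitive {w : ℝ → ℝ} (hw : Continuous w) (c t : ℝ) :
    HasDerivAt (fun t => c + ∫ s in (0:ℝ)..t, w s) (w t) t :=
  (intervalIntegral.integral_hasDerivAt_right (hw.intervalIntegrable _ _)
    (hw.stronglyMeasurableAtFilter _ _) hw.continuousAt).const_add c

theorem exists_angle (a b : ℝ) : ∃ θ : ℝ, b * Real.cos θ - a * Real.sin θ = 0 := by
  refine ⟨Complex.arg ⟨a, b⟩, ?_⟩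
  have h1 := Complex.norm_mul_cos_arg ⟨a, b⟩
  have h2 := Complex.norm_mul_sin_arg ⟨a, b⟩
  simp only at h1 h2
  generalize Complex.arg ⟨a, b⟩ = θ at *
  linear_combination (-Real.cos θ) * h2 + Real.sin θ * h1

theorem sin_integral_angSpeed {x y x' y' : ℝ → ℝ} (hx : ∀ t, HasDerivAt x (x' t) t)
    (hy : ∀ t, HasDerivAt y (y' t) t) (hx' : Continuous x') (hy' : Continuous y')
    (hne : ∀ t, ¬ (x t = 0 ∧ y t = 0)) (T : ℝ) (hxT : x T = x 0) (hyT : y T = y 0) :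
    Real.sin (∫ t in (0:ℝ)..T, angSpeed x y x' y' t) = 0 := by
  obtain ⟨θ, hθ⟩ := exists_angle (x 0) (y 0)
  have hw := angSpeed_continuous hx hy hx' hy' hne
  have h := phase_eq hx hy hne (hasDerivAt_primitive hw θ) (by simpa using hθ) T
  rw [hxT, hyT] at h
  generalize (∫ t in (0:ℝ)..T, angSpeed x y x' y' t) = I at *
  rw [Real.cos_add, Real.sin_add] at h
  have hpos := sq_add_sq_pos_of (hne 0)
  have h3 : (x 0 * Real.cos θ + y 0 * Real.sin θ) * Real.sin I = 0 := by
    linear_combination -h + Real.cos I * hθ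
  rcases mul_eq_zero.1 h3 with h4 | h4
  · exfalso
    have : (x 0 ^ 2 + y 0 ^ 2) * (Real.cos θ ^ 2 + Real.sin θ ^ 2) = 0 := by
      linear_combination (x 0 * Real.cos θ + y 0 * Real.sin θ) * h4 +
        (y 0 * Real.cos θ - x 0 * Real.sin θ) * hθ
    rw [Real.cos_sq_add_sin_sq] at this
    linarith
  · exact h4

/-- crossing lemma -/
theorem crossing {φ w : ℝ → ℝ} (hφ : ∀ t, HasDerivAt φ (w t) t) {c : ℝ}
    (hw : ∀ t, φ t = c → w t < 0) {s t : ℝ} (hst : s < t) (hs : φ s ≤ c) : φ t < c := by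
  have cφ : Continuous φ := continuous_iff_continuousAt.2 fun t => (hφ t).continuousAt
  have hle : ∀ ⦃x⦄, x ∈ Set.Icc s t → φ x ≤ c :=
    image_le_of_deriv_right_lt_deriv_boundary' (B := fun _ => c) (B' := fun _ => 0)
      cφ.continuousOn (fun x _ => (hφ x).hasDerivWithinAt) hs continuousOn_const
      (fun x _ => hasDerivWithinAt_const _ _ _) (fun x _ h => hw x h)
  refine lt_of_le_of_ne (hle ⟨hst.le, le_rfl⟩) fun heq => ?_
  have h1 := (hasDerivAt_iff_tendsto_slope_left_right.1 (hφ t)).1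
  have h2 := (h1.eventually (gt_mem_nhds (hw t heq))).and
    (Ioo_mem_nhdsLT hst)
  obtain ⟨r, hr, hr1, hr2⟩ := h2.exists
  rw [slope_def_field, heq] at hr
  have h3 := hle ⟨hr1.le, hr2.le⟩
  have : 0 ≤ (φ r - c) / (r - t) := div_nonneg_of_nonpos (by linarith) (by linarith)
  linarith

/-- Counting zeros by the phase drop. -/
theorem count_phase {φ w : ℝ → ℝ} (hφ : ∀ t, HasDerivAt φ (w t) t)
    (hw : ∀ t, Real.cos (φ t) = 0 → w t < 0) (N : ℤ)
    (hN : φ Real.pi = φ 0 - N * Real.pi) :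
    (({t | t ∈ Set.Ico 0 Real.pi ∧ Real.cos (φ t) = 0}.ncard : ℕ) : ℤ) = N ∧
      {t | t ∈ Set.Ico 0 Real.pi ∧ Real.cos (φ t) = 0}.Finite := by
  have hπ := Real.pi_pos
  have cφ : Continuous φ := continuous_iff_continuousAt.2 fun t => (hφ t).continuousAt
  have hcos : ∀ k : ℤ, Real.cos ((2 * k + 1) * Real.pi / 2) = 0 := fun k =>
    Real.cos_eq_zero_iff.2 ⟨k, rfl⟩
  have cross : ∀ (k : ℤ) {s t : ℝ}, s < t → φ s ≤ (2 * k + 1) * Real.pi / 2 →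
      φ t < (2 * k + 1) * Real.pi / 2 := fun k s t hst hs =>
    crossing hφ (fun t ht => hw t (by rw [ht]; exact hcos k)) hst hs
  set m : ℤ := ⌊φ 0 / Real.pi - 1 / 2⌋ with hm
  have hm1 : (2 * m + 1) * Real.pi / 2 ≤ φ 0 := by
    have := Int.floor_le (φ 0 / Real.pi - 1 / 2)
    rw [← hm, le_sub_iff_add_le, le_div_iff₀ hπ] at this
    linarith
  have hm2 : φ 0 < (2 * (m + 1 : ℤ) + 1) * Real.pi / 2 := by
    have := Int.lt_floor_add_one (φ 0 / Real.pi - 1 / 2)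
    rw [← hm, sub_lt_iff_lt_add, div_lt_iff₀ hπ] at this
    push_cast
    linarith
  have hN0 : 0 ≤ N := by
    by_contra hneg
    have h1 : (N : ℝ) ≤ -1 := by exact_mod_cast (by omega : N ≤ -1)
    have := cross (m + 1) hπ hm2.le
    rw [hN] at this
    push_cast at this
    nlinarith
  have inj : Set.InjOn φ {t | t ∈ Set.Ico 0 Real.pi ∧ Real.cos (φ t) = 0} := by
    rintro s ⟨-, hs⟩ t ⟨-, ht⟩ hst
    obtain ⟨k, hk⟩ := Real.cos_eq_zero_iff.1 hs
    rcases lt_trichotomy s t with h | h | h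
    · have := cross k h hk.le
      linarith
    · exact h
    · have := cross k h (hst ▸ hk.le)
      linarith
  have himg : φ '' {t | t ∈ Set.Ico 0 Real.pi ∧ Real.cos (φ t) = 0} =
      (fun k : ℤ => (2 * k + 1) * Real.pi / 2) '' (Set.Ioc (m - N) m) := by
    ext c
    constructor
    · rintro ⟨t, ⟨⟨ht0, ht1⟩, ht⟩, rfl⟩
      obtain ⟨k, hk⟩ := Real.cos_eq_zero_iff.1 ht
      refine ⟨k, ⟨?_, ?_⟩, hk.symm⟩
      · have h1 := cross k ht1 hk.le
        rw [hN] at h1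
        by_contra hcon
        have h2 : (k : ℝ) ≤ m - N := by exact_mod_cast not_lt.1 hcon
        nlinarith
      · by_contra hcon
        have h2 : (m : ℝ) + 1 ≤ k := by exact_mod_cast not_le.1 hcon
        have h3 : φ 0 < (2 * k + 1) * Real.pi / 2 := by
          push_cast at hm2
          nlinarith
        rcases ht0.eq_or_lt with h | h
        · rw [h] at h3
          linarith
        · have := cross k h h3.le
          linarith
    · rintro ⟨k, ⟨hk1, hk2⟩, rfl⟩
      have h1 : (m : ℝ) - N + 1 ≤ k := by exact_mod_cast hk1
      have h2 : (k : ℝ) ≤ m := by exact_mod_cast hk2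
      have h3 : (2 * k + 1) * Real.pi / 2 ∈ Set.Icc (φ Real.pi) (φ 0) := by
        push_cast at hm2
        rw [hN]
        constructor <;> nlinarith
      obtain ⟨t, ht, hteq⟩ := intermediate_value_Icc' hπ.le cφ.continuousOn h3
      refine ⟨t, ⟨⟨ht.1, lt_of_le_of_ne ht.2 ?_⟩, ?_⟩, hteq⟩
      · rintro rfl
        rw [hN] at hteq
        push_cast at hm2
        nlinarith
      · rw [hteq]; exact hcos k
  have hinj2 : Function.Injective (fun k : ℤ => (2 * (k : ℝ) + 1) * Real.pi / 2) := by
    intro a b hab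
    simp only at hab
    have : (a : ℝ) = b := by
      have : ((a : ℝ) - b) * Real.pi = 0 := by linarith
      rcases mul_eq_zero.1 this with h | h
      · linarith
      · exact absurd h hπ.ne'
    exact_mod_cast this
  constructor
  · rw [← inj.ncard_image, himg, Set.ncard_image_of_injective _ hinj2,
      ← Finset.coe_Ioc, Set.ncard_coe_finset, Int.card_Ioc]
    omega
  · refine Set.Finite.of_finite_image ?_ inj
    rw [himg]
    exact (Set.finite_Ioc _ _).image _

theorem evalP_smul_homog {p : MvPolynomial (Fin 2) ℝ} {n : ℕ} (hp : p.IsHomogeneous n)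
    (c x y : ℝ) : evalP p (c * x) (c * y) = c ^ n * evalP p x y := by
  unfold evalP
  rw [MvPolynomial.eval_eq', MvPolynomial.eval_eq', Finset.mul_sum]
  refine Finset.sum_congr rfl fun m hm => ?_
  have h1 := hp.degree_eq_sum_deg_support hm
  have h2 : n = m 0 + m 1 := by
    rw [h1, Finset.sum_subset (Finset.subset_univ _) (by simp), Fin.sum_univ_two]
  simp only [Fin.prod_univ_two, Matrix.cons_val_zero, Matrix.cons_val_one]
  rw [h2]
  ring

/-- restriction of a polynomial to the unit circle. -/
noncomputable def circ (p : MvPolynomial (Fin 2) ℝ) (t : ℝ) : ℝ :=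
  evalP p (Real.cos t) (Real.sin t)

/-- angular derivative. -/
noncomputable def angD (p : MvPolynomial (Fin 2) ℝ) : MvPolynomial (Fin 2) ℝ :=
  X 0 * pderiv 1 p - X 1 * pderiv 0 p

theorem evalP_hasDerivAt (p : MvPolynomial (Fin 2) ℝ) {a b a' b' : ℝ → ℝ} {t : ℝ}
    (ha : HasDerivAt a (a' t) t) (hb : HasDerivAt b (b' t) t) :
    HasDerivAt (fun t => evalP p (a t) (b t))
      (evalP (pderiv 0 p) (a t) (b t) * a' t + evalP (pderiv 1 p) (a t) (b t) * b' t) t := by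
  unfold evalP
  induction p using MvPolynomial.induction_on with
  | C r => simpa using hasDerivAt_const t r
  | add p q hp hq =>
    simp only [map_add]
    refine (hp.add hq).congr_deriv ?_
    ring
  | mul_X p i hp =>
    have hi : HasDerivAt (fun t => (![a t, b t] : Fin 2 → ℝ) i)
        ((![a' t, b' t] : Fin 2 → ℝ) i) t := by
      fin_cases i
      · simpa using ha
      · simpa using hb
    simp only [map_mul, eval_X]
    refine (hp.mul hi).congr_deriv ?_
    fin_cases i <;> simp [pderiv_X, Derivation.leibniz] <;> ring

theorem circ_hasDerivAt (p : MvPolynomial (Fin 2) ℝ) (t : ℝ) :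
    HasDerivAt (circ p) (circ (angD p) t) t := by
  refine (evalP_hasDerivAt p (a' := fun t => - Real.sin t) (b' := fun t => Real.cos t)
    (Real.hasDerivAt_cos t) (Real.hasDerivAt_sin t)).congr_deriv ?_
  simp [circ, angD, evalP]
  ring

theorem circ_continuous (p : MvPolynomial (Fin 2) ℝ) : Continuous (circ p) :=
  continuous_iff_continuousAt.2 fun t => (circ_hasDerivAt p t).continuousAt

theorem circ_two_pi (p : MvPolynomial (Fin 2) ℝ) : circ p (2 * Real.pi) = circ p 0 := by
  simp [circ]

theorem circ_sum_smul {ι : Type*} (s : Finset ι) (c : ι → ℝ) (p : ι → MvPolynomial (Fin 2) ℝ)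
    (t : ℝ) : circ (∑ i ∈ s, c i • p i) t = ∑ i ∈ s, c i * circ (p i) t := by
  simp [circ, evalP, map_sum, smul_eval]

theorem angD_sum_smul {ι : Type*} (s : Finset ι) (c : ι → ℝ) (p : ι → MvPolynomial (Fin 2) ℝ) :
    angD (∑ i ∈ s, c i • p i) = ∑ i ∈ s, c i • angD (p i) := by
  simp [angD, map_sum, Finset.mul_sum, smul_sub, Finset.sum_sub_distrib]

theorem pderiv_sum_smul {ι : Type*} (j : Fin 2) (s : Finset ι) (c : ι → ℝ)
    (p : ι → MvPolynomial (Fin 2) ℝ) :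
    pderiv j (∑ i ∈ s, c i • p i) = ∑ i ∈ s, c i • pderiv j (p i) := by
  simp [map_sum]

/-- the homotopy polynomial. -/
noncomputable def homot (f : MvPolynomial (Fin 2) ℝ) (d : ℕ) (s : ℝ) : MvPolynomial (Fin 2) ℝ :=
  ∑ k ∈ Finset.range (d + 1), (s ^ (d - k)) • homogeneousComponent k f

theorem homot_zero (f : MvPolynomial (Fin 2) ℝ) (d : ℕ) :
    homot f d 0 = homogeneousComponent d f := by
  unfold homot
  rw [Finset.sum_eq_single d]
  · simp
  · intro k hk hkd
    have : d - k ≠ 0 := by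
      have := Finset.mem_range.1 hk
      omega
    simp [this]
  · simp

theorem evalP_pderiv_homot (f : MvPolynomial (Fin 2) ℝ) (d : ℕ) (hd : f.totalDegree = d)
    (j : Fin 2) (R : ℝ) (hR : 0 < R) (x y : ℝ) :
    evalP (pderiv j f) (R * x) (R * y) * R =
      R ^ d * evalP (pderiv j (homot f d R⁻¹)) x y := by
  have h1 : pderiv j f = ∑ k ∈ Finset.range (d + 1), pderiv j (homogeneousComponent k f) := by
    conv_lhs => rw [← sum_homogeneousComponent f, hd]
    rw [map_sum]
  rw [homot, pderiv_sum_smul, h1]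
  simp only [evalP, map_sum, smul_eval]
  rw [Finset.sum_mul, Finset.mul_sum]
  refine Finset.sum_congr rfl fun k hk => ?_
  have hk' : k ≤ d := by
    have := Finset.mem_range.1 hk
    omega
  have h2 := evalP_smul_homog ((homogeneousComponent_isHomogeneous k f).pderiv (i := j)) R x y
  unfold evalP at h2
  rw [h2]
  rcases k with _ | k
  · simp [homogeneousComponent_zero]
  · have h3 : R ^ d * R⁻¹ ^ (d - (k + 1)) = R ^ (k + 1) := by
      conv_lhs => rw [show d = (d - (k+1)) + (k+1) by omega]
      rw [pow_add, inv_pow, Nat.add_sub_cancel]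
      field_simp
    rw [Nat.add_sub_cancel]
    linear_combination (-(eval ![x, y]) (pderiv j (homogeneousComponent (k + 1) f))) * h3

/-- winding integrand of the gradient of `p` along the unit circle. -/
noncomputable def gradSpeed (p : MvPolynomial (Fin 2) ℝ) : ℝ → ℝ :=
  angSpeed (circ (pderiv 0 p)) (circ (pderiv 1 p))
    (circ (angD (pderiv 0 p))) (circ (angD (pderiv 1 p)))

theorem homot_integral_const (f : MvPolynomial (Fin 2) ℝ) (d : ℕ) (S : ℝ) (hS : 0 ≤ S)
    (hne : ∀ s ∈ Set.Icc 0 S, ∀ t, ¬ (circ (pderiv 0 (homot f d s)) t = 0 ∧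
      circ (pderiv 1 (homot f d s)) t = 0)) :
    ∫ t in (0:ℝ)..(2 * Real.pi), gradSpeed (homot f d S) t =
      ∫ t in (0:ℝ)..(2 * Real.pi), gradSpeed (homot f d 0) t := by
  have hjoint : ∀ L : ℕ → MvPolynomial (Fin 2) ℝ, Continuous fun q : (Set.Icc (0:ℝ) S) × ℝ =>
      circ (∑ k ∈ Finset.range (d + 1), ((q.1 : ℝ) ^ (d - k)) • L k) q.2 := by
    intro L
    simp only [circ_sum_smul]
    refine continuous_finsetSum _ fun k _ => ?_
    have := circ_continuous (L k)
    fun_prop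
  have hc : Continuous fun q : (Set.Icc (0:ℝ) S) × ℝ => gradSpeed (homot f d q.1) q.2 := by
    unfold gradSpeed angSpeed
    refine Continuous.div ?_ ?_ ?_
    · simp only [homot, pderiv_sum_smul, angD_sum_smul]
      exact ((hjoint _).mul (hjoint _)).sub ((hjoint _).mul (hjoint _))
    · simp only [homot, pderiv_sum_smul]
      exact ((hjoint _).pow 2).add ((hjoint _).pow 2)
    · rintro ⟨s, t⟩
      exact (sq_add_sq_pos_of (hne s s.2 t)).ne'
  have hI : Continuous fun s : Set.Icc (0:ℝ) S =>
      ∫ t in (0:ℝ)..(2 * Real.pi), gradSpeed (homot f d s) t :=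
    intervalIntegral.continuous_parametric_intervalIntegral_of_continuous' hc _ _
  have hsin : ∀ s : Set.Icc (0:ℝ) S,
      Real.sin (∫ t in (0:ℝ)..(2 * Real.pi), gradSpeed (homot f d s) t) = 0 := fun s =>
    sin_integral_angSpeed (circ_hasDerivAt _) (circ_hasDerivAt _) (circ_continuous _)
      (circ_continuous _) (hne s s.2) _ (circ_two_pi _) (circ_two_pi _)
  have hpre : PreconnectedSpace (Set.Icc (0:ℝ) S) :=
    Subtype.preconnectedSpace isPreconnected_Icc
  have key : ∀ a b : Set.Icc (0:ℝ) S,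
      ¬ (∫ t in (0:ℝ)..(2 * Real.pi), gradSpeed (homot f d a) t) <
        ∫ t in (0:ℝ)..(2 * Real.pi), gradSpeed (homot f d b) t := by
    intro a b hab
    have hmem := intermediate_value_univ a b hI
    obtain ⟨n, hn⟩ := Real.sin_eq_zero_iff.1 (hsin a)
    obtain ⟨m, hm⟩ := Real.sin_eq_zero_iff.1 (hsin b)
    have hπ := Real.pi_pos
    rw [← hn, ← hm] at hab
    have hnm : n < m := by exact_mod_cast lt_of_mul_lt_mul_right hab hπ.le
    have hnm' : (n : ℝ) + 1 ≤ m := by exact_mod_cast hnm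
    obtain ⟨c, hcc⟩ := hmem (show (n + 1 / 2) * Real.pi ∈ Set.Icc _ _ by
      simp only [← hn, ← hm]
      constructor <;> nlinarith)
    have h := hsin c
    simp only at hcc
    obtain ⟨l, hl⟩ := Real.sin_eq_zero_iff.1 h
    rw [hcc] at hl
    have h5 : (l : ℝ) = n + 1 / 2 := mul_right_cancel₀ hπ.ne' hl
    have h6 : ((2 * l : ℤ) : ℝ) = ((2 * n + 1 : ℤ) : ℝ) := by
      push_cast
      linarith
    have h7 : 2 * l = 2 * n + 1 := by exact_mod_cast h6
    omega
  exact le_antisymm (not_lt.1 (key ⟨0, le_rfl, hS⟩ ⟨S, hS, le_rfl⟩))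
    (not_lt.1 (key ⟨S, hS, le_rfl⟩ ⟨0, le_rfl, hS⟩))

theorem gradIndex_eq (f : MvPolynomial (Fin 2) ℝ) (d : ℕ) (hd : f.totalDegree = d)
    (R : ℝ) (hR : 0 < R) :
    gradIndex f R = (1 / (2 * Real.pi)) *
      ∫ t in (0:ℝ)..(2 * Real.pi), gradSpeed (homot f d R⁻¹) t := by
  unfold gradIndex
  congr 1
  refine intervalIntegral.integral_congr fun t _ => ?_
  set c : ℝ := R ^ d / R with hc
  have hcpos : 0 < c := by positivity
  have hu : uFun f R = fun t => c * circ (pderiv 0 (homot f d R⁻¹)) t := by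
    funext t
    have := evalP_pderiv_homot f d hd 0 R hR (Real.cos t) (Real.sin t)
    rw [uFun, circ, hc, div_mul_eq_mul_div, eq_div_iff hR.ne', this]
  have hv : vFun f R = fun t => c * circ (pderiv 1 (homot f d R⁻¹)) t := by
    funext t
    have := evalP_pderiv_homot f d hd 1 R hR (Real.cos t) (Real.sin t)
    rw [vFun, circ, hc, div_mul_eq_mul_div, eq_div_iff hR.ne', this]
  have hu' := fun t => ((circ_hasDerivAt (pderiv 0 (homot f d R⁻¹)) t).const_mul c).deriv
  have hv' := fun t => ((circ_hasDerivAt (pderiv 1 (homot f d R⁻¹)) t).const_mul c).deriv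
  simp only [hu, hv]
  rw [hu', hv']
  unfold gradSpeed angSpeed
  conv_rhs => rw [← mul_div_mul_left _ _ (pow_pos hcpos 2).ne']
  congr 1 <;> ring

theorem lin_dvd_of_eval_zero {F : MvPolynomial (Fin 2) ℝ} {n : ℕ} (hF : F.IsHomogeneous n)
    {a b : ℝ} (hab : ¬ (a = 0 ∧ b = 0)) (h : evalP F a b = 0) :
    (C b * X 0 - C a * X 1) ∣ F := by
  have hpos := sq_add_sq_pos_of hab
  set r := a ^ 2 + b ^ 2 with hr
  set l : MvPolynomial (Fin 2) ℝ := C b * X 0 - C a * X 1 with hl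
  set I := Ideal.span {l} with hI
  rw [← Ideal.mem_span_singleton, ← hI, ← Ideal.Quotient.eq_zero_iff_mem]
  let π : MvPolynomial (Fin 2) ℝ →ₐ[ℝ] (MvPolynomial (Fin 2) ℝ ⧸ I) := Ideal.Quotient.mkₐ ℝ I
  change π F = 0
  set μ : MvPolynomial (Fin 2) ℝ := C (a / r) * X 0 + C (b / r) * X 1 with hμ
  have hC : ∀ u v w z : ℝ, u * v + w * z = r →
      (C (u / r) * C v + C (w / r) * C z : MvPolynomial (Fin 2) ℝ) = 1 := by
    intro u v w z h
    rw [← C_mul, ← C_mul, ← C_add, ← C_1]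
    congr 1
    field_simp
    linarith
  have hab1 := hC a a b b (by rw [hr]; ring)
  have hcomm1 : (C (b / r) * C a : MvPolynomial (Fin 2) ℝ) = C (a / r) * C b := by
    rw [← C_mul, ← C_mul]
    congr 1
    ring
  have h0 : π (X 0) = π (C a * μ) := by
    change Ideal.Quotient.mk I _ = Ideal.Quotient.mk I _
    rw [Ideal.Quotient.eq, hI, Ideal.mem_span_singleton]
    refine ⟨C (b / r), ?_⟩
    rw [hμ, hl]
    linear_combination (-X 0) * hab1
  have h1 : π (X 1) = π (C b * μ) := by
    change Ideal.Quotient.mk I _ = Ideal.Quotient.mk I _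
    rw [Ideal.Quotient.eq, hI, Ideal.mem_span_singleton]
    refine ⟨- C (a / r), ?_⟩
    rw [hμ, hl]
    linear_combination (-X 1) * hab1
  have hX : π F = π (aeval ![C a * μ, C b * μ] F) := by
    have : π = π.comp (aeval ![C a * μ, C b * μ]) := by
      apply MvPolynomial.algHom_ext
      intro i
      fin_cases i
      · simpa using h0
      · simpa using h1
    exact DFunLike.congr_fun this F
  have hz : aeval ![C a * μ, C b * μ] F = C (evalP F a b) * μ ^ n := by
    unfold evalP
    rw [aeval_def, eval₂_eq', MvPolynomial.eval_eq', map_sum, Finset.sum_mul]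
    refine Finset.sum_congr rfl fun m hm => ?_
    have h2 : n = m 0 + m 1 := by
      rw [hF.degree_eq_sum_deg_support hm,
        Finset.sum_subset (Finset.subset_univ _) (by simp), Fin.sum_univ_two]
    rw [h2]
    simp only [Fin.prod_univ_two, Matrix.cons_val_zero, Matrix.cons_val_one, algebraMap_eq,
      map_mul, map_pow]
    ring
  rw [hX, hz, h]
  simp

theorem evalP_zero_of_lin_dvd {F : MvPolynomial (Fin 2) ℝ}
    {a b : ℝ} (h : (C b * X 0 - C a * X 1) ∣ F) : evalP F a b = 0 := by
  obtain ⟨G, rfl⟩ := h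
  simp [evalP]
  left
  ring

theorem exists_homog_factor {F l : MvPolynomial (Fin 2) ℝ} {n : ℕ} (hF : F.IsHomogeneous (n + 1))
    (hl : l.IsHomogeneous 1) (h : l ∣ F) :
    ∃ G : MvPolynomial (Fin 2) ℝ, G.IsHomogeneous n ∧ F = l * G := by
  obtain ⟨G, hG⟩ := h
  refine ⟨homogeneousComponent n G, homogeneousComponent_isHomogeneous n G, ?_⟩
  have h1 : homogeneousComponent (n + 1) F = F := homogeneousComponent_eq_self hF
  rw [← h1, hG]
  conv_lhs => rw [← sum_homogeneousComponent G]
  rw [Finset.mul_sum, map_sum]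
  have h2 : ∀ k, homogeneousComponent (n + 1) (l * homogeneousComponent k G) =
      if k = n then l * homogeneousComponent n G else 0 := by
    intro k
    have h3 : l * homogeneousComponent k G ∈ homogeneousSubmodule (Fin 2) ℝ (1 + k) :=
      hl.mul (homogeneousComponent_isHomogeneous k G)
    rw [homogeneousComponent_of_mem h3]
    by_cases hk : k = n
    · subst hk
      simp [add_comm]
    · rw [if_neg hk, if_neg (by omega)]
  rw [Finset.sum_congr rfl (fun k _ => h2 k), Finset.sum_ite_eq']
  split_ifs with h4
  · rfl
  · rw [homogeneousComponent_eq_zero, mul_zero]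
    simpa using h4

theorem euler_evalP {F : MvPolynomial (Fin 2) ℝ} {n : ℕ} (hF : F.IsHomogeneous n) (a b : ℝ) :
    a * evalP (pderiv 0 F) a b + b * evalP (pderiv 1 F) a b = n * evalP F a b := by
  have := congrArg (eval ![a, b]) hF.sum_X_mul_pderiv
  simpa [evalP, Fin.sum_univ_two] using this

theorem grad_ne_zero {F : MvPolynomial (Fin 2) ℝ} {d : ℕ} (hF : F.IsHomogeneous d) (hd1 : 1 ≤ d)
    (hsq : ∀ a b : ℝ, (a, b) ≠ ((0 : ℝ), (0 : ℝ)) →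
      ¬ ((C b * X 0 - C a * X 1) ^ 2 ∣ F)) {a b : ℝ} (hab : ¬ (a = 0 ∧ b = 0)) :
    ¬ (evalP (pderiv 0 F) a b = 0 ∧ evalP (pderiv 1 F) a b = 0) := by
  rintro ⟨h0, h1⟩
  have he := euler_evalP hF a b
  rw [h0, h1] at he
  have hF0 : evalP F a b = 0 := by
    have : (d : ℝ) ≠ 0 := by exact_mod_cast (by omega : d ≠ 0)
    simpa [this] using he.symm
  have hdvd := lin_dvd_of_eval_zero hF hab hF0
  obtain ⟨n, rfl⟩ : ∃ n, d = n + 1 := ⟨d - 1, by omega⟩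
  have hl : (C b * X 0 - C a * X 1 : MvPolynomial (Fin 2) ℝ).IsHomogeneous 1 :=
    (isHomogeneous_C_mul_X b 0).sub (isHomogeneous_C_mul_X a 1)
  obtain ⟨G, hG, hFG⟩ := exists_homog_factor hF hl hdvd
  have e0 : b * evalP G a b = 0 := by
    rw [← h0, hFG]
    simp [evalP, pderiv_X, Derivation.leibniz]
    ring
  have e1 : a * evalP G a b = 0 := by
    rw [← neg_eq_zero, ← h1, hFG]
    simp [evalP, pderiv_X, Derivation.leibniz]
    ring
  have hG0 : evalP G a b = 0 := by
    by_contra hne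
    exact hab ⟨by simpa [hne] using e1, by simpa [hne] using e0⟩
  obtain ⟨H, hH⟩ := lin_dvd_of_eval_zero hG hab hG0
  refine hsq a b (fun h => hab (by simpa using h)) ⟨H, ?_⟩
  rw [hFG, hH]
  ring

open Classical in
theorem linMult_eq {F : MvPolynomial (Fin 2) ℝ} {d : ℕ} (hF : F.IsHomogeneous d)
    {a b : ℝ} (hab : ¬ (a = 0 ∧ b = 0)) (hsq : ¬ ((C b * X 0 - C a * X 1) ^ 2 ∣ F)) :
    linMult F a b = if evalP F a b = 0 then 1 else 0 := by
  unfold linMult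
  have hlt : ∀ m, (C b * X 0 - C a * X 1) ^ m ∣ F → m ≤ 1 := by
    intro m hm
    by_contra hcon
    exact hsq ((pow_dvd_pow _ (by omega)).trans hm)
  split_ifs with h
  · have hdvd := lin_dvd_of_eval_zero hF hab h
    exact IsGreatest.csSup_eq ⟨by simpa using hdvd, hlt⟩
  · refine IsGreatest.csSup_eq ⟨by simp, ?_⟩
    intro m hm
    have h1 := hlt m hm
    by_contra hcon
    have h2 : m = 1 := by omega
    subst h2
    exact h (evalP_zero_of_lin_dvd (by simpa using hm))

theorem circ_cot (F : MvPolynomial (Fin 2) ℝ) {d : ℕ} (hF : F.IsHomogeneous d) (a : ℝ) :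
    circ F (Real.pi / 2 - Real.arctan a) = 0 ↔ evalP F a 1 = 0 := by
  unfold circ
  rw [Real.cos_pi_div_two_sub, Real.sin_pi_div_two_sub]
  have hc := Real.cos_arctan_pos a
  have hs : Real.sin (Real.arctan a) = Real.cos (Real.arctan a) * a := by
    have := Real.tan_mul_cos hc.ne'
    rw [Real.tan_arctan] at this
    rw [← this]
    ring
  have := evalP_smul_homog hF (Real.cos (Real.arctan a)) a 1
  rw [mul_one] at this
  rw [hs, this]
  simp [hc.ne']

theorem realDegree_eq {F : MvPolynomial (Fin 2) ℝ} {d : ℕ} (hF : F.IsHomogeneous d)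
    (hsq : ∀ a b : ℝ, (a, b) ≠ ((0 : ℝ), (0 : ℝ)) →
      ¬ ((C b * X 0 - C a * X 1) ^ 2 ∣ F))
    (hfin : {t | t ∈ Set.Ico 0 Real.pi ∧ circ F t = 0}.Finite) :
    realDegreeOf F = {t | t ∈ Set.Ico 0 Real.pi ∧ circ F t = 0}.ncard := by
  classical
  have hπ := Real.pi_pos
  set Z := {t | t ∈ Set.Ico 0 Real.pi ∧ circ F t = 0} with hZ
  set T := {a : ℝ | evalP F a 1 = 0} with hT
  have hinj : Function.Injective (fun a : ℝ => Real.pi / 2 - Real.arctan a) := by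
    intro a b hab
    exact Real.arctan_injective (by simpa using hab)
  have himg : (fun a : ℝ => Real.pi / 2 - Real.arctan a) '' T = Z \ {0} := by
    ext t
    constructor
    · rintro ⟨a, ha, rfl⟩
      have h1 := Real.arctan_lt_pi_div_two a
      have h2 := Real.neg_pi_div_two_lt_arctan a
      refine ⟨⟨⟨?_, ?_⟩, (circ_cot F hF a).2 ha⟩, ?_⟩
      · simp only; linarith
      · simp only; linarith
      · simp only [Set.mem_singleton_iff]
        intro h
        linarith
    · rintro ⟨⟨⟨h0, h1⟩, h2⟩, h3⟩
      have h4 : 0 < t := lt_of_le_of_ne h0 (fun h => h3 h.symm)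
      have h5 : Real.pi / 2 - Real.arctan (Real.tan (Real.pi / 2 - t)) = t := by
        rw [Real.arctan_tan (by linarith) (by linarith)]
        ring
      refine ⟨Real.tan (Real.pi / 2 - t), ?_, h5⟩
      rw [hT, Set.mem_ofPred_eq, ← circ_cot F hF, h5]
      exact h2
  have hTfin : T.Finite := by
    refine Set.Finite.of_finite_image ?_ hinj.injOn
    rw [himg]
    exact hfin.subset Set.sdiff_subset
  have hsum : ∑ᶠ a : ℝ, linMult F a 1 = T.ncard := by
    have : ∀ a : ℝ, linMult F a 1 = T.indicator (fun _ => 1) a := by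
      intro a
      rw [linMult_eq hF (by simp) (hsq a 1 (by simp))]
      simp [Set.indicator, hT]
    simp_rw [this]
    rw [← finsum_mem_def, finsum_mem_eq_finite_toFinset_sum _ hTfin, Set.ncard_eq_toFinset_card T hTfin]
    simp
  have h0 : (0 : ℝ) ∈ Z ↔ evalP F 1 0 = 0 := by
    simp [hZ, circ, hπ]
  have hTc : T.ncard = (Z \ {0}).ncard := by
    rw [← himg, Set.ncard_image_of_injective _ hinj]
  rw [realDegreeOf, hsum, hTc, linMult_eq hF (by simp) (hsq 1 0 (by simp))]
  by_cases h : evalP F 1 0 = 0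
  · rw [if_pos h]
    exact Set.ncard_sdiff_singleton_add_one (h0.2 h) hfin
  · rw [if_neg h, Set.sdiff_singleton_eq_self (fun hh => h (h0.1 hh))]
    rfl

theorem circ_add_pi {p : MvPolynomial (Fin 2) ℝ} {n : ℕ} (hp : p.IsHomogeneous n) (t : ℝ) :
    circ p (t + Real.pi) = (-1) ^ n * circ p t := by
  unfold circ
  rw [← evalP_smul_homog hp]
  simp

theorem angD_homog {p : MvPolynomial (Fin 2) ℝ} {n : ℕ} (hn : 1 ≤ n) (hp : p.IsHomogeneous n) :
    (angD p).IsHomogeneous n := by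
  have h : ∀ i j : Fin 2, (X i * pderiv j p).IsHomogeneous n := by
    intro i j
    have := (isHomogeneous_X ℝ i).mul (hp.pderiv (i := j))
    rwa [show 1 + (n - 1) = n by omega] at this
  exact (h 0 1).sub (h 1 0)

theorem homog_index {F : MvPolynomial (Fin 2) ℝ} {d : ℕ} (hF : F.IsHomogeneous d) (hd1 : 1 ≤ d)
    (hsq : ∀ a b : ℝ, (a, b) ≠ ((0 : ℝ), (0 : ℝ)) →
      ¬ ((C b * X 0 - C a * X 1) ^ 2 ∣ F)) (i : ℤ)
    (hi : (i : ℝ) = (1 / (2 * Real.pi)) * ∫ t in (0:ℝ)..(2 * Real.pi), gradSpeed F t) :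
    i = 1 - (realDegreeOf F : ℤ) := by
  have hπ := Real.pi_pos
  have hd0 : (0 : ℝ) < d := by exact_mod_cast hd1
  have hgne : ∀ t, ¬ (circ (pderiv 0 F) t = 0 ∧ circ (pderiv 1 F) t = 0) := fun t =>
    grad_ne_zero hF hd1 hsq (by
      rintro ⟨h1, h2⟩
      have := Real.cos_sq_add_sin_sq t
      rw [h1, h2] at this
      norm_num at this)
  -- polar components of the gradient
  have eX : ∀ t, Real.cos t * circ (pderiv 0 F) t + Real.sin t * circ (pderiv 1 F) t =
      d * circ F t := fun t => euler_evalP hF _ _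
  have eY : ∀ t, Real.cos t * circ (pderiv 1 F) t - Real.sin t * circ (pderiv 0 F) t =
      circ (angD F) t := fun t => by simp [circ, angD, evalP]
  have hX : ∀ t, HasDerivAt (fun t => d * circ F t) (d * circ (angD F) t) t := fun t =>
    (circ_hasDerivAt F t).const_mul _
  have hY : ∀ t, HasDerivAt (circ (angD F)) (circ (angD (angD F)) t) t := circ_hasDerivAt _
  have hne : ∀ t, ¬ (d * circ F t = 0 ∧ circ (angD F) t = 0) := by
    rintro t ⟨h1, h2⟩
    rw [← eX] at h1
    rw [← eY] at h2
    have hcs := Real.cos_sq_add_sin_sq t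
    refine hgne t ⟨?_, ?_⟩
    · linear_combination Real.cos t * h1 - Real.sin t * h2 - circ (pderiv 0 F) t * hcs
    · linear_combination Real.sin t * h1 + Real.cos t * h2 - circ (pderiv 1 F) t * hcs
  set w := angSpeed (fun t => d * circ F t) (circ (angD F)) (fun t => d * circ (angD F) t)
    (circ (angD (angD F))) with hw
  have cw : Continuous w := angSpeed_continuous hX hY
    (continuous_const.mul (circ_continuous _)) (circ_continuous _) hne
  have hgw : ∀ t, gradSpeed F t = 1 + w t := by
    intro t
    have hcs := Real.cos_sq_add_sin_sq t
    have dx := circ_hasDerivAt (pderiv 0 F) t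
    have dy := circ_hasDerivAt (pderiv 1 F) t
    have d1 := ((Real.hasDerivAt_cos t).mul dx).add ((Real.hasDerivAt_sin t).mul dy)
    have d2 := ((Real.hasDerivAt_cos t).mul dy).sub ((Real.hasDerivAt_sin t).mul dx)
    have u1 := d1.unique ((hX t).congr_of_eventuallyEq (Eventually.of_forall eX))
    have u2 := d2.unique ((hY t).congr_of_eventuallyEq (Eventually.of_forall eY))
    have p1 := sq_add_sq_pos_of (hgne t)
    have p2 := sq_add_sq_pos_of (hne t)
    have hden : (d * circ F t) ^ 2 + circ (angD F) t ^ 2 =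
        circ (pderiv 0 F) t ^ 2 + circ (pderiv 1 F) t ^ 2 := by
      rw [← eX, ← eY]
      linear_combination (circ (pderiv 0 F) t ^ 2 + circ (pderiv 1 F) t ^ 2) * hcs
    rw [hw]
    unfold gradSpeed angSpeed
    simp only
    rw [hden, ← u1, ← u2, ← eX, ← eY, eq_comm, ← sub_eq_zero]
    field_simp
    generalize circ (pderiv 0 F) t = x at *
    generalize circ (pderiv 1 F) t = y at *
    generalize circ (angD (pderiv 0 F)) t = x' at *
    generalize circ (angD (pderiv 1 F)) t = y' at *
    generalize Real.cos t = c at *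
    generalize Real.sin t = s at *
    linear_combination (x * y' - y * x' - (x ^ 2 + y ^ 2)) * hcs
  have hper : Function.Periodic w Real.pi := by
    intro t
    have hs : ((-1 : ℝ) ^ d) ^ 2 = 1 := by
      rw [← pow_mul, mul_comm, pow_mul]
      simp
    have hA := angD_homog hd1 hF
    have hAA := angD_homog hd1 hA
    rw [hw]
    unfold angSpeed
    simp only
    rw [circ_add_pi hF, circ_add_pi hA, circ_add_pi hAA]
    generalize (-1 : ℝ) ^ d = e at *
    congr 1
    · linear_combination (d * circ F t * circ (angD (angD F)) t -
        circ (angD F) t * (d * circ (angD F) t)) * hs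
    · linear_combination ((d * circ F t) ^ 2 + circ (angD F) t ^ 2) * hs
  have hint : ∀ a b, IntervalIntegrable w MeasureTheory.volume a b :=
    fun a b => cw.intervalIntegrable a b
  have h2π : ∫ t in (0:ℝ)..(2 * Real.pi), w t = 2 * ∫ t in (0:ℝ)..Real.pi, w t := by
    have := hper.intervalIntegral_add_eq_add 0 Real.pi hint
    rw [zero_add] at this
    rw [two_mul, this]
    ring
  have hI : ∫ t in (0:ℝ)..Real.pi, w t = (i - 1) * Real.pi := by
    simp_rw [hgw] at hi
    rw [intervalIntegral.integral_add (by simp) (hint _ _), h2π] at hi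
    simp only [intervalIntegral.integral_const, sub_zero, smul_eq_mul, mul_one] at hi
    rw [hi]
    field_simp
    ring
  obtain ⟨θ, hθ⟩ := exists_angle (d * circ F 0) (circ (angD F) 0)
  set φ : ℝ → ℝ := fun t => θ + ∫ s in (0:ℝ)..t, w s with hφdef
  have hφ : ∀ t, HasDerivAt φ (w t) t := hasDerivAt_primitive cw θ
  have hph := phase_eq hX hY hne hφ (by simpa [hφdef] using hθ)
  have hzero : ∀ t, Real.cos (φ t) = 0 ↔ circ F t = 0 := by
    intro t
    have h := hph t
    constructor
    · intro hc
      have hs : Real.sin (φ t) ≠ 0 := by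
        intro hs
        have := Real.cos_sq_add_sin_sq (φ t)
        rw [hs, hc] at this
        norm_num at this
      rw [hc] at h
      simpa [hs, hd0.ne'] using h
    · intro hc
      have : circ (angD F) t ≠ 0 := fun h' => hne t ⟨by simp [hc], h'⟩
      rw [hc] at h
      simpa [this] using h
  have hneg : ∀ t, Real.cos (φ t) = 0 → w t < 0 := by
    intro t ht
    have hc := (hzero t).1 ht
    have hy : circ (angD F) t ≠ 0 := fun h' => hne t ⟨by simp [hc], h'⟩
    rw [hw]
    unfold angSpeed
    simp only [hc]
    have : 0 < circ (angD F) t ^ 2 := by positivity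
    apply div_neg_of_neg_of_pos
    · nlinarith
    · nlinarith
  have hcount := count_phase hφ hneg (1 - i) (by
    simp only [hφdef, hI, intervalIntegral.integral_same]
    push_cast
    ring)
  simp only [hzero] at hcount
  rw [realDegree_eq hF hsq hcount.2, hcount.1]
  ring

theorem index_eq_one_sub_real_degree_of_no_repeated_factor
    (f : MvPolynomial (Fin 2) ℝ) (d : ℕ) (hd : f.totalDegree = d) (hd1 : 1 ≤ d)
    (hfin : {p : ℝ × ℝ | IsCriticalPt f p}.Finite)
    (hsq : ∀ a b : ℝ, (a, b) ≠ ((0 : ℝ), (0 : ℝ)) →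
      ¬ ((C b * X 0 - C a * X 1) ^ 2 ∣ homogeneousComponent d f))
    (R : ℝ) (hR : 0 < R)
    (hadm : ∀ p : ℝ × ℝ, IsCriticalPt f p → p.1 ^ 2 + p.2 ^ 2 < R ^ 2)
    (i : ℤ) (hi : (i : ℝ) = gradIndex f R) :
    i = 1 - (realDegreeOf (homogeneousComponent d f) : ℤ) := by
  have hF : (homogeneousComponent d f).IsHomogeneous d := homogeneousComponent_isHomogeneous d f
  refine homog_index hF hd1 hsq i ?_
  rw [hi, gradIndex_eq f d hd R hR, homot_integral_const f d R⁻¹ (by positivity), homot_zero]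
  rintro s ⟨hs0, hs1⟩ t
  have hcs := Real.cos_sq_add_sin_sq t
  rcases hs0.eq_or_lt with rfl | hs
  · rw [homot_zero]
    refine grad_ne_zero hF hd1 hsq ?_
    rintro ⟨h1, h2⟩
    rw [h1, h2] at hcs
    norm_num at hcs
  · rintro ⟨h1, h2⟩
    have hsi : 0 < s⁻¹ := inv_pos.2 hs
    have e : ∀ j : Fin 2, circ (pderiv j (homot f d s)) t = 0 →
        evalP (pderiv j f) (s⁻¹ * Real.cos t) (s⁻¹ * Real.sin t) = 0 := by
      intro j hj
      have h := evalP_pderiv_homot f d hd j s⁻¹ hsi (Real.cos t) (Real.sin t)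
      rw [inv_inv] at h
      unfold circ at hj
      rw [hj, mul_zero] at h
      exact (mul_eq_zero.1 h).resolve_right hsi.ne'
    have hlt := hadm (s⁻¹ * Real.cos t, s⁻¹ * Real.sin t) ⟨e 0 h1, e 1 h2⟩
    have hRs : R ≤ s⁻¹ := (le_inv_comm₀ hs hR).1 hs1
    have : (s⁻¹ * Real.cos t) ^ 2 + (s⁻¹ * Real.sin t) ^ 2 = s⁻¹ ^ 2 := by
      linear_combination s⁻¹ ^ 2 * hcs
    simp only [this] at hlt
    nlinarith
end

section
/- Let f : ℝ² → ℝ be a nonconstant real polynomial function in two variables with only finitely many critical points, and suppose every level set {(x,y) : f(x,y) = t}, t ∈ ℝ, is compact. Then there exists A₀ > 0 such that for every A ≥ A₀, exactly one of the two sets {(x,y) : f(x,y) = A} and {(x,y) : f(x,y) = −A} is nonempty, and the nonempty one is homeomorphic to the circle S¹. -/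
open MvPolynomial Filter

namespace LevelCircle

open Set Metric Filter Topology NNReal

theorem flow_uniq {E : Type*} [NormedAddCommGroup E] [NormedSpace ℝ E]
    {V : E → E} {K : ℝ≥0} (hK : LipschitzWith K V) {T : ℝ} (hT : 0 < T) {f g : ℝ → E}
    (hf : ∀ t ∈ Ioo (-T) T, HasDerivAt f (V (f t)) t)
    (hg : ∀ t ∈ Ioo (-T) T, HasDerivAt g (V (g t)) t) (h0 : f 0 = g 0) :
    EqOn f g (Ioo (-T) T) :=
  ODE_solution_unique_of_mem_Ioo (v := fun _ => V) (s := fun _ => univ) (K := K)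
    (fun _ _ => hK.lipschitzOnWith) (t₀ := 0) ⟨by linarith, hT⟩
    (fun t ht => ⟨hf t ht, trivial⟩) (fun t ht => ⟨hg t ht, trivial⟩) h0

theorem exists_local_flow {E : Type*} [NormedAddCommGroup E] [NormedSpace ℝ E] [CompleteSpace E]
    {V : E → E} {K M : ℝ≥0} (hK : LipschitzWith K V) (hM : ∀ x, ‖V x‖ ≤ M) (T : ℝ≥0) (x₀ : E) :
    ∃ α : E → ℝ → E, (∀ x ∈ closedBall x₀ 1, α x 0 = x ∧
      ∀ t ∈ Ioo (-T : ℝ) T, HasDerivAt (α x) (V (α x t)) t) ∧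
      ∃ L' : ℝ≥0, ∀ t ∈ Ioo (-T : ℝ) T, LipschitzOnWith L' (α · t) (closedBall x₀ 1) := by
  have h : IsPicardLindelof (fun _ => V) (tmin := -T) (tmax := T) ⟨0, by simp⟩ x₀
      (M * T + 1) 1 M K := by
    apply IsPicardLindelof.of_time_independent
    · exact fun x _ => hM x
    · exact hK.lipschitzOnWith
    · simp
  obtain ⟨α, h1, L', h2⟩ := h.exists_forall_mem_closedBall_eq_hasDerivWithinAt_lipschitzOnWith
  refine ⟨α, fun x hx => ⟨(h1 x hx).1, fun t ht => ?_⟩, L', fun t ht => h2 t (Ioo_subset_Icc_self ht)⟩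
  exact ((h1 x hx).2 t (Ioo_subset_Icc_self ht)).hasDerivAt (Icc_mem_nhds ht.1 ht.2)

theorem exists_flow {E : Type*} [NormedAddCommGroup E] [NormedSpace ℝ E] [CompleteSpace E]
    {V : E → E} {K M : ℝ≥0} (hK : LipschitzWith K V) (hM : ∀ x, ‖V x‖ ≤ M) :
    ∃ φ : ℝ → E → E, (∀ x, φ 0 x = x) ∧
      (∀ x t, HasDerivAt (fun s => φ s x) (V (φ t x)) t) ∧
      (∀ s t x, φ s (φ t x) = φ (s + t) x) ∧ Continuous (fun z : ℝ × E => φ z.1 z.2) := by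
  choose α hα L hL using fun (x₀ : E) (n : ℕ) => exists_local_flow hK hM (n + 1 : ℝ≥0) x₀
  have hα' : ∀ x₀ n, ∀ x ∈ closedBall x₀ 1, α x₀ n x 0 = x ∧
      ∀ t ∈ Ioo (-(n + 1) : ℝ) (n + 1), HasDerivAt (α x₀ n x) (V (α x₀ n x t)) t := by
    intro x₀ n; have := hα x₀ n; push_cast at this; exact this
  have key : ∀ x₀ y₀ n m x, x ∈ closedBall x₀ 1 → x ∈ closedBall y₀ 1 → n ≤ m → 
      EqOn (α x₀ n x) (α y₀ m x) (Ioo (-(n + 1) : ℝ) (n + 1)) := by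
    intro x₀ y₀ n m x hx hy hnm
    have hc : (n : ℝ) ≤ m := by exact_mod_cast hnm
    refine flow_uniq hK (by positivity) (hα' x₀ n x hx).2 
      (fun t ht => (hα' y₀ m x hy).2 t ⟨by linarith [ht.1], by linarith [ht.2]⟩) ?_
    rw [(hα' x₀ n x hx).1, (hα' y₀ m x hy).1]
  let φ : ℝ → E → E := fun t x => α x ⌈|t|⌉₊ x t
  have hφ : ∀ y₀ (m : ℕ) x, x ∈ closedBall y₀ 1 → ∀ t ∈ Ioo (-(m + 1) : ℝ) (m + 1), 
      φ t x = α y₀ m x t := by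
    intro y₀ m x hx t ht
    have hx' : x ∈ closedBall x 1 := mem_closedBall_self zero_le_one
    have h2 : t ∈ Ioo (-(⌈|t|⌉₊ + 1) : ℝ) (⌈|t|⌉₊ + 1) := by
      have := Nat.le_ceil |t|
      constructor <;> [linarith [neg_abs_le t]; linarith [le_abs_self t]]
    rcases le_total ⌈|t|⌉₊ m with h | h
    · exact key _ _ _ _ x hx' hx h h2
    · exact (key _ _ _ _ x hx hx' h ht).symm
  have hex : ∀ t : ℝ, ∃ m : ℕ, t ∈ Ioo (-(m + 1) : ℝ) (m + 1) := by
    intro t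
    refine ⟨⌈|t|⌉₊, ?_⟩
    have := Nat.le_ceil |t|
    constructor <;> [linarith [neg_abs_le t]; linarith [le_abs_self t]]
  have h0 : ∀ x, φ 0 x = x := by
    intro x
    have hx' : x ∈ closedBall x 1 := mem_closedBall_self zero_le_one
    exact (hα' x _ x hx').1
  have hd : ∀ x t, HasDerivAt (fun s => φ s x) (V (φ t x)) t := by
    intro x t
    have hx' : x ∈ closedBall x 1 := mem_closedBall_self zero_le_one
    obtain ⟨m, hm⟩ := hex t
    rw [hφ x m x hx' t hm]
    refine ((hα' x m x hx').2 t hm).congr_of_eventuallyEq ?_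
    filter_upwards [Ioo_mem_nhds hm.1 hm.2] with s hs
    exact hφ x m x hx' s hs
  refine ⟨φ, h0, hd, ?_, ?_⟩
  · intro s t x
    have := ODE_solution_unique_univ (v := fun _ => V) (s := fun _ => univ) (K := K) (t₀ := 0)
      (f := fun s => φ s (φ t x)) (g := fun s => φ (s + t) x)
      (fun _ => hK.lipschitzOnWith) (fun s => ⟨hd _ s, trivial⟩) 
      (fun s => ⟨(hd x (s + t)).comp_add_const s t, trivial⟩) (by simp [h0])
    exact congrFun this s
  · rw [continuous_iff_continuousAt]
    rintro ⟨t, x⟩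
    obtain ⟨m, hm⟩ := hex t
    have : ContinuousOn (fun z : ℝ × E => φ z.1 z.2) (Ioo (-(m + 1) : ℝ) (m + 1) ×ˢ closedBall x 1) := by
      refine continuousOn_prod_of_continuousOn_lipschitzOnWith' _ (L x m) ?_ ?_
      · intro s hs
        have h3 := hL x m s (by push_cast; exact hs)
        intro y hy z hz
        have := h3 hy hz
        simp only [hφ x m y hy s hs, hφ x m z hz s hs]
        exact this
      · intro y hy
        exact fun s hs => (hd y s).continuousAt.continuousWithinAt
    exact this.continuousAt (prod_mem_nhds (Ioo_mem_nhds hm.1 hm.2) (closedBall_mem_nhds _ one_pos))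

theorem circle_of_action {X : Type*} [TopologicalSpace X] [T2Space X] [CompactSpace X]
    [PreconnectedSpace X] [Nonempty X] (ψ : ℝ → X → X) (hc : ∀ x, Continuous (fun t => ψ t x))
    (h0 : ∀ x, ψ 0 x = x) (hadd : ∀ s t x, ψ s (ψ t x) = ψ (s + t) x)
    (hopen : ∀ x, (fun t => ψ t x) '' (Ioo (-1) 1) ∈ 𝓝 x)
    (hmove : ∀ x, ∃ t, ψ t x ≠ x) : Nonempty (X ≃ₜ Circle) := by
  obtain ⟨p⟩ := ‹Nonempty X›
  -- orbits are open
  have horb : ∀ x, IsOpen (range (fun t => ψ t x)) := by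
    intro x
    rw [isOpen_iff_mem_nhds]
    rintro _ ⟨t, rfl⟩
    filter_upwards [hopen (ψ t x)]
    rintro _ ⟨s, -, rfl⟩
    exact ⟨s + t, (hadd s t x).symm⟩
  have hsurj : Function.Surjective (fun t => ψ t p) := by
    rw [← range_eq_univ]
    have hcl : IsClosed (range (fun t => ψ t p)) := by
      rw [← isOpen_compl_iff, isOpen_iff_mem_nhds]
      intro x hx
      filter_upwards [(horb x).mem_nhds ⟨0, h0 x⟩]
      rintro _ ⟨t, rfl⟩ ⟨s, hs⟩
      apply hx
      refine ⟨-t + s, ?_⟩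
      simp only at hs ⊢
      rw [← hadd, hs, hadd, neg_add_cancel, h0]
    exact IsClopen.eq_univ ⟨hcl, horb p⟩ ⟨_, 0, rfl⟩
  let G : AddSubgroup ℝ :=
    { carrier := {t | ψ t p = p}
      zero_mem' := h0 p
      add_mem' := by
        intro a b ha hb
        simp only [mem_ofPred_eq] at *
        rw [← hadd, hb, ha]
      neg_mem' := by
        intro a ha
        simp only [mem_ofPred_eq] at *
        nth_rw 1 [← ha]
        rw [hadd, neg_add_cancel, h0] }
  have hGmem : ∀ t, t ∈ G ↔ ψ t p = p := fun t => Iff.rfl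
  have hGc : IsClosed (G : Set ℝ) := isClosed_eq (hc p) continuous_const
  have heq : ∀ s t, ψ s p = ψ t p ↔ -s + t ∈ G := by
    intro s t
    rw [hGmem, ← hadd]
    constructor
    · intro h; rw [← h, hadd, neg_add_cancel, h0]
    · intro h
      nth_rw 1 [← h]
      rw [hadd, add_neg_cancel, h0]
  obtain ⟨a, ha⟩ : ∃ a, G = AddSubgroup.zmultiples a := by
    rcases G.dense_or_cyclic with h | ⟨a, h⟩
    · exfalso
      obtain ⟨t, ht⟩ := hmove p
      have : (G : Set ℝ) = univ := by rw [← hGc.closure_eq]; exact h.closure_eq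
      exact ht ((hGmem t).1 (by rw [← SetLike.mem_coe, this]; trivial))
    · exact ⟨a, by rw [h, AddSubgroup.zmultiples_eq_closure]⟩
  have ha0 : a ≠ 0 := by
    rintro rfl
    have hcov : ∀ x : X, ∃ t, ψ t p = x := hsurj
    choose τ hτ using hcov
    obtain ⟨F, -, hF⟩ := isCompact_univ.elim_nhds_subcover
      (fun x => (fun t => ψ t x) '' (Ioo (-1) 1)) (fun x _ => hopen x)
    obtain ⟨N, hN⟩ := (F.image τ).bddAbove
    have h1 := hF (mem_univ (ψ (N + 1) p))
    simp only [mem_iUnion] at h1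
    obtain ⟨x, hx, s, hs, hsx⟩ := h1
    have h2 : τ x ≤ N := hN (by simpa using ⟨x, hx, rfl⟩)
    simp only at hsx
    rw [← hτ x, hadd, heq, ha] at hsx
    simp at hsx
    linarith [hs.2]
  have : Fact (0 < |a|) := ⟨by positivity⟩
  have hG' : G = AddSubgroup.zmultiples |a| := by
    rw [ha]
    rcases abs_choice a with h | h <;> rw [h]
    simp
  let g : AddCircle |a| → X := Quotient.lift (s := QuotientAddGroup.leftRel _) (fun t => ψ t p) (by
    intro s t hst
    rw [heq, hG']
    exact QuotientAddGroup.leftRel_apply.1 hst)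
  have hgc : Continuous g := (hc p).quotient_lift _
  have hgb : Function.Bijective g := by
    constructor
    · intro u v
      refine Quotient.inductionOn₂ u v ?_
      intro s t h
      apply Quotient.sound
      have h' : ψ s p = ψ t p := h
      rw [heq, hG'] at h'
      exact QuotientAddGroup.leftRel_apply.2 h'
    · intro x
      obtain ⟨t, ht⟩ := hsurj x
      exact ⟨(t : AddCircle |a|), ht⟩
  have e : AddCircle |a| ≃ₜ X := Continuous.homeoOfEquivCompactToT2 (f := Equiv.ofBijective g hgb) hgc
  exact ⟨e.symm.trans (AddCircle.homeomorphCircle (by positivity))⟩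

theorem circle_homeo : Nonempty (Circle ≃ₜ ↥{p : ℝ × ℝ | p.1 ^ 2 + p.2 ^ 2 = 1}) := by
  refine ⟨Complex.equivRealProdCLM.toHomeomorph.subtype ?_⟩
  intro z
  show z ∈ sphere (0 : ℂ) 1 ↔ (z.re ^ 2 + z.im ^ 2 = 1)
  rw [mem_sphere_zero_iff_norm, ← sq_eq_sq₀ (norm_nonneg _) zero_le_one,
    ← Complex.normSq_eq_norm_sq, Complex.normSq_apply]
  simp [pow_two]

theorem exists_flow_of_compactSupport {V : ℝ × ℝ → ℝ × ℝ} (hV : ContDiff ℝ 1 V)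
    (hs : HasCompactSupport V) :
    ∃ φ : ℝ → ℝ × ℝ → ℝ × ℝ, (∀ x, φ 0 x = x) ∧
      (∀ x t, HasDerivAt (fun s => φ s x) (V (φ t x)) t) ∧
      (∀ s t x, φ s (φ t x) = φ (s + t) x) ∧ Continuous (fun z : ℝ × (ℝ × ℝ) => φ z.1 z.2) := by
  obtain ⟨K, hK⟩ := ContDiff.lipschitzWith_of_hasCompactSupport hs hV one_ne_zero
  obtain ⟨M, hM⟩ := hs.exists_bound_of_continuous hV.continuous
  have hM0 : 0 ≤ M := (norm_nonneg _).trans (hM 0)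
  exact exists_flow (M := ⟨M, hM0⟩) hK hM

theorem sublevel_compact {F : ℝ × ℝ → ℝ} (hc : Continuous F)
    (hF : Tendsto F (cocompact (ℝ × ℝ)) atTop) (B : ℝ) : IsCompact {p | F p ≤ B} := by
  have h := hF.eventually (eventually_gt_atTop B)
  rw [Filter.Eventually, mem_cocompact] at h
  obtain ⟨t, ht, hs⟩ := h
  refine ht.of_isClosed_subset (isClosed_le hc continuous_const) ?_
  intro p hp
  by_contra hpt
  have : B < F p := hs hpt
  exact absurd hp (not_le.2 this)

open ContinuousLinearMap in
theorem deriv_along {F fx fy : ℝ × ℝ → ℝ}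
    (hd : ∀ p, HasFDerivAt F (fx p • fst ℝ ℝ ℝ + fy p • snd ℝ ℝ ℝ) p) {γ : ℝ → ℝ × ℝ} {v : ℝ × ℝ}
    {t : ℝ} (h : HasDerivAt γ v t) :
    HasDerivAt (fun s => F (γ s)) (fx (γ t) * v.1 + fy (γ t) * v.2) t := by
  have := (hd (γ t)).comp_hasDerivAt t h
  convert! this using 1

open ContinuousLinearMap in
theorem level_connected {F fx fy : ℝ × ℝ → ℝ}
    (hd : ∀ p, HasFDerivAt F (fx p • fst ℝ ℝ ℝ + fy p • snd ℝ ℝ ℝ) p)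
    (hFs : ContDiff ℝ 1 F) (hfx : ContDiff ℝ 1 fx) (hfy : ContDiff ℝ 1 fy)
    (hF : Tendsto F (cocompact (ℝ × ℝ)) atTop) {c A : ℝ} (hcA : c < A)
    (hreg : ∀ p, c ≤ F p → fx p ^ 2 + fy p ^ 2 ≠ 0) : IsPreconnected {p | F p = A} := by
  have hFc : Continuous F := hFs.continuous
  obtain ⟨R, hR0, hR⟩ : ∃ R, 0 < R ∧ {p | F p ≤ A} ⊆ ball 0 R :=
    (sublevel_compact hFc hF A).isBounded.subset_ball_lt 0 0
  obtain ⟨B, hAB, hB⟩ : ∃ B, A < B ∧ ∀ p ∈ closedBall (0 : ℝ × ℝ) R, F p < B := by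
    obtain ⟨b, hb⟩ := ((isCompact_closedBall (0 : ℝ × ℝ) R).image hFc).bddAbove
    refine ⟨max A b + 1, by linarith [le_max_left A b], fun p hp => ?_⟩
    have := hb (mem_image_of_mem F hp)
    linarith [le_max_right A b]
  let ψ : ContDiffBump ((A + B) / 2) :=
    ⟨(B - A) / 2, (B - A) / 2 + (A - c), by linarith, by linarith⟩
  have hψ1 : ∀ t ∈ Icc A B, ψ t = 1 := by
    intro t ht
    apply ψ.one_of_mem_closedBall
    rw [Real.closedBall_eq_Icc]
    constructor <;> simp only [ψ] <;> linarith [ht.1, ht.2]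
  have hψ0 : ∀ t, t ≤ c → ψ t = 0 := by
    intro t ht
    apply ψ.zero_of_le_dist
    rw [Real.dist_eq, abs_sub_comm]
    refine le_trans ?_ (le_abs_self _)
    simp only [ψ]; linarith
  let V : ℝ × ℝ → ℝ × ℝ := fun p => (ψ (F p) / (fx p ^ 2 + fy p ^ 2)) • (fx p, fy p)
  have hV : ContDiff ℝ 1 V := by
    rw [contDiff_iff_contDiffAt]
    intro p
    by_cases hp : fx p ^ 2 + fy p ^ 2 = 0
    · have hpc : F p < c := by
        by_contra h
        exact hreg p (not_lt.1 h) hp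
      refine (contDiffAt_const (c := (0 : ℝ × ℝ))).congr_of_eventuallyEq ?_
      filter_upwards [hFc.continuousAt.eventually_lt continuousAt_const hpc] with q hq
      simp [V, hψ0 _ hq.le]
    · have h1 : ContDiffAt ℝ 1 (fun p => ψ (F p) / (fx p ^ 2 + fy p ^ 2)) p :=
        ContDiffAt.div (ψ.contDiff.comp hFs).contDiffAt
          ((hfx.pow 2).add (hfy.pow 2)).contDiffAt hp
      exact h1.smul (hfx.prodMk hfy).contDiffAt
  have hVs : HasCompactSupport V := by
    refine HasCompactSupport.intro (sublevel_compact hFc hF (B + (A - c))) ?_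
    intro p hp
    have hp : B + (A - c) < F p := not_le.1 hp
    have : ψ (F p) = 0 := by
      apply ψ.zero_of_le_dist
      rw [Real.dist_eq]
      refine le_trans ?_ (le_abs_self _)
      simp only [ψ]; linarith
    simp [V, this]
  obtain ⟨φ, h0, hφd, hadd, hφc⟩ := exists_flow_of_compactSupport hV hVs
  have hgd : ∀ x t, HasDerivAt (fun s => F (φ s x)) (ψ (F (φ t x))) t := by
    intro x t
    convert! deriv_along hd (hφd x t) using 1
    simp only [V, Prod.smul_mk, smul_eq_mul]
    by_cases hp : fx (φ t x) ^ 2 + fy (φ t x) ^ 2 = 0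
    · have : F (φ t x) < c := by
        by_contra h
        exact hreg _ (not_lt.1 h) hp
      simp [hψ0 _ this.le]
    · field_simp
  obtain ⟨K, hK⟩ := ContDiff.lipschitzWith_of_hasCompactSupport ψ.hasCompactSupport
    (ψ.contDiff (n := 1)) one_ne_zero
  have hlin : ∀ x t, F x ∈ Icc A B → F x + t ∈ Icc A B → F (φ t x) = F x + t := by
    intro x t hx ht
    have hd1 : ∀ s, HasDerivAt (fun s => F x + s) 1 s := fun s => (hasDerivAt_id s).const_add _
    have hd2 : ∀ s, F x + s ∈ Icc A B → HasDerivAt (fun s => F x + s) (ψ (F x + s)) s := by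
      intro s hs
      rw [hψ1 _ hs]; exact hd1 s
    have hcg : Continuous (fun s => F (φ s x)) :=
      continuous_iff_continuousAt.2 fun s => (hgd x s).continuousAt
    rcases le_total 0 t with h | h
    · refine ODE_solution_unique_of_mem_Icc_right (v := fun _ => ψ) (s := fun _ => univ) (K := K)
        (a := 0) (b := t) (f := fun s => F (φ s x)) (g := fun s => F x + s)
        (fun _ _ => hK.lipschitzOnWith) hcg.continuousOn
        (fun s _ => (hgd x s).hasDerivWithinAt) (fun _ _ => trivial) (by fun_prop) ?_
        (fun _ _ => trivial) (by simp [h0]) ⟨h, le_rfl⟩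
      intro s hs
      exact (hd2 s ⟨by linarith [hx.1, hs.1], by linarith [ht.2, hs.2]⟩).hasDerivWithinAt
    · refine ODE_solution_unique_of_mem_Icc_left (v := fun _ => ψ) (s := fun _ => univ) (K := K)
        (a := t) (b := 0) (f := fun s => F (φ s x)) (g := fun s => F x + s)
        (fun _ _ => hK.lipschitzOnWith) hcg.continuousOn
        (fun s _ => (hgd x s).hasDerivWithinAt) (fun _ _ => trivial) (by fun_prop) ?_
        (fun _ _ => trivial) (by simp [h0]) ⟨le_rfl, h⟩
      intro s hs
      exact (hd2 s ⟨by linarith [ht.1, hs.1], by linarith [hx.2, hs.2]⟩).hasDerivWithinAt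
  have himg : (fun q => φ (A - F q) q) '' sphere (0 : ℝ × ℝ) R = {p | F p = A} := by
    apply Subset.antisymm
    · rintro _ ⟨q, hq, rfl⟩
      have h1 : A < F q := by
        by_contra h
        have h2 := hR (show F q ≤ A from not_lt.1 h)
        rw [mem_ball] at h2
        rw [mem_sphere] at hq
        linarith
      have h2 : F q < B := hB q (sphere_subset_closedBall hq)
      show F (φ (A - F q) q) = A
      rw [hlin q _ ⟨h1.le, h2.le⟩ ⟨by linarith, by linarith⟩]
      ring
    · intro p hp
      have hp : F p = A := hp
      have hcn : Continuous (fun s => ‖φ s p‖) :=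
        continuous_norm.comp (hφc.comp (by fun_prop : Continuous fun s : ℝ => (s, p)))
      have ha : ‖φ 0 p‖ ≤ R := by
        rw [h0]
        have := hR (show F p ≤ A from hp.le)
        rw [mem_ball_zero_iff] at this
        exact this.le
      have hb : R ≤ ‖φ (B - A) p‖ := by
        by_contra h
        have h1 := hB (φ (B - A) p) (by rw [mem_closedBall_zero_iff]; linarith)
        rw [hlin p _ ⟨by linarith, by linarith⟩ ⟨by linarith, by linarith⟩] at h1
        linarith
      obtain ⟨s, hs, hsR⟩ := intermediate_value_Icc (by linarith : (0 : ℝ) ≤ B - A)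
        hcn.continuousOn ⟨ha, hb⟩
      refine ⟨φ s p, by simpa using hsR, ?_⟩
      simp only
      rw [hlin p s ⟨by linarith, by linarith⟩ ⟨by linarith [hs.1], by linarith [hs.2]⟩, hadd, hp]
      simp [h0]
  rw [← himg]
  refine (isPreconnected_sphere (by simp [one_add_one_eq_two]) 0 R).image _ ?_
  exact (hφc.comp (by fun_prop : Continuous fun q => (A - F q, q))).continuousOn

open ContinuousLinearMap in
theorem local_inj {F fx fy : ℝ × ℝ → ℝ}
    (hd : ∀ p, HasFDerivAt F (fx p • fst ℝ ℝ ℝ + fy p • snd ℝ ℝ ℝ) p)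
    (hfx : ContDiff ℝ 1 fx) (hfy : ContDiff ℝ 1 fy) {p : ℝ × ℝ}
    (hp : fx p ^ 2 + fy p ^ 2 ≠ 0) :
    ∃ U ∈ 𝓝 p, ∀ q ∈ U, ∀ q' ∈ U, F q = F q' →
      -fy p * q.1 + fx p * q.2 = -fy p * q'.1 + fx p * q'.2 → q = q' := by
  have hst : HasStrictFDerivAt F (fx p • fst ℝ ℝ ℝ + fy p • snd ℝ ℝ ℝ) p := by
    refine hasStrictFDerivAt_of_hasFDerivAt_of_continuousAt (Eventually.of_forall hd) ?_
    have h1 := hfx.continuous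
    have h2 := hfy.continuous
    exact Continuous.continuousAt (by fun_prop)
  set N := fx p ^ 2 + fy p ^ 2 with hN
  have hN0 : 0 < N := lt_of_le_of_ne (by positivity) (Ne.symm hp)
  set n : ℝ × ℝ := (fx p, fy p) with hn
  have hε : 0 < N / (2 * (‖n‖ + 1)) := by positivity
  have hev := hst.isLittleO.def hε
  rw [nhds_prod_eq, eventually_prod_self_iff'] at hev
  obtain ⟨U, hU, hUU⟩ := hev
  refine ⟨U, hU, fun q hq q' hq' hF hl => ?_⟩
  have h := hUU q hq q' hq'
  simp only [hF, sub_self, zero_sub, norm_neg] at h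
  set c := (fx p * (q.1 - q'.1) + fy p * (q.2 - q'.2)) / N with hc
  have hqq : q - q' = c • n := by
    ext
    · simp only [hn, hc, Prod.fst_sub, Prod.smul_fst, smul_eq_mul]
      field_simp
      rw [hN]
      linear_combination (-fy p) * hl
    · simp only [hn, hc, Prod.snd_sub, Prod.smul_snd, smul_eq_mul]
      field_simp
      rw [hN]
      linear_combination (fx p) * hl
  have hD : (fx p • fst ℝ ℝ ℝ + fy p • snd ℝ ℝ ℝ) (q - q') = c * N := by
    simp [hc]
    field_simp
  rw [hD, hqq, norm_smul, norm_mul, Real.norm_of_nonneg hN0.le] at h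
  have h2 : N / (2 * (‖n‖ + 1)) * (‖c‖ * ‖n‖) ≤ ‖c‖ * (N / 2) := by
    have : N / (2 * (‖n‖ + 1)) * (‖c‖ * ‖n‖) = ‖c‖ * (N / 2) * (‖n‖ / (‖n‖ + 1)) := by
      field_simp
    rw [this]
    apply mul_le_of_le_one_right (by positivity)
    rw [div_le_one (by positivity)]
    linarith
  have hc0 : ‖c‖ = 0 := by
    have h3 := norm_nonneg c
    by_contra h4
    have h5 : 0 < ‖c‖ := lt_of_le_of_ne h3 (Ne.symm h4)
    nlinarith [mul_pos h5 hN0]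
  rw [norm_eq_zero] at hc0
  rw [hc0, zero_smul, sub_eq_zero] at hqq
  exact hqq

open ContinuousLinearMap in
theorem level_circle {F fx fy : ℝ × ℝ → ℝ}
    (hd : ∀ p, HasFDerivAt F (fx p • fst ℝ ℝ ℝ + fy p • snd ℝ ℝ ℝ) p)
    (hFs : ContDiff ℝ 1 F) (hfx : ContDiff ℝ 1 fx) (hfy : ContDiff ℝ 1 fy)
    (hF : Tendsto F (cocompact (ℝ × ℝ)) atTop) {c A : ℝ} (hcA : c < A)
    (hreg : ∀ p, c ≤ F p → fx p ^ 2 + fy p ^ 2 ≠ 0) (hne : {p | F p = A}.Nonempty) :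
    Nonempty (↥{p | F p = A} ≃ₜ ↥{p : ℝ × ℝ | p.1 ^ 2 + p.2 ^ 2 = 1}) := by
  have hFc : Continuous F := hFs.continuous
  have hconn := level_connected hd hFs hfx hfy hF hcA hreg
  have hcomp : IsCompact {p | F p = A} :=
    (sublevel_compact hFc hF A).of_isClosed_subset (isClosed_eq hFc continuous_const)
      (fun p hp => le_of_eq hp)
  let ψ : ContDiffBump A := ⟨1, 2, by norm_num, by norm_num⟩
  let V : ℝ × ℝ → ℝ × ℝ := fun p => ψ (F p) • (-fy p, fx p)
  have hV : ContDiff ℝ 1 V := by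
    have h1 : ContDiff ℝ 1 (fun p => ψ (F p)) := ψ.contDiff.comp hFs
    exact h1.smul (hfy.neg.prodMk hfx)
  have hVs : HasCompactSupport V := by
    refine HasCompactSupport.intro (sublevel_compact hFc hF (A + 2)) ?_
    intro p hp
    have hp : A + 2 < F p := not_le.1 hp
    have : ψ (F p) = 0 := by
      apply ψ.zero_of_le_dist
      rw [Real.dist_eq]
      refine le_trans ?_ (le_abs_self _)
      simp only [ψ]; linarith
    simp [V, this]
  have hVA : ∀ p, F p = A → V p = (-fy p, fx p) := by
    intro p hp
    have : ψ (F p) = 1 := ψ.one_of_mem_closedBall (by rw [hp]; simp [ψ])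
    simp [V, this]
  obtain ⟨φ, h0, hφd, hadd, hφc⟩ := exists_flow_of_compactSupport hV hVs
  have hpres : ∀ t x, F (φ t x) = F x := by
    intro t x
    have hder : ∀ t, HasDerivAt (fun s => F (φ s x)) 0 t := by
      intro t
      convert! deriv_along hd (hφd x t) using 1
      simp only [V, Prod.smul_mk, smul_eq_mul]
      ring
    have := is_const_of_deriv_eq_zero (fun t => (hder t).differentiableAt)
      (fun t => (hder t).deriv) t 0
    simpa [h0] using this
  have hγc : ∀ x, Continuous (fun t => φ t x) := fun x =>
    hφc.comp (by fun_prop : Continuous fun s : ℝ => (s, x))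
  have hopen : ∀ p, F p = A → ∃ W ∈ 𝓝 p, ∀ q ∈ W, F q = A → ∃ t ∈ Ioo (-1 : ℝ) 1, φ t p = q := by
    intro p hp
    have hpr := hreg p (by rw [hp]; exact hcA.le)
    obtain ⟨U, hU, hinj⟩ := local_inj hd hfx hfy hpr
    let l : ℝ × ℝ → ℝ := fun q => -fy p * q.1 + fx p * q.2
    have hlc : Continuous l := by fun_prop
    have hder : ∀ t, HasDerivAt (fun s => l (φ s p))
        (-fy p * (V (φ t p)).1 + fx p * (V (φ t p)).2) t := by
      intro t
      have h1 : HasDerivAt (fun s => (φ s p).1) (V (φ t p)).1 t :=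
        (fst ℝ ℝ ℝ).hasFDerivAt.comp_hasDerivAt t (hφd p t)
      have h2 : HasDerivAt (fun s => (φ s p).2) (V (φ t p)).2 t :=
        (snd ℝ ℝ ℝ).hasFDerivAt.comp_hasDerivAt t (hφd p t)
      exact (h1.const_mul _).add (h2.const_mul _)
    have hst : HasStrictDerivAt (fun s => l (φ s p))
        (-fy p * (V (φ 0 p)).1 + fx p * (V (φ 0 p)).2) 0 := by
      refine hasStrictDerivAt_of_hasDerivAt_of_continuousAt (Eventually.of_forall hder) ?_
      have h1 := hV.continuous
      have h2 := hγc p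
      exact Continuous.continuousAt (by fun_prop)
    have hmap := hst.map_nhds_eq (by
      rw [h0, hVA p hp]
      intro h
      apply hpr
      simp only at h
      linarith)
    rw [h0] at hmap
    have hT : (fun t => φ t p) ⁻¹' U ∩ Ioo (-1 : ℝ) 1 ∈ 𝓝 (0 : ℝ) := by
      refine inter_mem ((hγc p).continuousAt ?_) (Ioo_mem_nhds (by norm_num) (by norm_num))
      rw [h0]; exact hU
    have hS := image_mem_map (m := fun s => l (φ s p)) hT
    rw [hmap] at hS
    refine ⟨U ∩ l ⁻¹' _, inter_mem hU (hlc.continuousAt hS), ?_⟩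
    rintro q ⟨hqU, t, ⟨htU, ht⟩, hlt⟩ hq
    exact ⟨t, ht, hinj _ htU q hqU (by rw [hpres, hp, hq]) hlt⟩
  have : CompactSpace ↥{p | F p = A} := isCompact_iff_compactSpace.1 hcomp
  have : PreconnectedSpace ↥{p | F p = A} := isPreconnected_iff_preconnectedSpace.1 hconn
  have : Nonempty ↥{p | F p = A} := hne.to_subtype
  obtain ⟨e⟩ := circle_of_action (X := ↥{p | F p = A})
    (fun t x => ⟨φ t x.1, (hpres t x.1).trans x.2⟩)
    (fun x => (hγc x.1).subtype_mk _) (fun x => Subtype.ext (h0 _))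
    (fun s t x => Subtype.ext (hadd _ _ _))
    (by
      rintro ⟨p, hp⟩
      obtain ⟨W, hW, h⟩ := hopen p hp
      filter_upwards [continuous_subtype_val.continuousAt (x := (⟨p, hp⟩ : ↥{p | F p = A})) hW]
      rintro ⟨q, hq⟩ hqW
      obtain ⟨t, ht, htq⟩ := h q hqW hq
      exact ⟨t, ht, Subtype.ext htq⟩)
    (by
      rintro ⟨p, hp⟩
      by_contra hall
      push Not at hall
      have hall' : ∀ t, φ t p = p := fun t => congrArg Subtype.val (hall t)
      have h1 := hφd p 0
      simp only [hall'] at h1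
      have h2 := h1.unique (hasDerivAt_const 0 p)
      rw [hVA p hp, Prod.mk_eq_zero] at h2
      apply hreg p (by rw [show F p = A from hp]; exact hcA.le)
      rw [h2.2, neg_eq_zero.1 h2.1]; simp)
  obtain ⟨e'⟩ := circle_homeo
  exact ⟨e.trans e'⟩

open ContinuousLinearMap in
theorem final_pos {F fx fy : ℝ × ℝ → ℝ}
    (hd : ∀ p, HasFDerivAt F (fx p • fst ℝ ℝ ℝ + fy p • snd ℝ ℝ ℝ) p)
    (hFs : ContDiff ℝ 1 F) (hfx : ContDiff ℝ 1 fx) (hfy : ContDiff ℝ 1 fy)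
    (hF : Tendsto F (cocompact (ℝ × ℝ)) atTop) (hfin : {p | fx p = 0 ∧ fy p = 0}.Finite) :
    ∃ A₀ : ℝ, 0 < A₀ ∧ ∀ A, A₀ ≤ A → {p | F p = A}.Nonempty ∧ ¬ {p | F p = -A}.Nonempty ∧
      Nonempty (↥{p | F p = A} ≃ₜ ↥{p : ℝ × ℝ | p.1 ^ 2 + p.2 ^ 2 = 1}) := by
  have hFc : Continuous F := hFs.continuous
  obtain ⟨b, hb⟩ := (hfin.image F).bddAbove
  obtain ⟨m, hm⟩ : ∃ m, ∀ p, m ≤ F p := by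
    obtain ⟨x, hx⟩ := hFc.exists_forall_le hF
    exact ⟨F x, hx⟩
  refine ⟨max (max (b + 2) (F 0)) (max (-m + 1) 1), by positivity, ?_⟩
  intro A hA
  simp only [max_le_iff] at hA
  obtain ⟨⟨h1, h2⟩, h3, h4⟩ := hA
  have hne : {p | F p = A}.Nonempty := by
    obtain ⟨q, hq⟩ := (hF.eventually (eventually_ge_atTop A)).exists
    obtain ⟨x, hx⟩ := mem_range_of_exists_le_of_exists_ge hFc ⟨0, h2⟩ ⟨q, hq⟩
    exact ⟨x, hx⟩
  refine ⟨hne, ?_, ?_⟩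
  · rintro ⟨p, hp⟩
    have hp : F p = -A := hp
    linarith [hm p]
  · refine level_circle hd hFs hfx hfy hF (c := b + 1) (by linarith) ?_ hne
    intro p hp h0
    have hx : fx p = 0 := by nlinarith [sq_nonneg (fx p), sq_nonneg (fy p)]
    have hy : fy p = 0 := by nlinarith [sq_nonneg (fx p), sq_nonneg (fy p)]
    have := hb (mem_image_of_mem F (show p ∈ {p | fx p = 0 ∧ fy p = 0} from ⟨hx, hy⟩))
    linarith

open ContinuousLinearMap in
theorem evalP_hasFDerivAt (f : MvPolynomial (Fin 2) ℝ) (p : ℝ × ℝ) :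
    HasFDerivAt (fun p : ℝ × ℝ => evalP f p.1 p.2)
      (evalP (pderiv 0 f) p.1 p.2 • fst ℝ ℝ ℝ + evalP (pderiv 1 f) p.1 p.2 • snd ℝ ℝ ℝ) p := by
  induction f using MvPolynomial.induction_on with
  | C a =>
    simp only [evalP, eval_C, pderiv_C, map_zero, zero_smul, add_zero]
    exact hasFDerivAt_const _ _
  | add f g hf hg =>
    have := hf.add hg
    simp only [evalP, map_add] at this ⊢
    refine this.congr_fderiv ?_
    module
  | mul_X f i hf =>
    have hX : HasFDerivAt (fun p : ℝ × ℝ => evalP (X i) p.1 p.2)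
      (evalP (pderiv 0 (X i)) p.1 p.2 • fst ℝ ℝ ℝ +
        evalP (pderiv 1 (X i)) p.1 p.2 • snd ℝ ℝ ℝ) p := by
      fin_cases i
      · simpa [evalP, pderiv_X] using (fst ℝ ℝ ℝ).hasFDerivAt (x := p)
      · simpa [evalP, pderiv_X] using (snd ℝ ℝ ℝ).hasFDerivAt (x := p)
    have := hf.mul hX
    simp only [evalP, map_mul, Derivation.leibniz, map_add, smul_eq_mul] at this ⊢
    refine this.congr_fderiv ?_
    module

theorem evalP_contDiff (f : MvPolynomial (Fin 2) ℝ) :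
    ContDiff ℝ 1 (fun p : ℝ × ℝ => evalP f p.1 p.2) := by
  induction f using MvPolynomial.induction_on with
  | C a => simpa [evalP] using contDiff_const
  | add f g hf hg => simpa [evalP] using hf.add hg
  | mul_X f i hf =>
    have hX : ContDiff ℝ 1 (fun p : ℝ × ℝ => evalP (X i) p.1 p.2) := by
      fin_cases i
      · simpa [evalP] using contDiff_fst
      · simpa [evalP] using contDiff_snd
    simpa [evalP] using hf.mul hX

theorem outside_preconnected (R : ℝ) (hR : 0 < R) :
    IsPreconnected {p : ℝ × ℝ | R < ‖p‖} := by
  have h : (fun z : ℝ × (ℝ × ℝ) => z.1 • z.2) '' (Ioi R ×ˢ sphere (0 : ℝ × ℝ) 1) =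
      {p : ℝ × ℝ | R < ‖p‖} := by
    ext p
    constructor
    · rintro ⟨⟨s, v⟩, ⟨hs, hv⟩, rfl⟩
      have hs : R < s := hs
      have hv : ‖v‖ = 1 := by simpa using hv
      show R < ‖s • v‖
      rw [norm_smul, hv, mul_one]
      exact hs.trans_le (le_abs_self s)
    · intro hp
      have hp : R < ‖p‖ := hp
      have h0 : ‖p‖ ≠ 0 := by linarith
      refine ⟨(‖p‖, ‖p‖⁻¹ • p), ⟨hp, ?_⟩, ?_⟩
      · simp [norm_smul, h0]
      · simp [smul_smul, h0]
  rw [← h]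
  refine (isPreconnected_Ioi.prod (isPreconnected_sphere (by simp [one_add_one_eq_two]) 0 1)).image
    _ ?_
  exact Continuous.continuousOn (by fun_prop)

theorem side_of_level {F : ℝ × ℝ → ℝ} (hc : Continuous F) {t : ℝ} (ht : IsCompact {p | F p = t}) :
    (∀ᶠ p in cocompact (ℝ × ℝ), t < F p) ∨ (∀ᶠ p in cocompact (ℝ × ℝ), F p < t) := by
  obtain ⟨R, hR0, hR⟩ := ht.isBounded.subset_ball_lt 0 0
  have hev : ∀ᶠ p in cocompact (ℝ × ℝ), R < ‖p‖ :=
    (tendsto_norm_cocompact_atTop).eventually (eventually_gt_atTop R)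
  by_contra hcon
  push Not at hcon
  obtain ⟨⟨p, hp, hpR⟩, ⟨q, hq, hqR⟩⟩ := And.intro (hcon.1.and_eventually hev).exists
    (hcon.2.and_eventually hev).exists
  obtain ⟨x, hx, hxt⟩ := (outside_preconnected R hR0).intermediate_value hpR hqR
    hc.continuousOn ⟨hp, hq⟩
  have := hR hxt
  rw [mem_ball_zero_iff] at this
  exact absurd hx (not_lt.2 this.le)

theorem evalP_line (f : MvPolynomial (Fin 2) ℝ) (a b : ℝ) :
    ∃ P : Polynomial ℝ, ∀ s, P.eval s = evalP f (s * a) (s * b) := by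
  induction f using MvPolynomial.induction_on with
  | C c => exact ⟨Polynomial.C c, by simp [evalP]⟩
  | add f g hf hg =>
    obtain ⟨P, hP⟩ := hf
    obtain ⟨Q, hQ⟩ := hg
    exact ⟨P + Q, by simp [evalP] at *; simp [hP, hQ]⟩
  | mul_X f i hf =>
    obtain ⟨P, hP⟩ := hf
    fin_cases i
    · exact ⟨P * (Polynomial.X * Polynomial.C a), by simp [evalP] at *; simp [hP, mul_comm]⟩
    · exact ⟨P * (Polynomial.X * Polynomial.C b), by simp [evalP] at *; simp [hP, mul_comm]⟩

theorem evalP_tendsto (f : MvPolynomial (Fin 2) ℝ) (hnc : 0 < f.totalDegree)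
    (hcpt : ∀ t : ℝ, IsCompact {p : ℝ × ℝ | evalP f p.1 p.2 = t}) :
    Tendsto (fun p : ℝ × ℝ => evalP f p.1 p.2) (cocompact (ℝ × ℝ)) atTop ∨
    Tendsto (fun p : ℝ × ℝ => evalP f p.1 p.2) (cocompact (ℝ × ℝ)) atBot := by
  obtain ⟨a, b, hab⟩ : ∃ a b, evalP f a b ≠ evalP f 0 0 := by
    by_contra! h
    have : f = C (evalP f 0 0) := by
      apply MvPolynomial.funext
      intro x
      have hx : x = ![x 0, x 1] := by ext i; fin_cases i <;> rfl
      rw [eval_C, ← h (x 0) (x 1), hx]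
      rfl
    rw [this, totalDegree_C] at hnc
    exact lt_irrefl _ hnc
  obtain ⟨P, hP⟩ := evalP_line f a b
  have hdeg : 0 < P.degree := by
    by_contra h
    rw [Polynomial.eq_C_of_degree_le_zero (not_lt.1 h)] at hP
    apply hab
    have h1 := hP 1
    have h0 := hP 0
    simp at h1 h0
    rw [← h1, ← h0]
  have hv : (a, b) ≠ (0 : ℝ × ℝ) := by
    rintro h
    rw [Prod.mk_eq_zero] at h
    rw [h.1, h.2] at hab
    exact hab rfl
  have hline : Tendsto (fun s : ℝ => (s * a, s * b)) atTop (cocompact (ℝ × ℝ)) := by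
    rw [← cobounded_eq_cocompact, ← tendsto_norm_atTop_iff_cobounded]
    have h1 : Tendsto (fun s : ℝ => |s| * ‖(a, b)‖) atTop atTop :=
      tendsto_abs_atTop_atTop.atTop_mul_const (norm_pos_iff.2 hv)
    refine h1.congr fun s => ?_
    rw [← Real.norm_eq_abs, ← norm_smul]
    simp
  have hcont := (evalP_contDiff f).continuous
  rcases le_total 0 P.leadingCoeff with hl | hl
  · left
    have hPt := P.tendsto_atTop_of_leadingCoeff_nonneg hdeg hl
    refine tendsto_atTop.2 fun t => ?_
    rcases side_of_level hcont (hcpt t) with h | h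
    · exact h.mono fun _ h => h.le
    · exfalso
      obtain ⟨s, h1, h2⟩ := ((hline.eventually h).and (hPt.eventually (eventually_ge_atTop t))).exists
      rw [hP] at h2
      simp only at h1
      linarith
  · right
    have hPt := P.tendsto_atBot_of_leadingCoeff_nonpos hdeg hl
    refine tendsto_atBot.2 fun t => ?_
    rcases side_of_level hcont (hcpt t) with h | h
    · exfalso
      obtain ⟨s, h1, h2⟩ := ((hline.eventually h).and (hPt.eventually (eventually_le_atBot t))).exists
      rw [hP] at h2
      simp only at h1
      linarith
    · exact h.mono fun _ h => h.le

end LevelCircle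

theorem large_level_set_is_circle_of_compact_levels
    (f : MvPolynomial (Fin 2) ℝ) (hnc : 0 < f.totalDegree)
    (hfin : {p : ℝ × ℝ | IsCriticalPt f p}.Finite)
    (hcpt : ∀ t : ℝ, IsCompact {p : ℝ × ℝ | evalP f p.1 p.2 = t}) :
    ∃ A₀ : ℝ, 0 < A₀ ∧ ∀ A : ℝ, A₀ ≤ A →
      Xor' ({p : ℝ × ℝ | evalP f p.1 p.2 = A}.Nonempty)
           ({p : ℝ × ℝ | evalP f p.1 p.2 = -A}.Nonempty) ∧
      ∀ B : ℝ, (B = A ∨ B = -A) → {p : ℝ × ℝ | evalP f p.1 p.2 = B}.Nonempty →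
        Nonempty (↥{p : ℝ × ℝ | evalP f p.1 p.2 = B} ≃ₜ
          ↥{p : ℝ × ℝ | p.1 ^ 2 + p.2 ^ 2 = 1}) := by
  rcases LevelCircle.evalP_tendsto f hnc hcpt with h | h
  · obtain ⟨A₀, h0, hA⟩ := LevelCircle.final_pos (LevelCircle.evalP_hasFDerivAt f)
      (LevelCircle.evalP_contDiff f) (LevelCircle.evalP_contDiff _)
      (LevelCircle.evalP_contDiff _) h hfin
    refine ⟨A₀, h0, fun A hAA => ?_⟩
    obtain ⟨h1, h2, h3⟩ := hA A hAA
    refine ⟨Or.inl ⟨h1, h2⟩, ?_⟩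
    rintro B (rfl | rfl) hB
    · exact h3
    · exact absurd hB h2
  · have hd : ∀ p : ℝ × ℝ, HasFDerivAt (fun p : ℝ × ℝ => -evalP f p.1 p.2)
        ((-evalP (pderiv 0 f) p.1 p.2) • ContinuousLinearMap.fst ℝ ℝ ℝ +
          (-evalP (pderiv 1 f) p.1 p.2) • ContinuousLinearMap.snd ℝ ℝ ℝ) p := by
      intro p
      refine (LevelCircle.evalP_hasFDerivAt f p).neg.congr_fderiv ?_
      module
    obtain ⟨A₀, h0, hA⟩ := LevelCircle.final_pos hd
      (LevelCircle.evalP_contDiff f).neg (LevelCircle.evalP_contDiff _).neg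
      (LevelCircle.evalP_contDiff _).neg (tendsto_neg_atBot_atTop.comp h)
      (by simpa only [neg_eq_zero] using! hfin)
    refine ⟨A₀, h0, fun A hAA => ?_⟩
    obtain ⟨h1, h2, h3⟩ := hA A hAA
    simp only [neg_inj] at h2
    have hset : {p : ℝ × ℝ | -evalP f p.1 p.2 = A} = {p : ℝ × ℝ | evalP f p.1 p.2 = -A} := by
      ext p
      exact neg_eq_iff_eq_neg
    rw [hset] at h1 h3
    refine ⟨Or.inr ⟨h1, h2⟩, ?_⟩
    rintro B (rfl | rfl) hB
    · exact absurd hB h2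
    · exact h3
end

section
/- Let f : ℝ² → ℝ be a nonconstant real polynomial function in two variables with only finitely many critical points, and suppose that at least one level set {(x,y) : f(x,y) = t} is not compact. Then there exist A₀ > 0 and an integer N ≥ 1 such that for every A ≥ A₀, the set {(x,y) : |f(x,y)| = A} has exactly 2N connected components, and every one of these connected components is noncompact. -/
open MvPolynomial Filter

open Set Topology in
lemma ode_unique {E : Type*} [NormedAddCommGroup E] [NormedSpace ℝ E] [FiniteDimensional ℝ E]
    (V : E → E) (hV : ContDiff ℝ 1 V) (f g : ℝ → E) (a b t₀ : ℝ) (ht₀ : t₀ ∈ Ioo a b)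
    (hf : ∀ t ∈ Ioo a b, HasDerivAt f (V (f t)) t)
    (hg : ∀ t ∈ Ioo a b, HasDerivAt g (V (g t)) t) (h : f t₀ = g t₀) :
    EqOn f g (Ioo a b) := by
  intro t ht
  have : ProperSpace E := FiniteDimensional.proper ℝ E
  obtain ⟨a', ha1, ha2⟩ := exists_between (lt_min ht₀.1 ht.1)
  obtain ⟨b', hb1, hb2⟩ := exists_between (max_lt ht₀.2 ht.2)
  have hsub : Icc a' b' ⊆ Ioo a b := fun s hs => ⟨lt_of_lt_of_le ha1 hs.1, lt_of_le_of_lt hs.2 hb2⟩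
  have hfc : ContinuousOn f (Icc a' b') := fun s hs => (hf s (hsub hs)).continuousAt.continuousWithinAt
  have hgc : ContinuousOn g (Icc a' b') := fun s hs => (hg s (hsub hs)).continuousAt.continuousWithinAt
  have hcomp : IsCompact (f '' Icc a' b' ∪ g '' Icc a' b') :=
    (isCompact_Icc.image_of_continuousOn hfc).union (isCompact_Icc.image_of_continuousOn hgc)
  obtain ⟨R, hR⟩ := hcomp.isBounded.subset_closedBall 0
  obtain ⟨K, hK⟩ := (hV.contDiffOn (s := Metric.closedBall 0 R)).exists_lipschitzOnWith one_ne_zero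
    (convex_closedBall 0 R) (isCompact_closedBall 0 R)
  have hm : ∀ s ∈ Ioo a' b', s ∈ Icc a' b' := fun s hs => Ioo_subset_Icc_self hs
  refine ODE_solution_unique_of_mem_Ioo (v := fun _ => V) (s := fun _ => Metric.closedBall 0 R)
    (a := a') (b := b') (t₀ := t₀) (K := K) (fun _ _ => hK) ?_ ?_ ?_ h ?_
  · exact ⟨ha2.trans_le (min_le_left _ _), (le_max_left _ _).trans_lt hb1⟩
  · exact fun s hs => ⟨hf s (hsub (hm s hs)), hR (Or.inl ⟨s, hm s hs, rfl⟩)⟩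
  · exact fun s hs => ⟨hg s (hsub (hm s hs)), hR (Or.inr ⟨s, hm s hs, rfl⟩)⟩
  · exact ⟨ha2.trans_le (min_le_right _ _), (le_max_right _ _).trans_lt hb1⟩

open Set Topology in
lemma ode_exists {E : Type*} [NormedAddCommGroup E] [NormedSpace ℝ E] [FiniteDimensional ℝ E]
    (V : E → E) (hV : ContDiff ℝ 1 V) (hb : ∀ x, ‖V x‖ ≤ 1) (p : E) :
    ∃ γ : ℝ → E, γ 0 = p ∧ ∀ t, HasDerivAt γ (V (γ t)) t := by
  have : ProperSpace E := FiniteDimensional.proper ℝ E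
  have : CompleteSpace E := FiniteDimensional.complete ℝ E
  have loc : ∀ n : ℕ, ∃ γ : ℝ → E, γ 0 = p ∧ ∀ t ∈ Ioo (-(n : ℝ)) n, HasDerivAt γ (V (γ t)) t := by
    intro n
    obtain ⟨K, hK⟩ := (hV.contDiffOn (s := Metric.closedBall p (n : NNReal))).exists_lipschitzOnWith
      one_ne_zero (convex_closedBall p _) (isCompact_closedBall p _)
    have h0 : (0 : ℝ) ∈ Icc (-(n : ℝ)) n := ⟨by simp, by simp⟩
    have hpl : IsPicardLindelof (fun _ => V) (⟨0, h0⟩ : Icc (-(n : ℝ)) n) p (n : NNReal) 0 1 K :=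
      IsPicardLindelof.of_time_independent (fun x _ => by simpa using hb x) hK (by simp)
    obtain ⟨γ, h1, h2⟩ := hpl.exists_eq_forall_mem_Icc_hasDerivWithinAt₀
    exact ⟨γ, h1, fun t ht => (h2 t (Ioo_subset_Icc_self ht)).hasDerivAt (Icc_mem_nhds ht.1 ht.2)⟩
  choose γ hγ0 hγ using loc
  have agree : ∀ m n : ℕ, m ≤ n → EqOn (γ m) (γ n) (Ioo (-(m : ℝ)) m) := by
    intro m n hmn t ht
    have hmn' : (m : ℝ) ≤ n := by exact_mod_cast hmn
    have hm : (0 : ℝ) < m := by have := ht.1; have := ht.2; linarith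
    exact ode_unique V hV (γ m) (γ n) (-(m : ℝ)) m 0 ⟨by linarith, hm⟩ (hγ m)
      (fun s hs => hγ n s ⟨by linarith [hs.1], by linarith [hs.2]⟩) (by rw [hγ0, hγ0]) ht
  refine ⟨fun t => γ (⌈|t|⌉₊ + 1) t, hγ0 _, fun t => ?_⟩
  set n := ⌈|t|⌉₊ + 1 with hn
  have htn : |t| < (n : ℝ) := by
    have := Nat.le_ceil |t|
    rw [hn]; push_cast; linarith
  have key : (fun t => γ (⌈|t|⌉₊ + 1) t) =ᶠ[𝓝 t] γ n := by
    have : Ioo (-(n : ℝ)) n ∈ 𝓝 t := Ioo_mem_nhds (abs_lt.1 htn).1 (abs_lt.1 htn).2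
    filter_upwards [this] with s hs
    have hs' : |s| < ((⌈|s|⌉₊ + 1 : ℕ) : ℝ) := by
      have := Nat.le_ceil |s|
      push_cast; linarith
    rcases le_total (⌈|s|⌉₊ + 1) n with h | h
    · exact agree _ _ h (abs_lt.1 hs')
    · exact (agree _ _ h hs).symm
  have := (hγ n t (abs_lt.1 htn)).congr_of_eventuallyEq key
  simpa [hn] using this

open Set Topology in
lemma one_dim_exit_stay (h h' : ℝ → ℝ) (c : ℝ) (hd : ∀ t, HasDerivAt h (h' t) t)
    (hne : ∀ t, c ≤ h t → h' t ≠ 0) (t₀ : ℝ) (h0 : h t₀ = c) (h0' : 0 < h' t₀) :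
    ∀ t, t₀ < t → c < h t := by
  intro t₁ ht
  by_contra hcon
  push Not at hcon
  have hcont : ContinuousOn h (Icc t₀ t₁) := fun s _ => (hd s).continuousAt.continuousWithinAt
  obtain ⟨m, hm, hmax⟩ := isCompact_Icc.exists_isMaxOn (nonempty_Icc.2 ht.le) hcont
  have hev : ∀ᶠ s in 𝓝[>] t₀, h t₀ < h s := by
    have h1 := (hasDerivAt_iff_tendsto_slope.1 (hd t₀)).eventually (lt_mem_nhds h0')
    have h2 : 𝓝[>] t₀ ≤ 𝓝[≠] t₀ := nhdsWithin_mono _ (fun s (hs : t₀ < s) => hs.ne')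
    filter_upwards [h2 h1, self_mem_nhdsWithin] with s hs hs'
    have hs'' : t₀ < s := hs'
    rw [slope_def_field] at hs
    have := (div_pos_iff_of_pos_right (sub_pos.2 hs'')).1 hs
    linarith
  obtain ⟨s, hs1, hs2⟩ := (hev.and (Ioo_mem_nhdsGT ht)).exists
  have hms : h s ≤ h m := hmax (Ioo_subset_Icc_self hs2)
  have hm1 : m ≠ t₀ := by rintro rfl; linarith
  have hm2 : m ≠ t₁ := by rintro rfl; linarith
  have hmI : m ∈ Ioo t₀ t₁ := ⟨lt_of_le_of_ne hm.1 (Ne.symm hm1), lt_of_le_of_ne hm.2 hm2⟩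
  have hloc : IsLocalMax h m := hmax.isLocalMax (Icc_mem_nhds hmI.1 hmI.2)
  exact hne m (by linarith) (hloc.hasDerivAt_eq_zero (hd m))

open Set Topology in
lemma one_dim_exit (h h' : ℝ → ℝ) (c : ℝ) (hd : ∀ t, HasDerivAt h (h' t) t)
    (hne : ∀ t, c ≤ h t → h' t ≠ 0) (hprop : ∀ Y, Bornology.IsBounded {t | h t ≤ Y}) :
    ∃! t, h t = c ∧ 0 < h' t := by
  have hcont : Continuous h := continuous_iff_continuousAt.2 fun s => (hd s).continuousAt
  -- argmin
  have hcpt : IsCompact {t | h t ≤ h 0} :=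
    Metric.isCompact_of_isClosed_isBounded (isClosed_le hcont continuous_const) (hprop _)
  obtain ⟨m, hm, hmin⟩ := hcpt.exists_isMinOn ⟨0, by simp⟩ hcont.continuousOn
  have hmin' : ∀ t, h m ≤ h t := by
    intro t
    by_cases ht : h t ≤ h 0
    · exact hmin ht
    · exact (le_of_lt (lt_of_le_of_lt hm (not_le.1 ht)))
  have hmd : h' m = 0 := by
    have : IsLocalMin h m := Filter.Eventually.of_forall hmin'
    exact this.hasDerivAt_eq_zero (hd m)
  have hmc : h m < c := by
    by_contra hc
    exact hne m (not_lt.1 hc) hmd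
  set T := {t | h t ≤ c} with hT
  have hTc : IsCompact T :=
    Metric.isCompact_of_isClosed_isBounded (isClosed_le hcont continuous_const) (hprop _)
  have hTne : T.Nonempty := ⟨m, hmc.le⟩
  set t₀ := sSup T with ht₀
  have ht₀T : t₀ ∈ T := hTc.sSup_mem hTne
  have hgt : ∀ t, t₀ < t → c < h t := by
    intro t ht
    by_contra hcon
    exact absurd (le_csSup hTc.bddAbove (show t ∈ T from not_lt.1 hcon)) (not_le.2 ht)
  have heq : h t₀ = c := by
    refine le_antisymm ht₀T ?_
    refine ge_of_tendsto (hcont.continuousAt.continuousWithinAt (s := Ioi t₀)) ?_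
    filter_upwards [self_mem_nhdsWithin] with s hs using (hgt s hs).le
  have hpos : 0 < h' t₀ := by
    refine lt_of_le_of_ne ?_ (Ne.symm (hne t₀ heq.ge))
    have h1 := (hasDerivAt_iff_tendsto_slope.1 (hd t₀)).mono_left
      (nhdsWithin_mono t₀ (fun s (hs : t₀ < s) => hs.ne') : 𝓝[>] t₀ ≤ 𝓝[≠] t₀)
    refine ge_of_tendsto h1 ?_
    filter_upwards [self_mem_nhdsWithin] with s hs
    have hs' : t₀ < s := hs
    rw [slope_def_field]
    exact div_nonneg (by linarith [hgt s hs]) (by linarith)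
  refine ⟨t₀, ⟨heq, hpos⟩, ?_⟩
  rintro t ⟨h1, h2⟩
  rcases lt_trichotomy t t₀ with hlt | rfl | hlt
  · have := one_dim_exit_stay h h' c hd hne t h1 h2 t₀ hlt
    linarith
  · rfl
  · have := one_dim_exit_stay h h' c hd hne t₀ heq hpos t hlt
    linarith

open Set Topology in
lemma one_dim_enter (h h' : ℝ → ℝ) (c : ℝ) (hd : ∀ t, HasDerivAt h (h' t) t)
    (hne : ∀ t, c ≤ h t → h' t ≠ 0) (hprop : ∀ Y, Bornology.IsBounded {t | h t ≤ Y}) :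
    ∃! t, h t = c ∧ h' t < 0 := by
  have key := one_dim_exit (fun t => h (-t)) (fun t => - h' (-t)) c ?_ ?_ ?_
  · obtain ⟨t, ⟨h1, h2⟩, h3⟩ := key
    refine ⟨-t, ⟨h1, by simpa using h2⟩, ?_⟩
    rintro s ⟨hs1, hs2⟩
    have := h3 (-s) ⟨by simpa using hs1, by simpa using hs2⟩
    linarith
  · intro t
    have := (hd (-t)).comp t (hasDerivAt_neg t)
    simpa [Function.comp_def] using this
  · intro t ht
    simpa using hne (-t) ht
  · intro Y
    have : {t | h (-t) ≤ Y} = -{t | h t ≤ Y} := by ext; simp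
    rw [this]
    exact (hprop Y).neg

open Set Topology in
lemma flow_box {E : Type*} [NormedAddCommGroup E] [NormedSpace ℝ E]
    (F : E → ℝ) (hF : ContDiff ℝ 1 F) (V : E → E) (hV : Continuous V)
    (γ : ℝ → E) (hγ : ∀ t, HasDerivAt γ (V (γ t)) t) (hFγ : ∀ t, F (γ t) = F (γ 0))
    (ℓ : E →L[ℝ] ℝ) (w : E) (hker : ∀ q q', ℓ q = ℓ q' → ∃ c : ℝ, q' = q + c • w)
    (hℓ : ℓ (V (γ 0)) ≠ 0) (hw : fderiv ℝ F (γ 0) w ≠ 0) (ε : ℝ) (hε : 0 < ε) :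
    ∀ᶠ q in 𝓝 (γ 0), F q = F (γ 0) → ∃ t, |t| < ε ∧ q = γ t := by
  have hcont : Continuous γ := continuous_iff_continuousAt.2 fun s => (hγ s).continuousAt
  have hdF : Continuous (fun q => fderiv ℝ F q w) :=
    (hF.continuous_fderiv one_ne_zero).clm_apply continuous_const
  obtain ⟨r, hr, hball⟩ := Metric.eventually_nhds_iff_ball.1 (hdF.continuousAt.eventually_ne hw)
  have hstr : HasStrictDerivAt (fun t => ℓ (γ t)) (ℓ (V (γ 0))) 0 := by
    apply hasStrictDerivAt_of_hasDerivAt_of_continuousAt (f' := fun t => ℓ (V (γ t)))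
    · exact Filter.Eventually.of_forall fun t => ℓ.hasFDerivAt.comp_hasDerivAt t (hγ t)
    · exact (ℓ.continuous.comp (hV.comp hcont)).continuousAt
  have hmap := hstr.map_nhds_eq hℓ
  have hS : {t | |t| < ε ∧ γ t ∈ Metric.ball (γ 0) r} ∈ 𝓝 (0 : ℝ) := by
    refine Filter.inter_mem ?_ (hcont.continuousAt (Metric.ball_mem_nhds _ hr))
    exact (continuous_abs.isOpen_preimage _ isOpen_Iio).mem_nhds (by simpa using hε)
  have him : (fun t => ℓ (γ t)) '' {t | |t| < ε ∧ γ t ∈ Metric.ball (γ 0) r} ∈ 𝓝 (ℓ (γ 0)) := by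
    have := Filter.image_mem_map (m := fun t => ℓ (γ t)) hS
    rwa [hmap] at this
  filter_upwards [ℓ.continuous.continuousAt him, Metric.ball_mem_nhds (γ 0) hr] with q hq1 hq2 hq3
  obtain ⟨t, ⟨ht1, ht2⟩, ht3⟩ := hq1
  refine ⟨t, ht1, ?_⟩
  obtain ⟨c, hc⟩ := hker (γ t) q ht3
  by_cases hc0 : c = 0
  · simp [hc, hc0]
  exfalso
  -- Rolle along the segment
  have hseg : ∀ s ∈ Icc (0 : ℝ) 1, γ t + s • (c • w) ∈ Metric.ball (γ 0) r := by
    intro s hs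
    have := (convex_ball (γ 0) r).add_smul_sub_mem ht2 hq2 hs
    rw [hc] at this
    simpa using this
  have hder : ∀ s : ℝ, HasDerivAt (fun s : ℝ => F (γ t + s • (c • w)))
      (fderiv ℝ F (γ t + s • (c • w)) (c • w)) s := by
    intro s
    have h1 : HasDerivAt (fun s : ℝ => γ t + s • (c • w)) (c • w) s := by
      simpa using ((hasDerivAt_id s).smul_const (c • w)).const_add (γ t)
    exact ((hF.differentiable one_ne_zero _).hasFDerivAt).comp_hasDerivAt s h1
  obtain ⟨s, hs, hs0⟩ := exists_hasDerivAt_eq_zero (zero_lt_one)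
    (fun s _ => (hder s).continuousAt.continuousWithinAt)
    (by simp only [zero_smul, add_zero, one_smul]; rw [← hc, hq3, hFγ]) (fun s _ => hder s)
  have := hball _ (hseg s (Ioo_subset_Icc_self hs))
  rw [map_smul, smul_eq_mul, mul_eq_zero] at hs0
  tauto

/-- The normalised Hamiltonian vector field. -/
noncomputable def hamV (F : ℝ × ℝ → ℝ) (p : ℝ × ℝ) : ℝ × ℝ :=
  ((1 + (fderiv ℝ F p (1, 0)) ^ 2 + (fderiv ℝ F p (0, 1)) ^ 2)⁻¹ * fderiv ℝ F p (0, 1),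
   -((1 + (fderiv ℝ F p (1, 0)) ^ 2 + (fderiv ℝ F p (0, 1)) ^ 2)⁻¹ * fderiv ℝ F p (1, 0)))

lemma hamV_contDiff (F : ℝ × ℝ → ℝ) (hF : ContDiff ℝ 2 F) : ContDiff ℝ 1 (hamV F) := by
  have h1 : ContDiff ℝ 1 (fun p => fderiv ℝ F p (1, 0)) :=
    (hF.fderiv_right (m := 1) (by norm_num)).clm_apply contDiff_const
  have h2 : ContDiff ℝ 1 (fun p => fderiv ℝ F p (0, 1)) :=
    (hF.fderiv_right (m := 1) (by norm_num)).clm_apply contDiff_const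
  have h3 : ContDiff ℝ 1 (fun p => (1 + (fderiv ℝ F p (1, 0)) ^ 2 + (fderiv ℝ F p (0, 1)) ^ 2)⁻¹) :=
    ContDiff.inv ((contDiff_const.add (h1.pow 2)).add (h2.pow 2)) (fun p => by positivity)
  exact (h3.mul h2).prodMk (h3.mul h1).neg

lemma hamV_norm (F : ℝ × ℝ → ℝ) (p : ℝ × ℝ) : ‖hamV F p‖ ≤ 1 := by
  have aux : ∀ a b : ℝ, |(1 + a ^ 2 + b ^ 2)⁻¹ * b| ≤ 1 ∧ |(1 + a ^ 2 + b ^ 2)⁻¹ * a| ≤ 1 := by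
    intro a b
    have hp : 0 < 1 + a ^ 2 + b ^ 2 := by positivity
    constructor
    · rw [abs_mul, abs_inv, abs_of_pos hp, inv_mul_le_one₀ hp]
      nlinarith [sq_abs b, sq_nonneg (|b| - 1), sq_nonneg a, abs_nonneg b]
    · rw [abs_mul, abs_inv, abs_of_pos hp, inv_mul_le_one₀ hp]
      nlinarith [sq_abs a, sq_nonneg (|a| - 1), sq_nonneg b, abs_nonneg a]
  unfold hamV
  rw [Prod.norm_def]
  simp only [norm_neg, Real.norm_eq_abs]
  exact max_le (aux _ _).1 (aux _ _).2

lemma fderiv_pair (F : ℝ × ℝ → ℝ) (p v : ℝ × ℝ) :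
    fderiv ℝ F p v = v.1 * fderiv ℝ F p (1, 0) + v.2 * fderiv ℝ F p (0, 1) := by
  have : v = v.1 • ((1 : ℝ), (0 : ℝ)) + v.2 • ((0 : ℝ), (1 : ℝ)) := by ext <;> simp
  conv_lhs => rw [this]
  rw [map_add, map_smul, map_smul, smul_eq_mul, smul_eq_mul]

open Set Topology in
lemma ham_flow (F : ℝ × ℝ → ℝ) (hF : ContDiff ℝ 2 F) :
    ∃ Φ : ℝ × ℝ → ℝ → ℝ × ℝ, (∀ p, Φ p 0 = p) ∧
      (∀ p t, HasDerivAt (Φ p) (hamV F (Φ p t)) t) ∧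
      (∀ p s t, Φ (Φ p s) t = Φ p (s + t)) ∧ (∀ p t, F (Φ p t) = F p) := by
  have hV := hamV_contDiff F hF
  choose Φ h0 hΦ using ode_exists (hamV F) hV (hamV_norm F)
  refine ⟨Φ, h0, hΦ, ?_, ?_⟩
  · intro p s t
    have h1 : ∀ r, HasDerivAt (fun r => Φ p (s + r)) (hamV F (Φ p (s + r))) r := by
      intro r
      exact (hΦ p (s + r)).comp_const_add s r
    refine ode_unique (hamV F) hV (Φ (Φ p s)) (fun r => Φ p (s + r)) (-|t| - 1) (|t| + 1) 0
      ⟨by linarith [abs_nonneg t], by linarith [abs_nonneg t]⟩ (fun r _ => hΦ _ r)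
      (fun r _ => h1 r) (by simp [h0]) ⟨by linarith [neg_abs_le t], by linarith [le_abs_self t]⟩
  · intro p t
    have hd : ∀ t, HasDerivAt (fun t => F (Φ p t)) 0 t := by
      intro t
      have h1 := ((hF.differentiable two_ne_zero (Φ p t)).hasFDerivAt).comp_hasDerivAt t (hΦ p t)
      have h2 : fderiv ℝ F (Φ p t) (hamV F (Φ p t)) = 0 := by
        rw [fderiv_pair]; simp only [hamV]; ring
      rw [h2] at h1
      exact h1
    have := is_const_of_deriv_eq_zero (fun t => (hd t).differentiableAt) (fun t => (hd t).deriv) t 0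
    simpa [h0] using this

lemma mul_neg_iff_of_pos_left' (a b : ℝ) (ha : 0 < a) : a * b < 0 ↔ b < 0 := by
  constructor
  · intro h
    by_contra hb
    exact absurd h (not_lt.2 (mul_nonneg ha.le (not_lt.1 hb)))
  · exact fun h => mul_neg_of_pos_of_neg ha h

open Set Topology in
lemma ham_box (F : ℝ × ℝ → ℝ) (hF : ContDiff ℝ 2 F) (Φ : ℝ × ℝ → ℝ → ℝ × ℝ)
    (h0 : ∀ p, Φ p 0 = p) (hΦ : ∀ p t, HasDerivAt (Φ p) (hamV F (Φ p t)) t)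
    (hFΦ : ∀ p t, F (Φ p t) = F p) (p : ℝ × ℝ) (hp : fderiv ℝ F p ≠ 0) (ε : ℝ) (hε : 0 < ε) :
    ∀ᶠ q in 𝓝 p, F q = F p → ∃ t, |t| < ε ∧ q = Φ p t := by
  have hpos : (1 + (fderiv ℝ F p (1, 0)) ^ 2 + (fderiv ℝ F p (0, 1)) ^ 2)⁻¹ ≠ 0 := by positivity
  by_cases hy : fderiv ℝ F p (0, 1) = 0
  · have hx : fderiv ℝ F p (1, 0) ≠ 0 := by
      intro hx
      apply hp
      ext
      · simpa using hx
      · simpa using hy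
    have := flow_box F (hF.of_le (by norm_num)) (hamV F) (hamV_contDiff F hF).continuous (Φ p) (hΦ p)
      (fun t => by rw [hFΦ, hFΦ]) (ContinuousLinearMap.snd ℝ ℝ ℝ) (1, 0)
      (fun q q' h => ⟨q'.1 - q.1, by ext <;> simp at h ⊢; exact h.symm⟩)
      (by
        rw [h0]
        simp only [hamV, ContinuousLinearMap.coe_snd']
        exact neg_ne_zero.2 (mul_ne_zero hpos hx)) (by rw [h0]; exact hx) ε hε
    rwa [h0] at this
  · have := flow_box F (hF.of_le (by norm_num)) (hamV F) (hamV_contDiff F hF).continuous (Φ p) (hΦ p)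
      (fun t => by rw [hFΦ, hFΦ]) (ContinuousLinearMap.fst ℝ ℝ ℝ) (0, 1)
      (fun q q' h => ⟨q'.2 - q.2, by ext <;> simp at h ⊢; exact h.symm⟩)
      (by
        rw [h0]
        simp only [hamV, ContinuousLinearMap.coe_fst']
        exact (mul_ne_zero hpos hy)) (by rw [h0]; exact hy) ε hε
    rwa [h0] at this

open Set Topology in
/-- Counting components of a regular level set by its crossings with `|x| = X`. -/
lemma count_components (F : ℝ × ℝ → ℝ) (hF : ContDiff ℝ 2 F) (A X : ℝ) (hA : 0 < A) (hX : 0 < X)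
    (hreg : ∀ p, |F p| = A → fderiv ℝ F p ≠ 0)
    (hbdd : ∀ Y, Bornology.IsBounded {p : ℝ × ℝ | |F p| = A ∧ |p.1| ≤ Y})
    (hfy : ∀ p, |F p| = A → X ≤ |p.1| → fderiv ℝ F p (0, 1) ≠ 0)
    (hnc : ∀ p ∈ {p | |F p| = A}, ¬ IsCompact (connectedComponentIn {p | |F p| = A} p))
    (hfin : {p : ℝ × ℝ | |F p| = A ∧ |p.1| = X}.Finite) :
    2 * Nat.card (ConnectedComponents ↥{p | |F p| = A}) =
      {p : ℝ × ℝ | |F p| = A ∧ |p.1| = X}.ncard := by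
  obtain ⟨Φ, h0, hΦ, hgrp, hFΦ⟩ := ham_flow F hF
  have hcF : Continuous F := hF.continuous
  have hΦc : ∀ p, Continuous (Φ p) := fun p =>
    continuous_iff_continuousAt.2 fun s => (hΦ p s).continuousAt
  set Z : Set (ℝ × ℝ) := {p | |F p| = A} with hZ
  have hΦZ : ∀ p ∈ Z, ∀ t, Φ p t ∈ Z := fun p hp t => by
    change |F (Φ p t)| = A
    rw [hFΦ]; exact hp
  -- boxes
  have hbox : ∀ p ∈ Z, ∃ U, IsOpen U ∧ p ∈ U ∧ ∀ q ∈ U, q ∈ Z → ∃ t, |t| < 1 ∧ q = Φ p t := by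
    intro p hp
    have h1 := ham_box F hF Φ h0 hΦ hFΦ p (hreg p hp) 1 one_pos
    have h2 : ∀ᶠ q in 𝓝 p, |F q - F p| < A := by
      have : Continuous fun q => |F q - F p| := (hcF.sub continuous_const).abs
      exact (this.isOpen_preimage _ isOpen_Iio).mem_nhds (by simpa using hA)
    obtain ⟨U, hU, hUo, hpU⟩ := mem_nhds_iff.1 (h1.and h2)
    refine ⟨U, hUo, hpU, fun q hq hqZ => (hU hq).1 ?_⟩
    have h3 : |F q - F p| < A := (hU hq).2
    have hqZ' : |F q| = A := hqZ
    have hpZ' : |F p| = A := hp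
    rcases abs_eq_abs.1 (hqZ'.trans hpZ'.symm) with h | h
    · exact h
    · exfalso
      rw [h] at h3
      have : |-F p - F p| = 2 * A := by
        rw [show -F p - F p = -(2 * F p) by ring, abs_neg, abs_mul, hpZ']; norm_num
      linarith
  choose! U hUo hpU hU using hbox
  -- components are orbits
  have hcomp : ∀ p ∈ Z, connectedComponentIn Z p = range (Φ p) := by
    intro p hp
    apply Subset.antisymm
    · set K := connectedComponentIn Z p with hK
      have hKZ : K ⊆ Z := connectedComponentIn_subset _ _
      have hKc : IsPreconnected K := isPreconnected_connectedComponentIn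
      by_contra hcon
      obtain ⟨q, hqK, hq⟩ := not_subset.1 hcon
      have hpK : p ∈ K := mem_connectedComponentIn hp
      obtain ⟨z, hzK, hz1, hz2⟩ := hKc (⋃ r ∈ Z ∩ range (Φ p), U r) (⋃ r ∈ Z \ range (Φ p), U r)
        (isOpen_biUnion fun r hr => hUo r hr.1) (isOpen_biUnion fun r hr => hUo r hr.1)
        (fun z hz => by
          by_cases hzr : z ∈ range (Φ p)
          · exact Or.inl (mem_biUnion (⟨hKZ hz, hzr⟩ : z ∈ Z ∩ range (Φ p)) (hpU z (hKZ hz)))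
          · exact Or.inr (mem_biUnion (⟨hKZ hz, hzr⟩ : z ∈ Z \ range (Φ p)) (hpU z (hKZ hz))))
        ⟨p, hpK, mem_biUnion (⟨hp, ⟨0, h0 p⟩⟩ : p ∈ Z ∩ range (Φ p)) (hpU p hp)⟩
        ⟨q, hqK, mem_biUnion (⟨hKZ hqK, hq⟩ : q ∈ Z \ range (Φ p)) (hpU q (hKZ hqK))⟩
      simp only [mem_iUnion] at hz1 hz2
      obtain ⟨r1, ⟨hr1Z, s1, hs1⟩, hzr1⟩ := hz1
      obtain ⟨r2, ⟨hr2Z, hr2⟩, hzr2⟩ := hz2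
      obtain ⟨t1, _, ht1⟩ := hU r1 hr1Z z hzr1 (hKZ hzK)
      obtain ⟨t2, _, ht2⟩ := hU r2 hr2Z z hzr2 (hKZ hzK)
      apply hr2
      have e1 : Φ p (s1 + t1) = z := by rw [← hgrp, hs1, ht1]
      have e2 : Φ z (-t2) = r2 := by rw [ht2, hgrp]; simp [h0]
      exact ⟨s1 + t1 + -t2, by rw [← hgrp, e1, e2]⟩
    · apply IsPreconnected.subset_connectedComponentIn
      · exact isPreconnected_range (hΦc p)
      · exact ⟨0, h0 p⟩
      · rintro _ ⟨t, rfl⟩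
        exact hΦZ p hp t
  -- properness
  have hper : ∀ p ∈ Z, ∀ a b, Φ p a = Φ p b → a = b := by
    intro p hp a b hab
    by_contra hne
    apply hnc p hp
    rw [hcomp p hp]
    have hper : Function.Periodic (Φ p) (b - a) := by
      intro t
      have h1 : Φ (Φ p a) (t - a) = Φ (Φ p b) (t - a) := by rw [hab]
      rw [hgrp, hgrp] at h1
      rw [show t + (b - a) = b + (t - a) by ring, ← h1]
      congr 1; ring
    exact hper.compact_of_continuous (sub_ne_zero.2 (Ne.symm hne)) (hΦc p)
  have hZcl : IsClosed Z := isClosed_eq hcF.abs continuous_const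
  have hproper : ∀ p ∈ Z, ∀ Y, Bornology.IsBounded {t | (Φ p t).1 ^ 2 ≤ Y} := by
    intro p hp Y
    by_contra hub
    set T := {t | (Φ p t).1 ^ 2 ≤ Y} with hT
    set B : Set (ℝ × ℝ) := {q | q ∈ Z ∧ |q.1| ≤ Real.sqrt Y} with hB
    have hBc : IsCompact B := by
      apply Metric.isCompact_of_isClosed_isBounded _ (hbdd _)
      exact hZcl.inter (isClosed_le continuous_fst.abs continuous_const)
    have hTB : ∀ t ∈ T, Φ p t ∈ B := fun t ht => ⟨hΦZ p hp t, Real.abs_le_sqrt ht⟩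
    have hne : (cocompact ℝ ⊓ 𝓟 T).NeBot := by
      rw [Filter.neBot_iff]
      intro hbot
      apply hub
      rw [← Metric.cobounded_eq_cocompact] at hbot
      have := Filter.mem_iff_inf_principal_compl (f := Bornology.cobounded ℝ) (s := Tᶜ)
      rw [compl_compl] at this
      exact Bornology.isBounded_def.2 (this.2 hbot)
    obtain ⟨q, hqB, hq⟩ := hBc (f := map (Φ p) (cocompact ℝ ⊓ 𝓟 T)) (by
      rw [le_principal_iff, mem_map]
      exact mem_inf_of_right (fun t ht => hTB t ht))
    have hfreq : ∃ᶠ t in cocompact ℝ ⊓ 𝓟 T, Φ p t ∈ U q :=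
      (hq.frequently ((hUo q hqB.1).mem_nhds (hpU q hqB.1))) 
    obtain ⟨t1, ht1⟩ := hfreq.exists
    have hlarge : ∀ᶠ t in cocompact ℝ ⊓ 𝓟 T, |t1| + 3 < |t| := by
      apply mem_inf_of_left
      exact (tendsto_norm_cocompact_atTop (E := ℝ)).eventually_gt_atTop (|t1| + 3)
    obtain ⟨t2, ht2, ht2'⟩ := (hfreq.and_eventually hlarge).exists
    obtain ⟨s1, hs1, e1⟩ := hU q hqB.1 _ ht1 (hΦZ p hp _)
    obtain ⟨s2, hs2, e2⟩ := hU q hqB.1 _ ht2 (hΦZ p hp _)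
    have e3 : q = Φ p (t1 - s1) := by
      rw [sub_eq_add_neg, ← hgrp, e1, hgrp]; simp [h0]
    have e4 : Φ p t2 = Φ p (t1 - s1 + s2) := by
      rw [← hgrp, ← e3, e2]
    have e5 := hper p hp _ _ e4
    rw [e5] at ht2'
    rw [abs_lt] at hs1 hs2
    rcases abs_cases (t1 - s1 + s2) with h | h <;> rcases abs_cases t1 with h' | h' <;> linarith
  -- derivative of x^2 along the orbit
  have hsq : ∀ p t, HasDerivAt (fun t => (Φ p t).1 ^ 2)
      (2 * (Φ p t).1 * (hamV F (Φ p t)).1) t := by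
    intro p t
    have h1 : HasDerivAt (fun t => (Φ p t).1) (hamV F (Φ p t)).1 t :=
      (ContinuousLinearMap.fst ℝ ℝ ℝ).hasFDerivAt.comp_hasDerivAt t (hΦ p t)
    have h2 := h1.pow 2
    simp only [Nat.cast_ofNat, Nat.add_one_sub_one, pow_one] at h2
    exact h2
  have hsign : ∀ q : ℝ × ℝ, 0 < 2 * q.1 * (hamV F q).1 ↔ 0 < q.1 * fderiv ℝ F q (0, 1) := by
    intro q
    have hpos : 0 < (1 + (fderiv ℝ F q (1, 0)) ^ 2 + (fderiv ℝ F q (0, 1)) ^ 2)⁻¹ := by positivity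
    have : 2 * q.1 * (hamV F q).1 = (2 * (1 + (fderiv ℝ F q (1, 0)) ^ 2 +
      (fderiv ℝ F q (0, 1)) ^ 2)⁻¹) * (q.1 * fderiv ℝ F q (0, 1)) := by simp only [hamV]; ring
    rw [this]
    exact mul_pos_iff_of_pos_left (by positivity)
  have hsign' : ∀ q : ℝ × ℝ, 2 * q.1 * (hamV F q).1 < 0 ↔ q.1 * fderiv ℝ F q (0, 1) < 0 := by
    intro q
    have hpos : 0 < (1 + (fderiv ℝ F q (1, 0)) ^ 2 + (fderiv ℝ F q (0, 1)) ^ 2)⁻¹ := by positivity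
    have : 2 * q.1 * (hamV F q).1 = (2 * (1 + (fderiv ℝ F q (1, 0)) ^ 2 +
      (fderiv ℝ F q (0, 1)) ^ 2)⁻¹) * (q.1 * fderiv ℝ F q (0, 1)) := by simp only [hamV]; ring
    rw [this]
    exact mul_neg_iff_of_pos_left' _ _ (by positivity)
  have hne : ∀ p ∈ Z, ∀ t, X ^ 2 ≤ (Φ p t).1 ^ 2 → 2 * (Φ p t).1 * (hamV F (Φ p t)).1 ≠ 0 := by
    intro p hp t ht
    have h1 : X ≤ |(Φ p t).1| := by
      rw [← sq_abs (Φ p t).1] at ht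
      exact (pow_le_pow_iff_left₀ hX.le (abs_nonneg _) two_ne_zero).1 ht
    have h2 := hfy _ (hΦZ p hp t) h1
    have h3 : (Φ p t).1 ≠ 0 := abs_pos.1 (lt_of_lt_of_le hX h1)
    rcases lt_or_gt_of_ne (mul_ne_zero h3 h2) with h | h
    · exact ((hsign' _).2 h).ne
    · exact ((hsign _).2 h).ne'
  have hXsq : ∀ q : ℝ × ℝ, q.1 ^ 2 = X ^ 2 ↔ |q.1| = X := by
    intro q
    rw [sq_eq_sq_iff_abs_eq_abs, abs_of_pos hX]
  have hout : ∀ p ∈ Z, ∃! t, |(Φ p t).1| = X ∧ 0 < (Φ p t).1 * fderiv ℝ F (Φ p t) (0, 1) := by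
    intro p hp
    have := one_dim_exit (fun t => (Φ p t).1 ^ 2) _ (X ^ 2) (hsq p) (hne p hp) (hproper p hp)
    simpa only [hXsq, hsign] using this
  have hin : ∀ p ∈ Z, ∃! t, |(Φ p t).1| = X ∧ (Φ p t).1 * fderiv ℝ F (Φ p t) (0, 1) < 0 := by
    intro p hp
    have := one_dim_enter (fun t => (Φ p t).1 ^ 2) _ (X ^ 2) (hsq p) (hne p hp) (hproper p hp)
    simpa only [hXsq, hsign'] using this
  have hcc : ∀ a b : Z, (ConnectedComponents.mk a = ConnectedComponents.mk b) ↔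
      ∃ t, Φ b.1 t = a.1 := by
    intro a b
    rw [ConnectedComponents.coe_eq_coe', ← mem_range, ← hcomp b.1 b.2,
      connectedComponentIn_eq_image b.2]
    simp
  -- general counting principle
  have hgen : ∀ Q : ℝ × ℝ → Prop, (∀ p ∈ Z, ∃! t, |(Φ p t).1| = X ∧ Q (Φ p t)) →
      Nat.card (ConnectedComponents Z) = {p : ℝ × ℝ | |F p| = A ∧ |p.1| = X ∧ Q p}.ncard := by
    intro Q hQ
    rw [← Nat.card_coe_set_eq]
    symm
    apply Nat.card_eq_of_bijective (fun s : {p : ℝ × ℝ | |F p| = A ∧ |p.1| = X ∧ Q p} =>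
      (ConnectedComponents.mk (⟨s.1, s.2.1⟩ : Z) : ConnectedComponents Z))
    constructor
    · rintro ⟨a, ha1, ha2⟩ ⟨b, hb1, hb2⟩ hab
      obtain ⟨t, ht⟩ := (hcc _ _).1 hab
      simp only at ht
      have := (hQ b hb1).unique (y₁ := t) (y₂ := 0) (by rw [ht]; exact ha2) (by rw [h0]; exact hb2)
      rw [this, h0] at ht
      exact Subtype.ext ht.symm
    · intro c
      obtain ⟨z, rfl⟩ := ConnectedComponents.surjective_coe c
      obtain ⟨t, ht, _⟩ := hQ z.1 z.2
      exact ⟨⟨Φ z.1 t, hΦZ z.1 z.2 t, ht⟩, (hcc _ _).2 ⟨t, rfl⟩⟩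
  have c1 := hgen (fun q => 0 < q.1 * fderiv ℝ F q (0, 1)) hout
  have c2 := hgen (fun q => q.1 * fderiv ℝ F q (0, 1) < 0) hin
  have hunion : {p : ℝ × ℝ | |F p| = A ∧ |p.1| = X} =
      {p : ℝ × ℝ | |F p| = A ∧ |p.1| = X ∧ 0 < p.1 * fderiv ℝ F p (0, 1)} ∪
      {p : ℝ × ℝ | |F p| = A ∧ |p.1| = X ∧ p.1 * fderiv ℝ F p (0, 1) < 0} := by
    ext p
    simp only [mem_ofPred_eq, mem_union]
    constructor
    · rintro ⟨h1, h2⟩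
      have h3 : p.1 ≠ 0 := abs_pos.1 (by rw [h2]; exact hX)
      rcases lt_or_gt_of_ne (mul_ne_zero h3 (hfy p h1 h2.ge)) with h | h
      · exact Or.inr ⟨h1, h2, h⟩
      · exact Or.inl ⟨h1, h2, h⟩
    · rintro (h | h)
      · exact ⟨h.1, h.2.1⟩
      · exact ⟨h.1, h.2.1⟩
  have f1 : {p : ℝ × ℝ | |F p| = A ∧ |p.1| = X ∧ 0 < p.1 * fderiv ℝ F p (0, 1)}.Finite :=
    hfin.subset fun p hp => ⟨hp.1, hp.2.1⟩
  have f2 : {p : ℝ × ℝ | |F p| = A ∧ |p.1| = X ∧ p.1 * fderiv ℝ F p (0, 1) < 0}.Finite :=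
    hfin.subset fun p hp => ⟨hp.1, hp.2.1⟩
  rw [hunion, ncard_union_eq ?_ f1 f2, ← c1, ← c2, two_mul]
  rw [Set.disjoint_left]
  rintro p ⟨_, _, h⟩ ⟨_, _, h'⟩
  linarith

open Set Topology in
/-- A weak form of the Jordan curve theorem: a compact, relatively open piece `C` of a level set,
with no local extremum at some point of `C`, forces a bounded open set whose frontier lies in the level set. -/
lemma weak_jordan (F : ℝ × ℝ → ℝ) (hF : Continuous F) (A : ℝ) (C : Set (ℝ × ℝ))
    (hC : IsCompact C) (hCZ : C ⊆ {p | F p = A}) (hcl : IsClosed ({p | F p = A} \ C))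
    (q₀ : ℝ × ℝ) (hq₀ : q₀ ∈ C) (hext1 : ∃ᶠ q in 𝓝 q₀, A < F q) (hext2 : ∃ᶠ q in 𝓝 q₀, F q < A) :
    ∃ D : Set (ℝ × ℝ), IsOpen D ∧ Bornology.IsBounded D ∧ D.Nonempty ∧
      frontier D ⊆ {p | F p = A} := by
  -- a bounded open neighbourhood of C whose closure misses the rest
  obtain ⟨U, hUo, hCU, hUcl, hUbdd⟩ : ∃ U : Set (ℝ × ℝ), IsOpen U ∧ C ⊆ U ∧
      Disjoint (closure U) ({p | F p = A} \ C) ∧ Bornology.IsBounded U := by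
    obtain ⟨R, hR⟩ := hC.isBounded.subset_ball 0
    have hopen : IsOpen (Metric.ball (0 : ℝ × ℝ) R ∩ ({p | F p = A} \ C)ᶜ) :=
      Metric.isOpen_ball.inter hcl.isOpen_compl
    obtain ⟨U, hUo, hCU, hU⟩ := normal_exists_closure_subset hC.isClosed hopen
      (fun p hp => ⟨hR hp, fun h => h.2 hp⟩)
    refine ⟨U, hUo, hCU, ?_, ?_⟩
    · rw [Set.disjoint_left]
      exact fun p hp => (hU hp).2
    · exact Metric.isBounded_ball.subset (subset_closure.trans (hU.trans inter_subset_left))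
  have hfr : ∀ p ∈ frontier U, F p ≠ A := by
    intro p hp hpA
    have h1 : p ∈ closure U := frontier_subset_closure hp
    have h2 : p ∉ C := fun h => (hUo.frontier_eq ▸ hp).2 (hCU h)
    exact Set.disjoint_left.1 hUcl h1 ⟨hpA, h2⟩
  have hfrc : IsCompact (frontier U) :=
    Metric.isCompact_of_isClosed_isBounded isClosed_frontier
      (hUbdd.closure.subset frontier_subset_closure)
  obtain ⟨ε, hε, hεfr⟩ : ∃ ε > 0, ∀ p ∈ frontier U, ε ≤ |F p - A| := by
    rcases (frontier U).eq_empty_or_nonempty with he | hne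
    · exact ⟨1, one_pos, by simp [he]⟩
    · obtain ⟨m, hm, hmin⟩ := hfrc.exists_isMinOn hne
        (f := fun p => |F p - A|) (hF.sub continuous_const).abs.continuousOn
      exact ⟨|F m - A|, abs_pos.2 (sub_ne_zero.2 (hfr m hm)), fun p hp => hmin hp⟩
  -- the clamp
  set χ : ℝ × ℝ → ℝ := fun p => max (-1) (min 1 ((F p - A) / ε)) with hχ
  have hχc : Continuous χ := by
    apply continuous_const.max (continuous_const.min ((hF.sub continuous_const).div_const _))
  have hχfr : ∀ p ∈ frontier U, χ p = 1 ∨ χ p = -1 := by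
    intro p hp
    rcases le_abs.1 (hεfr p hp) with h | h
    · left
      have : 1 ≤ (F p - A) / ε := (one_le_div hε).2 h
      simp [hχ, min_eq_left this]
    · right
      have : (F p - A) / ε ≤ -1 := by rw [div_le_iff₀ hε]; linarith
      have h2 : min 1 ((F p - A) / ε) ≤ -1 := (min_le_right _ _).trans this
      simp only [hχ]; exact max_eq_left h2
  have hχ1 : ∀ p, -1 ≤ χ p ∧ χ p ≤ 1 := fun p =>
    ⟨le_max_left _ _, max_le (by norm_num) (min_le_left _ _)⟩
  have hχ0 : ∀ p, χ p = 0 → F p = A := by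
    intro p hp
    simp only [hχ] at hp
    have h1 : (F p - A) / ε = 0 := by
      rcases max_cases (-1 : ℝ) (min 1 ((F p - A) / ε)) with h | h <;>
      rcases min_cases (1 : ℝ) ((F p - A) / ε) with h' | h' <;> linarith
    rcases div_eq_zero_iff.1 h1 with h | h <;> linarith
  have hχpos : ∀ p, A < F p → 0 < χ p := by
    intro p hp
    have : 0 < (F p - A) / ε := div_pos (by linarith) hε
    exact lt_max_of_lt_right (lt_min one_pos this)
  have hχneg : ∀ p, F p < A → χ p < 0 := by
    intro p hp
    have : (F p - A) / ε < 0 := div_neg_of_neg_of_pos (by linarith) hε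
    exact max_lt (by norm_num) (min_lt_of_right_lt this)
  have expm1 : Circle.exp (Real.pi * (-1)) = Circle.exp (Real.pi * 1) := by
    rw [Circle.exp_eq_exp]
    exact ⟨-1, by push_cast; ring⟩
  classical
  set u : ℝ × ℝ → Circle := fun p => if p ∈ U then Circle.exp (Real.pi * χ p)
    else Circle.exp (Real.pi * 1) with hu
  have huc : Continuous u := by
    refine Continuous.if ?_ ?_ ?_
    · intro p hp
      rcases hχfr p hp with h | h
      · rw [h]
      · rw [h, expm1]
    · exact Circle.exp.continuous.comp (continuous_const.mul hχc)
    · exact continuous_const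
  have hpi : Real.pi ≠ 0 := Real.pi_ne_zero
  have hu0 : u q₀ = Circle.exp 0 := by
    have : χ q₀ = 0 := by simp [hχ, hCZ hq₀, show F q₀ = A from hCZ hq₀]
    simp [hu, hCU hq₀, this]
  obtain ⟨G, ⟨hG0, hG⟩, -⟩ := Circle.isCoveringMap_exp.existsUnique_continuousMap_lifts
    (⟨u, huc⟩ : C(ℝ × ℝ, Circle)) q₀ 0 (by simpa using hu0.symm)
  have hG' : ∀ p, Circle.exp (G p) = u p := fun p => congrFun hG p
  have hGc : Continuous G := G.continuous
  -- G = 0 implies level set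
  have hGz : ∀ p, G p = 0 → F p = A := by
    intro p hp
    have h1 := hG' p
    rw [hp] at h1
    by_cases hpU : p ∈ U
    · simp only [hu, hpU, if_true] at h1
      obtain ⟨m, hm⟩ := Circle.exp_eq_exp.1 h1
      have h2 : χ p = -2 * m := by
        have : Real.pi * (χ p + 2 * m) = 0 := by linarith
        rcases mul_eq_zero.1 this with h | h
        · exact absurd h hpi
        · linarith
      apply hχ0
      have h3 := hχ1 p
      rw [h2] at h3
      have h4 : (-1 : ℝ) < m := by linarith
      have h5 : (m : ℝ) < 1 := by linarith
      have h6 : m = 0 := by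
        have a1 : (-1 : ℤ) < m := by exact_mod_cast h4
        have a2 : m < (1 : ℤ) := by exact_mod_cast h5
        omega
      rw [h2, h6]; simp
    · exfalso
      simp only [hu, hpU, if_false] at h1
      obtain ⟨m, hm⟩ := Circle.exp_eq_exp.1 h1
      have : Real.pi * (1 + 2 * m) = 0 := by linarith
      rcases mul_eq_zero.1 this with h | h
      · exact hpi h
      · have : (1 + 2 * m : ℤ) = 0 := by exact_mod_cast h
        omega
  -- outside a big ball, G has constant sign
  obtain ⟨R, hR⟩ := hUbdd.subset_ball 0
  have hRout : ∀ p ∈ (Metric.ball (0 : ℝ × ℝ) R)ᶜ, G p ≠ 0 := by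
    intro p hp h
    have h1 := hG' p
    have hpU : p ∉ U := fun h => hp (hR h)
    rw [h] at h1
    simp only [hu, hpU, if_false] at h1
    obtain ⟨m, hm⟩ := Circle.exp_eq_exp.1 h1
    have : Real.pi * (1 + 2 * m) = 0 := by linarith
    rcases mul_eq_zero.1 this with h | h
    · exact hpi h
    · have : (1 + 2 * m : ℤ) = 0 := by exact_mod_cast h
      omega
  have hconn : IsPreconnected (Metric.ball (0 : ℝ × ℝ) R)ᶜ := by
    have hx : IsPreconnected {p : ℝ × ℝ | R ≤ p.1} :=
      (convex_halfSpace_ge (f := fun p : ℝ × ℝ => p.1) ⟨fun _ _ => rfl, fun _ _ => rfl⟩ R).isPreconnected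
    have hx' : IsPreconnected {p : ℝ × ℝ | p.1 ≤ -R} :=
      (convex_halfSpace_le (f := fun p : ℝ × ℝ => p.1) ⟨fun _ _ => rfl, fun _ _ => rfl⟩ (-R)).isPreconnected
    have hy : IsPreconnected {p : ℝ × ℝ | R ≤ p.2} :=
      (convex_halfSpace_ge (f := fun p : ℝ × ℝ => p.2) ⟨fun _ _ => rfl, fun _ _ => rfl⟩ R).isPreconnected
    have hy' : IsPreconnected {p : ℝ × ℝ | p.2 ≤ -R} :=
      (convex_halfSpace_le (f := fun p : ℝ × ℝ => p.2) ⟨fun _ _ => rfl, fun _ _ => rfl⟩ (-R)).isPreconnected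
    have h1 := IsPreconnected.union (R, R) (show R ≤ R from le_rfl) (show R ≤ R from le_rfl) hx hy
    have h2 := IsPreconnected.union (-R, R) (Or.inr (show R ≤ R from le_rfl))
      (show -R ≤ -R from le_rfl) h1 hx'
    have h3 := IsPreconnected.union (-R, -R) (Or.inr (show -R ≤ -R from le_rfl))
      (show -R ≤ -R from le_rfl) h2 hy'
    convert h3 using 1
    ext p
    simp only [mem_compl_iff, Metric.mem_ball, dist_zero_right, Prod.norm_def, not_lt, le_max_iff,
      Real.norm_eq_abs, le_abs, mem_union, mem_setOf_eq]
    constructor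
    · rintro ((h | h) | (h | h))
      · exact Or.inl (Or.inl (Or.inl h))
      · exact Or.inl (Or.inr (by linarith))
      · exact Or.inl (Or.inl (Or.inr h))
      · exact Or.inr (by linarith)
    · rintro (((h | h) | h) | h)
      · exact Or.inl (Or.inl h)
      · exact Or.inr (Or.inl h)
      · exact Or.inl (Or.inr (by linarith))
      · exact Or.inr (Or.inr (by linarith))
  have hfrD : ∀ s : Set ℝ, (s = Ioi 0 ∨ s = Iio 0) → frontier (G ⁻¹' s) ⊆ {p | F p = A} := by
    intro s hs p hp
    apply hGz
    have := hGc.frontier_preimage_subset s hp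
    rcases hs with rfl | rfl <;> simpa using this
  -- local behaviour at q₀
  have hloc : ∀ᶠ q in 𝓝 q₀, G q = Real.pi * χ q := by
    have hd : Continuous fun q => |G q - Real.pi * χ q| := (hGc.sub (continuous_const.mul hχc)).abs
    have hχq : χ q₀ = 0 := by simp [hχ, show F q₀ = A from hCZ hq₀]
    have h1 : ∀ᶠ q in 𝓝 q₀, |G q - Real.pi * χ q| < 1 :=
      (hd.isOpen_preimage _ isOpen_Iio).mem_nhds (by simp [hG0, hχq])
    filter_upwards [h1, hUo.mem_nhds (hCU hq₀)] with q hq hqU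
    have h2 := hG' q
    simp only [hu, hqU, if_true] at h2
    obtain ⟨m, hm⟩ := Circle.exp_eq_exp.1 h2
    have h3 : |(m : ℝ) * (2 * Real.pi)| < 1 := by
      rw [hm] at hq; simpa using hq
    rcases eq_or_ne m 0 with h | h
    · rw [hm, h]; simp
    · exfalso
      have : (1 : ℝ) ≤ |(m : ℝ)| := by exact_mod_cast Int.one_le_abs h
      rw [abs_mul, abs_of_pos (by positivity : (0:ℝ) < 2 * Real.pi)] at h3
      nlinarith [Real.pi_gt_three]
  by_cases hsg : ∀ p ∈ (Metric.ball (0 : ℝ × ℝ) R)ᶜ, G p < 0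
  · refine ⟨G ⁻¹' Ioi 0, isOpen_Ioi.preimage hGc, ?_, ?_, hfrD _ (Or.inl rfl)⟩
    · refine (Metric.isBounded_ball (x := (0 : ℝ × ℝ)) (r := R)).subset fun p hp => ?_
      by_contra h
      have h1 := hsg p h
      have h2 : 0 < G p := hp
      linarith
    · obtain ⟨q, hq1, hq2⟩ := (hext1.and_eventually hloc).exists
      refine ⟨q, ?_⟩
      change 0 < G q
      rw [hq2]
      exact mul_pos Real.pi_pos (hχpos q hq1)
  · push Not at hsg
    obtain ⟨p₁, hp₁, hp₁'⟩ := hsg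
    have hsg : ∀ p ∈ (Metric.ball (0 : ℝ × ℝ) R)ᶜ, 0 < G p := by
      intro p hp
      by_contra hneg
      obtain ⟨z, hz, hz0⟩ := hconn.intermediate_value hp hp₁ hGc.continuousOn
        (show (0 : ℝ) ∈ Icc (G p) (G p₁) from ⟨not_lt.1 hneg, hp₁'⟩)
      exact hRout z hz hz0
    refine ⟨G ⁻¹' Iio 0, isOpen_Iio.preimage hGc, ?_, ?_, hfrD _ (Or.inr rfl)⟩
    · refine (Metric.isBounded_ball (x := (0 : ℝ × ℝ)) (r := R)).subset fun p hp => ?_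
      by_contra h
      have h1 := hsg p h
      have h2 : G p < 0 := hp
      linarith
    · obtain ⟨q, hq1, hq2⟩ := (hext2.and_eventually hloc).exists
      refine ⟨q, ?_⟩
      change G q < 0
      rw [hq2]
      exact mul_neg_of_pos_of_neg Real.pi_pos (hχneg q hq1)

open Set Topology in
lemma level_comp_closed (F : ℝ × ℝ → ℝ) (hF : ContDiff ℝ 2 F) (A : ℝ)
    (hreg : ∀ p, F p = A → fderiv ℝ F p ≠ 0) (p : ℝ × ℝ) :
    IsClosed ({p | F p = A} \ connectedComponentIn {p | F p = A} p) := by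
  obtain ⟨Φ, h0, hΦ, hgrp, hFΦ⟩ := ham_flow F hF
  have hΦc : ∀ p, Continuous (Φ p) := fun p =>
    continuous_iff_continuousAt.2 fun s => (hΦ p s).continuousAt
  rw [← isOpen_compl_iff, isOpen_iff_mem_nhds]
  intro q hq
  by_cases hqA : F q = A
  · have hqC : q ∈ connectedComponentIn {p | F p = A} p := by
      by_contra h; exact hq ⟨hqA, h⟩
    filter_upwards [ham_box F hF Φ h0 hΦ hFΦ q (hreg q hqA) 1 one_pos] with r hr
    rintro ⟨hrA, hrC⟩
    obtain ⟨s, -, hs⟩ := hr (by rw [hqA]; exact hrA)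
    apply hrC
    rw [connectedComponentIn_eq hqC]
    have hpre : IsPreconnected (range (Φ q)) := isPreconnected_range (hΦc q)
    refine hpre.subset_connectedComponentIn ⟨0, h0 q⟩ ?_ ⟨s, hs.symm⟩
    rintro _ ⟨u, rfl⟩
    change F (Φ q u) = A
    rw [hFΦ, hqA]
  · have : IsOpen {q | F q ≠ A} := isOpen_ne_fun hF.continuous continuous_const
    filter_upwards [this.mem_nhds hqA] with r hr
    exact fun h => hr h.1

open Set Topology in
lemma oval_disk (F : ℝ × ℝ → ℝ) (hF : ContDiff ℝ 2 F) (A : ℝ)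
    (hreg : ∀ p, fderiv ℝ F p = 0 → F p < A) (p : ℝ × ℝ) (hp : F p = A)
    (hC : IsCompact (connectedComponentIn {p | F p = A} p)) :
    ∃ D : Set (ℝ × ℝ), IsOpen D ∧ Bornology.IsBounded D ∧ frontier D ⊆ {p | F p = A} ∧
      ∃ q ∈ D, fderiv ℝ F q = 0 := by
  have hreg' : ∀ p, F p = A → fderiv ℝ F p ≠ 0 := fun p hp h => (hreg p h).ne hp
  have hpC : p ∈ connectedComponentIn {p | F p = A} p := mem_connectedComponentIn hp
  obtain ⟨D, hDo, hDb, ⟨z, hz⟩, hDf⟩ := weak_jordan F hF.continuous A _ hC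
    (connectedComponentIn_subset _ _) (level_comp_closed F hF A hreg' p) p hpC
    (by
      by_contra h
      rw [not_frequently] at h
      refine hreg' p hp (IsLocalMax.fderiv_eq_zero ?_)
      filter_upwards [h] with q hq
      rw [hp]; exact not_lt.1 hq)
    (by
      by_contra h
      rw [not_frequently] at h
      refine hreg' p hp (IsLocalMin.fderiv_eq_zero ?_)
      filter_upwards [h] with q hq
      rw [hp]; exact not_lt.1 hq)
  refine ⟨D, hDo, hDb, hDf, ?_⟩
  have hcpt : IsCompact (closure D) := hDb.isCompact_closure
  have hzc : z ∈ closure D := subset_closure hz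
  have hIntr : ∀ q ∈ closure D, F q ≠ A → q ∈ D := by
    intro q hq hqA
    by_contra hqD
    exact hqA (hDf (by rw [hDo.frontier_eq]; exact ⟨hq, hqD⟩))
  obtain ⟨M, hM, hMmax⟩ := hcpt.exists_isMaxOn ⟨z, hzc⟩ hF.continuous.continuousOn
  have hle : F M ≤ A := by
    by_contra h
    push Not at h
    have hMD := hIntr M hM h.ne'
    have : fderiv ℝ F M = 0 := IsLocalMax.fderiv_eq_zero (by
      filter_upwards [hDo.mem_nhds hMD] with q hq using hMmax (subset_closure hq))
    linarith [hreg M this]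
  obtain ⟨m, hm, hmmin⟩ := hcpt.exists_isMinOn ⟨z, hzc⟩ hF.continuous.continuousOn
  by_cases hmA : F m = A
  · refine ⟨z, hz, IsLocalMax.fderiv_eq_zero ?_⟩
    filter_upwards [hDo.mem_nhds hz] with q hq
    have h1 : F m ≤ F z := hmmin hzc
    have h2 : F q ≤ F M := hMmax (subset_closure hq)
    linarith
  · have hmD := hIntr m hm hmA
    exact ⟨m, hmD, IsLocalMin.fderiv_eq_zero (by
      filter_upwards [hDo.mem_nhds hmD] with q hq using hmmin (subset_closure hq))⟩

open Set Topology in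
lemma no_ovals (F : ℝ × ℝ → ℝ) (hF : ContDiff ℝ 2 F)
    (hfin : {p | fderiv ℝ F p = 0}.Finite) (t : ℝ) (hnc : ¬ IsCompact {p | F p = t}) :
    ∃ A₀, ∀ A ≥ A₀, ∀ p, F p = A → ¬ IsCompact (connectedComponentIn {p | F p = A} p) := by
  by_contra hcon
  push Not at hcon
  have hFc := hF.continuous
  obtain ⟨K, hK⟩ : ∃ K, ∀ p, fderiv ℝ F p = 0 → F p < K := by
    obtain ⟨K, hK⟩ := (hfin.image F).bddAbove
    exact ⟨K + 1, fun p hp => by linarith [hK ⟨p, hp, rfl⟩]⟩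
  have hdisk : ∀ A₀, ∃ A ≥ A₀, ∃ D : Set (ℝ × ℝ), IsOpen D ∧ Bornology.IsBounded D ∧
      frontier D ⊆ {p | F p = A} ∧ ∃ q ∈ D, fderiv ℝ F q = 0 := by
    intro A₀
    obtain ⟨A, hA, p, hp, hC⟩ := hcon (max A₀ K)
    exact ⟨A, (le_max_left _ _).trans hA, oval_disk F hF A
      (fun q hq => (hK q hq).trans_le ((le_max_right _ _).trans hA)) p hp hC⟩
  obtain ⟨p, hp⟩ : ∃ p, ∀ A₀, ∃ A ≥ A₀, ∃ D : Set (ℝ × ℝ), IsOpen D ∧ Bornology.IsBounded D ∧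
      frontier D ⊆ {p | F p = A} ∧ p ∈ D := by
    by_contra hno
    push Not at hno
    choose B hB using hno
    obtain ⟨K', hK'⟩ := (hfin.image B).bddAbove
    obtain ⟨A, hA, D, h1, h2, h3, q, hq, hq'⟩ := hdisk K'
    exact hB q A ((hK' ⟨q, hq', rfl⟩).trans hA) D h1 h2 h3 hq
  -- balls are swallowed
  have hsw : ∀ R, dist p 0 ≤ R → ∀ A₁, ∃ A ≥ A₁, ∃ D : Set (ℝ × ℝ), IsOpen D ∧ Bornology.IsBounded D ∧
      frontier D ⊆ {p | F p = A} ∧ Metric.closedBall 0 R ⊆ D := by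
    intro R hpR A₁
    obtain ⟨M, hM⟩ := (((isCompact_closedBall (0 : ℝ × ℝ) R).image hFc)).bddAbove
    obtain ⟨A, hA, D, h1, h2, h3, h4⟩ := hp (max A₁ (M + 1))
    refine ⟨A, (le_max_left _ _).trans hA, D, h1, h2, h3, ?_⟩
    have hconn : IsPreconnected (Metric.closedBall (0 : ℝ × ℝ) R) :=
      (convex_closedBall _ _).isPreconnected
    by_contra hsub
    obtain ⟨q, hq, hqD⟩ := not_subset.1 hsub
    have hne : (Metric.closedBall (0 : ℝ × ℝ) R ∩ frontier D).Nonempty := by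
      by_contra hemp
      rw [not_nonempty_iff_eq_empty] at hemp
      have hcov : Metric.closedBall (0 : ℝ × ℝ) R ⊆ D ∪ (closure D)ᶜ := by
        intro r hr
        by_cases hrD : r ∈ D
        · exact Or.inl hrD
        · right
          intro hrc
          have : r ∈ (∅ : Set (ℝ × ℝ)) := by
            rw [← hemp]; exact ⟨hr, by rw [h1.frontier_eq]; exact ⟨hrc, hrD⟩⟩
          exact this
      obtain ⟨r, -, hr1, hr2⟩ := hconn D (closure D)ᶜ h1 isClosed_closure.isOpen_compl hcov
        ⟨p, hpR, h4⟩ ⟨q, hq, (hcov hq).resolve_left hqD⟩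
      exact hr2 (subset_closure hr1)
    obtain ⟨r, hr1, hr2⟩ := hne
    have e1 : F r = A := h3 hr2
    have e2 : F r ≤ M := hM ⟨r, hr1, rfl⟩
    have e3 : M + 1 ≤ A := (le_max_right _ _).trans hA
    linarith
  obtain ⟨R₁, hR₁⟩ := hfin.isBounded.subset_closedBall (0 : ℝ × ℝ)
  obtain ⟨A₁, hA₁, D₁, ho₁, hb₁, hf₁, hs₁⟩ := hsw (max R₁ (dist p 0)) (le_max_right _ _) (t + 1)
  obtain ⟨z, hz, hzD⟩ : ∃ z, F z = t ∧ z ∉ closure D₁ := by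
    by_contra hno
    push Not at hno
    exact hnc (hb₁.isCompact_closure.of_isClosed_subset (isClosed_eq hFc continuous_const)
      fun z hz => hno z hz)
  obtain ⟨R₂, hR₂⟩ := (hb₁.isCompact_closure.isBounded).subset_closedBall (0 : ℝ × ℝ)
  obtain ⟨A₂, hA₂, D₂, ho₂, hb₂, hf₂, hs₂⟩ := hsw (max (dist z 0) (dist p 0))
    (le_max_right _ _) A₁
  have hzD₂ : z ∈ D₂ := hs₂ (Metric.mem_closedBall.2 (le_max_left _ _))
  set G := D₂ \ closure D₁ with hG
  have hGo : IsOpen G := ho₂.sdiff isClosed_closure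
  have hGc : IsCompact (closure G) := (hb₂.subset sdiff_subset).isCompact_closure
  obtain ⟨m, hm, hmin⟩ := hGc.exists_isMinOn ⟨z, subset_closure ⟨hzD₂, hzD⟩⟩ hFc.continuousOn
  have hmt : F m ≤ t := by rw [← hz]; exact hmin (subset_closure ⟨hzD₂, hzD⟩)
  have hmG : m ∈ G := by
    by_contra hmG
    have hm2 : m ∈ closure D₂ := closure_mono sdiff_subset hm
    have hm1 : m ∉ D₁ := by
      intro h
      obtain ⟨w, hw1, hw2⟩ := mem_closure_iff.1 hm D₁ ho₁ h
      exact hw2.2 (subset_closure hw1)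
    by_cases h1 : m ∈ closure D₁
    · have : F m = A₁ := hf₁ (by rw [ho₁.frontier_eq]; exact ⟨h1, hm1⟩)
      linarith
    · have h2 : m ∉ D₂ := fun h => hmG ⟨h, h1⟩
      have : F m = A₂ := hf₂ (by rw [ho₂.frontier_eq]; exact ⟨hm2, h2⟩)
      linarith
  have hcrit : fderiv ℝ F m = 0 := IsLocalMin.fderiv_eq_zero (by
    filter_upwards [hGo.mem_nhds hmG] with q hq using hmin (subset_closure hq))
  have : m ∈ D₁ := hs₁ (Metric.closedBall_subset_closedBall (le_max_left _ _) (hR₁ hcrit))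
  exact hmG.2 (subset_closure this)

open Set Topology in
lemma comp_abs (F : ℝ × ℝ → ℝ) (hF : Continuous F) (A : ℝ) (hA : 0 < A) (p : ℝ × ℝ) (hp : F p = A) :
    connectedComponentIn {p | |F p| = A} p = connectedComponentIn {p | F p = A} p := by
  apply subset_antisymm
  · refine (isPreconnected_connectedComponentIn).subset_connectedComponentIn
      (mem_connectedComponentIn (by change |F p| = A; rw [hp, abs_of_pos hA])) ?_
    intro q hq
    have hqA : |F q| = A := connectedComponentIn_subset {p | |F p| = A} p hq
    rcases eq_or_eq_neg_of_abs_eq hqA with h | h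
    · exact h
    · exfalso
      obtain ⟨r, hr, hr0⟩ := (isPreconnected_connectedComponentIn
        (F := {p | |F p| = A}) (x := p)).intermediate_value hq
        (mem_connectedComponentIn (by change |F p| = A; rw [hp, abs_of_pos hA])) hF.continuousOn
        (show (0 : ℝ) ∈ Icc (F q) (F p) from ⟨by linarith, by linarith⟩)
      have : |F r| = A := connectedComponentIn_subset {p | |F p| = A} p hr
      rw [hr0, abs_zero] at this; linarith
  · apply connectedComponentIn_mono
    intro q hq
    change |F q| = A
    rw [show F q = A from hq, abs_of_pos hA]

open Set Topology in
lemma no_ovals_abs (F : ℝ × ℝ → ℝ) (hF : ContDiff ℝ 2 F)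
    (hfin : {p | fderiv ℝ F p = 0}.Finite) (t : ℝ) (hnc : ¬ IsCompact {p | F p = t}) :
    ∃ A₀, ∀ A ≥ A₀, ∀ p ∈ {p | |F p| = A}, ¬ IsCompact (connectedComponentIn {p | |F p| = A} p) := by
  obtain ⟨A₁, h1⟩ := no_ovals F hF hfin t hnc
  obtain ⟨A₂, h2⟩ := no_ovals (-F) hF.neg (by simpa [fderiv_neg] using hfin) (-t) (by simpa using hnc)
  refine ⟨max 1 (max A₁ A₂), fun A hA p hp => ?_⟩
  have hA0 : 0 < A := by linarith [le_max_left 1 (max A₁ A₂)]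
  have hA1 : A₁ ≤ A := by linarith [le_max_left A₁ A₂, le_max_right 1 (max A₁ A₂)]
  have hA2 : A₂ ≤ A := by linarith [le_max_right A₁ A₂, le_max_right 1 (max A₁ A₂)]
  rcases eq_or_eq_neg_of_abs_eq (show |F p| = A from hp) with h | h
  · rw [comp_abs F hF.continuous A hA0 p h]
    exact h1 A hA1 p h
  · have h' : (-F) p = A := by simp [h]
    have := comp_abs (-F) hF.continuous.neg A hA0 p h'
    simp only [Pi.neg_apply, abs_neg] at this
    rw [this]
    exact h2 A hA2 p h'

open Polynomial in
lemma discr_eq_of_monic (f : ℝ[X]) (hf : f.Monic) (ha : 0 < f.natDegree) :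
    f.discr = (-1) ^ (f.natDegree * (f.natDegree - 1) / 2) *
      resultant f f.derivative f.natDegree (f.natDegree - 1) := by
  rw [resultant_deriv (natDegree_pos_iff_degree_pos.1 ha), hf.leadingCoeff, mul_one, ← mul_assoc,
    ← mul_pow]
  simp

open Polynomial in
lemma discr_mul_monic (f g : ℝ[X]) (hf : f.Monic) (hg : g.Monic) (ha : 0 < f.natDegree)
    (hb : 0 < g.natDegree) :
    (f * g).discr = f.discr * g.discr * (resultant f g) ^ 2 := by
  have hdeg : (f * g).natDegree = f.natDegree + g.natDegree := hf.natDegree_mul hg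
  have key : resultant (f * g) (f * g).derivative (f.natDegree + g.natDegree)
      (f.natDegree + g.natDegree - 1) = (-1) ^ (f.natDegree * g.natDegree) *
      resultant f f.derivative f.natDegree (f.natDegree - 1) *
      resultant g g.derivative g.natDegree (g.natDegree - 1) * (resultant f g) ^ 2 := by
    have hf' : f.derivative.natDegree = f.natDegree - 1 := natDegree_derivative _
    have hg' : g.derivative.natDegree = g.natDegree - 1 := natDegree_derivative _
    have hle : (derivative (f * g)).natDegree ≤ f.natDegree + g.natDegree - 1 := by
      rw [← hdeg]; exact natDegree_derivative_le _
    rw [resultant_mul_left _ _ _ _ hle]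
    have h1 : resultant f (derivative (f * g)) f.natDegree (f.natDegree + g.natDegree - 1) =
        resultant f f.derivative f.natDegree (f.natDegree - 1) * resultant f g := by
      rw [derivative_mul, resultant_add_mul_right _ _ _ _ _ (by omega) le_rfl]
      have := resultant_mul_right f f.derivative g f.natDegree le_rfl
      rw [hf'] at this
      rw [← this]
      congr 1; omega
    have h2 : resultant g (derivative (f * g)) g.natDegree (f.natDegree + g.natDegree - 1) =
        resultant g g.derivative g.natDegree (g.natDegree - 1) * resultant g f := by
      rw [mul_comm f g, derivative_mul, resultant_add_mul_right _ _ _ _ _ (by omega) le_rfl]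
      have := resultant_mul_right g g.derivative f g.natDegree le_rfl
      rw [hg'] at this
      rw [← this]
      congr 1; omega
    rw [h1, h2, resultant_comm g f, mul_comm g.natDegree f.natDegree]
    ring
  rw [discr_eq_of_monic _ (hf.mul hg) (by omega), discr_eq_of_monic _ hf ha,
    discr_eq_of_monic _ hg hb, hdeg, key]
  have hexp : (f.natDegree + g.natDegree) * (f.natDegree + g.natDegree - 1) / 2 =
      f.natDegree * (f.natDegree - 1) / 2 + g.natDegree * (g.natDegree - 1) / 2 +
        f.natDegree * g.natDegree := by
    obtain ⟨a, ha'⟩ := Nat.exists_eq_succ_of_ne_zero ha.ne'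
    obtain ⟨b, hb'⟩ := Nat.exists_eq_succ_of_ne_zero hb.ne'
    rw [ha', hb']
    obtain ⟨c, hc⟩ := Nat.even_mul_succ_self a
    obtain ⟨e, he⟩ := Nat.even_mul_succ_self b
    simp only [Nat.succ_eq_add_one, Nat.add_sub_cancel] at *
    have h1 : (a + 1) * a = 2 * c := by linarith
    have h2 : (b + 1) * b = 2 * e := by linarith
    have h3 : (a + 1 + (b + 1)) * (a + 1 + (b + 1) - 1) = 2 * (c + e + (a + 1) * (b + 1)) := by
      rw [show a + 1 + (b + 1) - 1 = a + b + 1 by omega]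
      nlinarith
    rw [h1, h2, h3]
    simp
  rw [hexp, pow_add, pow_add]
  have hs : ((-1 : ℝ) ^ (f.natDegree * g.natDegree)) * (-1) ^ (f.natDegree * g.natDegree) = 1 := by
    rw [← mul_pow]; simp
  linear_combination ((-1 : ℝ) ^ (f.natDegree * (f.natDegree - 1) / 2) *
    (-1) ^ (g.natDegree * (g.natDegree - 1) / 2) *
    resultant f f.derivative f.natDegree (f.natDegree - 1) *
    resultant g g.derivative g.natDegree (g.natDegree - 1) * (resultant f g) ^ 2) * hs

open Polynomial in
/-- Sign of the discriminant versus number of real roots. -/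
lemma discr_sign (d : ℕ) : ∀ p : ℝ[X], p.Monic → p.natDegree = d → p.discr ≠ 0 →
    ∃ k : ℕ, d = p.roots.toFinset.card + 2 * k ∧ 0 < (-1) ^ k * p.discr := by
  induction d using Nat.strong_induction_on with
  | _ d ih =>
  intro p hp hpd hdisc
  rcases Nat.eq_zero_or_pos d with h0 | hpos
  · subst h0
    have : p = 1 := hp.natDegree_eq_zero.1 hpd
    subst this
    refine ⟨0, by simp, ?_⟩
    have := discr_C (1 : ℝ)
    rw [map_one] at this
    simp [this]
  by_cases hroot : ∃ r, p.IsRoot r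
  · obtain ⟨r, hr⟩ := hroot
    obtain ⟨q, hq⟩ := dvd_iff_isRoot.2 hr
    have hqm : q.Monic := (monic_X_sub_C r).of_mul_monic_left (hq ▸ hp)
    have hqd : q.natDegree = d - 1 := by
      have := (monic_X_sub_C r).natDegree_mul hqm
      rw [← hq, natDegree_X_sub_C] at this; omega
    rcases Nat.eq_zero_or_pos q.natDegree with hq0 | hqpos
    · have hq1 : q = 1 := hqm.natDegree_eq_zero.1 hq0
      rw [hq1, mul_one] at hq
      refine ⟨0, ?_, ?_⟩
      · rw [hq, roots_X_sub_C]; simp; omega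
      · rw [hq, discr_of_degree_eq_one (degree_X_sub_C r)]; simp
    · have hm := discr_mul_monic (Polynomial.X - Polynomial.C r) q (monic_X_sub_C r) hqm (by simp) hqpos
      rw [← hq, discr_of_degree_eq_one (degree_X_sub_C r), one_mul] at hm
      have hqdisc : q.discr ≠ 0 := fun h => hdisc (by rw [hm, h, zero_mul])
      have hres : resultant (Polynomial.X - Polynomial.C r) q ≠ 0 := fun h => hdisc (by rw [hm, h]; simp)
      have hqr : ¬ q.IsRoot r := by
        rw [natDegree_X_sub_C, resultant_X_sub_C_left _ _ _ le_rfl] at hres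
        exact hres
      obtain ⟨k, hk1, hk2⟩ := ih (d - 1) (by omega) q hqm hqd hqdisc
      refine ⟨k, ?_, ?_⟩
      · rw [hq, roots_mul (hq ▸ hp.ne_zero), roots_X_sub_C, Multiset.toFinset_add,
          Multiset.toFinset_singleton, Finset.singleton_union, Finset.card_insert_of_notMem]
        · omega
        · simpa [hqm.ne_zero] using hqr
      · rw [hm, ← mul_assoc]
        exact mul_pos hk2 (by positivity)
  · push Not at hroot
    obtain ⟨z, hz⟩ : ∃ z : ℂ, aeval z p = 0 :=
      IsAlgClosed.exists_aeval_eq_zero _ p (natDegree_pos_iff_degree_pos.1 (hpd ▸ hpos)).ne'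
    have hzim : z.im ≠ 0 := by
      intro h
      have hz' : z = (z.re : ℂ) := Complex.ext rfl (by simp [h])
      apply hroot z.re
      rw [hz'] at hz
      have h2 := (Polynomial.aeval_algebraMap_apply ℂ z.re p)
      simp only [Complex.coe_algebraMap] at h2
      rw [h2] at hz
      simpa using hz
    obtain ⟨q, hq⟩ := quadratic_dvd_of_aeval_eq_zero_im_ne_zero p hz hzim
    set Q : ℝ[X] := Polynomial.X ^ 2 - Polynomial.C (2 * z.re) * Polynomial.X + Polynomial.C (‖z‖ ^ 2) with hQ
    have hQ' : Q = Polynomial.C 1 * Polynomial.X ^ 2 + Polynomial.C (-(2 * z.re)) * Polynomial.X + Polynomial.C (‖z‖ ^ 2) := by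
      rw [hQ, Polynomial.C_neg, Polynomial.C_1]; ring
    have hQd : Q.natDegree = 2 := by rw [hQ']; exact natDegree_quadratic one_ne_zero
    have hQd' : Q.degree = 2 := by rw [hQ']; exact degree_quadratic one_ne_zero
    have hQm : Q.Monic := by rw [Monic, hQ']; exact leadingCoeff_quadratic one_ne_zero
    have hQdisc : Q.discr < 0 := by
      rw [discr_of_degree_eq_two hQd', hQ']
      have hn : ‖z‖ ^ 2 = z.re ^ 2 + z.im ^ 2 := by
        rw [Complex.sq_norm, Complex.normSq_apply]; ring
      simp only [Polynomial.coeff_add, Polynomial.coeff_C_mul, Polynomial.coeff_X_pow, Polynomial.coeff_X, Polynomial.coeff_C]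
      norm_num
      rw [hn]
      have : 0 < z.im ^ 2 := by positivity
      nlinarith
    have hqm : q.Monic := hQm.of_mul_monic_left (hq ▸ hp)
    have hqd : q.natDegree + 2 = d := by
      have := hQm.natDegree_mul hqm
      rw [← hq, hQd] at this; omega
    have hpr : p.roots = 0 := Multiset.eq_zero_of_forall_notMem fun r hr =>
      hroot r (isRoot_of_mem_roots hr)
    have hqr : q.roots = 0 := Multiset.eq_zero_of_forall_notMem fun r hr =>
      hroot r (by rw [hq]; exact root_mul_left_of_isRoot _ (isRoot_of_mem_roots hr))
    rcases Nat.eq_zero_or_pos q.natDegree with hq0 | hqpos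
    · have hq1 : q = 1 := hqm.natDegree_eq_zero.1 hq0
      rw [hq1, mul_one] at hq
      refine ⟨1, ?_, ?_⟩
      · rw [hpr]; simp; omega
      · rw [hq]; simpa using hQdisc
    · have hm := discr_mul_monic Q q hQm hqm (by omega) hqpos
      rw [← hq] at hm
      have hqdisc : q.discr ≠ 0 := fun h => hdisc (by rw [hm, h, mul_zero, zero_mul])
      have hres : resultant Q q ≠ 0 := fun h => hdisc (by rw [hm, h]; simp)
      obtain ⟨k, hk1, hk2⟩ := ih q.natDegree (by omega) q hqm rfl hqdisc
      refine ⟨k + 1, ?_, ?_⟩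
      · rw [hpr]; rw [hqr] at hk1; simp at hk1 ⊢; omega
      · rw [hm, pow_succ]
        have : (-1) ^ k * -1 * (Q.discr * q.discr * Q.resultant q ^ 2) =
          (-Q.discr) * ((-1) ^ k * q.discr) * Q.resultant q ^ 2 := by ring
        rw [this]
        have h3 : 0 < -Q.discr := by linarith
        positivity

open Set Topology in
lemma count_local (g g' : ℝ → ℝ) (hg : ∀ y, HasStrictDerivAt g (g' y) y)
    (hprop : Tendsto g (cocompact ℝ) (cocompact ℝ)) (t₀ : ℝ) (hfin : {y | g y = t₀}.Finite)
    (hreg : ∀ y, g y = t₀ → g' y ≠ 0) :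
    ∀ᶠ t in 𝓝 t₀, {y | g y = t}.ncard = {y | g y = t₀}.ncard := by
  have hgc : Continuous g := continuous_iff_continuousAt.2 fun y => (hg y).hasDerivAt.continuousAt
  have hclosed : IsClosedMap g :=
    (isProperMap_iff_tendsto_cocompact.2 ⟨hgc, hprop⟩).isClosedMap
  obtain ⟨U, hU, hdisj⟩ := hfin.t2_separation
  have hV : ∀ y, g y = t₀ → ∃ V : Set ℝ, IsOpen V ∧ y ∈ V ∧ V ⊆ U y ∧ InjOn g V := by
    intro y hy
    let e := ((hg y).hasStrictFDerivAt_equiv (hreg y hy)).toOpenPartialHomeomorph g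
    refine ⟨e.source ∩ U y, e.open_source.inter (hU y).2, ⟨?_, (hU y).1⟩, inter_subset_right, ?_⟩
    · exact ((hg y).hasStrictFDerivAt_equiv (hreg y hy)).mem_toOpenPartialHomeomorph_source
    · exact e.injOn.mono inter_subset_left
  choose! V hVo hyV hVU hVi using hV
  have h1 : ∀ᶠ t in 𝓝 t₀, ∀ y ∈ {y | g y = t₀}, t ∈ g '' V y := by
    rw [hfin.eventually_all]
    intro y hy
    have := (hg y).map_nhds_eq (hreg y hy)
    rw [show g y = t₀ from hy] at this
    rw [← this]
    exact image_mem_map ((hVo y hy).mem_nhds (hyV y hy))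
  have h2 : ∀ᶠ t in 𝓝 t₀, ∀ z, g z = t → ∃ y, g y = t₀ ∧ z ∈ V y := by
    have hW : IsOpen (⋃ y ∈ {y | g y = t₀}, V y) := isOpen_biUnion fun y hy => hVo y hy
    have hcl := hclosed _ hW.isClosed_compl
    have hn : t₀ ∉ g '' (⋃ y ∈ {y | g y = t₀}, V y)ᶜ := by
      rintro ⟨y, hy, hyt⟩
      exact hy (mem_biUnion (show y ∈ {y | g y = t₀} from hyt) (hyV y hyt))
    filter_upwards [hcl.isOpen_compl.mem_nhds hn] with t ht z hz
    by_contra hno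
    push Not at hno
    refine ht ⟨z, ?_, hz⟩
    intro hzW
    obtain ⟨y, hy, hzy⟩ := mem_iUnion₂.1 hzW
    exact hno y hy hzy
  filter_upwards [h1, h2] with t ht1 ht2
  choose! r hrV hrt using ht1
  have himg : {y | g y = t} = r '' {y | g y = t₀} := by
    apply subset_antisymm
    · intro z hz
      obtain ⟨y, hy, hzy⟩ := ht2 z hz
      refine ⟨y, hy, hVi y hy (hrV y hy) hzy ?_⟩
      rw [hrt y hy]; exact hz.symm
    · rintro _ ⟨y, hy, rfl⟩
      exact hrt y hy
  rw [himg]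
  apply InjOn.ncard_image
  intro y hy y' hy' hrr
  by_contra hne
  have := hdisj hy hy' hne
  exact Set.disjoint_left.1 this (hVU y hy (hrV y hy)) (by
    have := hVU y' hy' (hrV y' hy')
    rw [← hrr] at this; exact this)

open Set Topology in
lemma poly_fiber (g : Polynomial ℝ) (hg : 0 < g.natDegree) (t : ℝ) :
    {y | g.eval y = t} = ((g - Polynomial.C t).roots.toFinset : Set ℝ) := by
  have hne : g - Polynomial.C t ≠ 0 := by
    intro h
    have := Polynomial.natDegree_sub_C (p := g) (a := t)
    rw [h] at this; simp at this; omega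
  ext y
  simp [hne, sub_eq_zero]

open Set Topology in
lemma root_count_const (g : Polynomial ℝ) (hg : 0 < g.natDegree) (a b : ℝ) (hab : a ≤ b)
    (h : ∀ t ∈ Icc a b, ∀ y, g.eval y = t → g.derivative.eval y ≠ 0) :
    {y | g.eval y = a}.ncard = {y | g.eval y = b}.ncard := by
  have hfin : ∀ t, {y | g.eval y = t}.Finite := fun t => by
    rw [poly_fiber g hg]; exact Finset.finite_toSet _
  have hprop : Tendsto (fun y => g.eval y) (cocompact ℝ) (cocompact ℝ) := by
    have h0 : Tendsto (fun y : ℝ => ‖y‖) (cocompact ℝ) atTop := tendsto_norm_cocompact_atTop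
    have := Polynomial.tendsto_norm_atTop g (Polynomial.natDegree_pos_iff_degree_pos.1 hg) h0
    rw [tendsto_norm_atTop_iff_cobounded, Metric.cobounded_eq_cocompact] at this
    exact this
  have hc : ContinuousOn (fun t => {y | g.eval y = t}.ncard) (Icc a b) := by
    intro t ht
    apply ContinuousAt.continuousWithinAt
    have := count_local (fun y => g.eval y) (fun y => g.derivative.eval y)
      (fun y => g.hasStrictDerivAt y) hprop t (hfin t) (h t ht)
    exact (continuousAt_const (y := {y | g.eval y = t}.ncard)).congr
      (this.mono fun s hs => hs.symm)
  exact isPreconnected_Icc.constant hc ⟨le_rfl, hab⟩ ⟨hab, le_rfl⟩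

open Set Topology in
lemma tube_pos (H : ℝ × ℝ → ℝ) (hH : Continuous H) (K : Set ℝ) (hK : IsCompact K)
    (h : ∀ k ∈ K, 0 < H (0, k)) : ∃ δ > 0, ∀ u, |u| < δ → ∀ k ∈ K, 0 < H (u, k) := by
  obtain ⟨u, v, hu, hv, h0, hKv, huv⟩ := generalized_tube_lemma (isCompact_singleton (x := (0 : ℝ))) hK
    (isOpen_lt continuous_const hH : IsOpen {p | 0 < H p}) (by
      rintro ⟨a, k⟩ ⟨ha, hk⟩
      rw [mem_singleton_iff] at ha
      simp only at ha
      subst ha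
      exact h k hk)
  obtain ⟨δ, hδ, hb⟩ := Metric.isOpen_iff.1 hu 0 (h0 rfl)
  refine ⟨δ, hδ, fun w hw k hk => ?_⟩
  exact huv (show (w, k) ∈ u ×ˢ v from ⟨hb (by simpa using hw), hKv hk⟩)

lemma evalEval_cont (P : Polynomial (Polynomial ℝ)) :
    ContDiff ℝ 2 (fun p : ℝ × ℝ => P.evalEval p.1 p.2) := by
  induction P using Polynomial.induction_on' with
  | add p q hp hq => simpa [Polynomial.evalEval_add] using hp.add hq
  | monomial n a =>
    simp only [← Polynomial.C_mul_X_pow_eq_monomial, Polynomial.evalEval_mul,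
      Polynomial.evalEval_C, Polynomial.evalEval_pow, Polynomial.evalEval_X]
    refine ContDiff.mul ?_ (contDiff_snd.pow _)
    exact (Polynomial.contDiff_aeval a 2).comp contDiff_fst

lemma evalEval_reverse (P : Polynomial (Polynomial ℝ)) (x y : ℝ) (hy : y ≠ 0) :
    P.evalEval x y = P.reverse.evalEval x y⁻¹ * y ^ P.natDegree := by
  have := invertibleOfNonzero hy
  have h := Polynomial.eval₂_reverse_mul_pow (Polynomial.evalRingHom x) y P
  rw [invOf_eq_inv] at h
  rw [Polynomial.eval₂_evalRingHom] at h
  exact h.symm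

lemma evalEval_reverse_zero (P : Polynomial (Polynomial ℝ)) (x : ℝ) :
    P.reverse.evalEval x 0 = P.leadingCoeff.eval x := by
  simp [Polynomial.evalEval, ← Polynomial.coeff_zero_eq_eval_zero]

open Set Topology in
lemma sign_at_infinity (P : Polynomial (Polynomial ℝ)) (K : Set ℝ) (hK : IsCompact K)
    (h : ∀ k ∈ K, P.leadingCoeff.eval k ≠ 0) :
    ∃ X₀ > 0, ∀ x, X₀ < |x| → ∀ k ∈ K,
      0 < P.evalEval k x * x ^ P.natDegree * P.leadingCoeff.eval k := by
  obtain ⟨δ, hδ, hd⟩ := tube_pos (fun p => P.reverse.evalEval p.2 p.1 * P.leadingCoeff.eval p.2)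
    (((evalEval_cont P.reverse).continuous.comp continuous_swap).mul
      (P.leadingCoeff.continuous.comp continuous_snd)) K hK (by
      intro k hk
      simp only
      rw [evalEval_reverse_zero]
      exact mul_self_pos.2 (h k hk))
  refine ⟨δ⁻¹, by positivity, fun x hx k hk => ?_⟩
  have hx0 : x ≠ 0 := by
    intro h; rw [h, abs_zero] at hx
    exact absurd hx (not_lt.2 (by positivity))
  have := hd x⁻¹ (by rw [abs_inv]; exact inv_lt_of_inv_lt₀ hδ hx) k hk
  simp only at this
  rw [evalEval_reverse P k x hx0]
  have h2 : 0 < (x ^ P.natDegree) ^ 2 := by positivity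
  nlinarith [mul_pos this h2]

open Set Topology in
lemma monic_bdd (P : Polynomial (Polynomial ℝ)) (hP : P.Monic) (hd : 0 < P.natDegree) (A Y : ℝ) :
    Bornology.IsBounded {p : ℝ × ℝ | |P.evalEval p.1 p.2| = A ∧ |p.1| ≤ Y} := by
  obtain ⟨δ, hδ, h⟩ := tube_pos (fun p => (P.reverse.evalEval p.2 p.1) ^ 2 -
      A ^ 2 * (p.1 ^ P.natDegree) ^ 2)
    ((((evalEval_cont P.reverse).continuous.comp continuous_swap).pow 2).sub
      (by fun_prop)) (Icc (-Y) Y) isCompact_Icc (by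
      intro k hk
      simp only
      rw [evalEval_reverse_zero, hP.leadingCoeff, zero_pow hd.ne']
      simp)
  refine (Metric.isBounded_Icc (-Y) Y).prod (Metric.isBounded_Icc (-δ⁻¹) δ⁻¹) |>.subset ?_
  rintro ⟨x, y⟩ ⟨h1, h2⟩
  simp only at h1 h2
  refine ⟨abs_le.1 h2, abs_le.1 ?_⟩
  by_contra hlt
  push Not at hlt
  simp only at hlt
  have hy0 : y ≠ 0 := by
    intro h; rw [h, abs_zero] at hlt
    exact absurd hlt (not_lt.2 (by positivity))
  have := h y⁻¹ (by rw [abs_inv]; exact inv_lt_of_inv_lt₀ hδ hlt) x (abs_le.1 h2)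
  simp only at this
  rw [evalEval_reverse P x y hy0] at h1
  have h3 : (P.reverse.evalEval x y⁻¹ * y ^ P.natDegree) ^ 2 = A ^ 2 := by rw [← h1, sq_abs]
  have h4 : 0 < (y ^ P.natDegree) ^ 2 := by positivity
  have h5 : (y⁻¹ ^ P.natDegree) * (y ^ P.natDegree) = 1 := by rw [← mul_pow]; simp [hy0]
  have h6 := mul_pos this h4
  have h7 : (P.reverse.evalEval x y⁻¹ ^ 2 - A ^ 2 * (y⁻¹ ^ P.natDegree) ^ 2) *
    (y ^ P.natDegree) ^ 2 = (P.reverse.evalEval x y⁻¹ * y ^ P.natDegree) ^ 2 -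
      A ^ 2 * ((y⁻¹ ^ P.natDegree) * (y ^ P.natDegree)) ^ 2 := by ring
  rw [h7, h3, h5] at h6
  linarith

lemma discr_ne_zero_iff (g : Polynomial ℝ) (hg : g.Monic) (hd : 0 < g.natDegree) :
    g.discr ≠ 0 ↔ IsCoprime g g.derivative := by
  have h := Polynomial.resultant_eq_zero_iff (f := g) (g := g.derivative)
  rw [Polynomial.natDegree_derivative] at h
  rw [discr_eq_of_monic g hg hd, mul_ne_zero_iff]
  have h1 : g ≠ 0 := hg.ne_zero
  have h2 : ((-1 : ℝ) ^ (g.natDegree * (g.natDegree - 1) / 2)) ≠ 0 := by simp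
  simp only [ne_eq, h, h1, h2]
  simp

lemma monic_fiber (P : Polynomial (Polynomial ℝ)) (hP : P.Monic) (hd : 0 < P.natDegree) (x t : ℝ) :
    (P.map (Polynomial.evalRingHom x) - Polynomial.C t).Monic ∧
    (P.map (Polynomial.evalRingHom x) - Polynomial.C t).natDegree = P.natDegree := by
  have h1 : (P.map (Polynomial.evalRingHom x)).natDegree = P.natDegree := hP.natDegree_map _
  have h2 : (P.map (Polynomial.evalRingHom x)).Monic := hP.map _
  refine ⟨?_, by rw [Polynomial.natDegree_sub_C, h1]⟩
  apply h2.sub_of_left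
  apply lt_of_le_of_lt Polynomial.degree_C_le
  rw [← Polynomial.natDegree_pos_iff_degree_pos, h1]; exact hd

lemma discr_poly (P : Polynomial (Polynomial ℝ)) (hP : P.Monic) (hd : 0 < P.natDegree) :
    ∃ D : Polynomial (Polynomial ℝ), D ≠ 0 ∧ ∀ x t, D.evalEval t x =
      (P.map (Polynomial.evalRingHom x) - Polynomial.C t).discr := by
  set Pt : Polynomial (Polynomial (Polynomial ℝ)) :=
    P.map (Polynomial.mapRingHom Polynomial.C) - Polynomial.C (Polynomial.C Polynomial.X) with hPt
  have key : ∀ x t, ((-1) ^ (P.natDegree * (P.natDegree - 1) / 2) *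
      Polynomial.resultant Pt Pt.derivative P.natDegree (P.natDegree - 1)).evalEval t x =
      (P.map (Polynomial.evalRingHom x) - Polynomial.C t).discr := by
    intro x t
    obtain ⟨hm, hdeg⟩ := monic_fiber P hP hd x t
    rw [discr_eq_of_monic _ hm (by omega), hdeg]
    have hmap : Pt.map (Polynomial.evalEvalRingHom t x) =
        P.map (Polynomial.evalRingHom x) - Polynomial.C t := by
      rw [hPt, Polynomial.map_sub, Polynomial.map_map, Polynomial.map_C]
      congr 2
      · ext <;> simp
      · simp
    rw [← hmap, Polynomial.derivative_map, Polynomial.resultant_map_map]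
    rw [← Polynomial.coe_evalEvalRingHom, map_mul, map_pow, map_neg, map_one]
  refine ⟨_, ?_, key⟩
  intro h0
  rw [h0] at key
  -- choose a good t over x = 0
  set g := P.map (Polynomial.evalRingHom (0 : ℝ)) with hg
  have hgd : g.natDegree = P.natDegree := hP.natDegree_map _
  have hg' : g.derivative ≠ 0 := by
    intro h
    have := Polynomial.derivative_eq_zero.1 h
    omega
  have hfin : ((fun z : ℂ => (Polynomial.aeval z g).re) ''
      (((g.derivative.map (algebraMap ℝ ℂ)).roots.toFinset : Set ℂ))).Finite :=
    (Finset.finite_toSet _).image _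
  obtain ⟨t, ht⟩ := hfin.exists_notMem
  have hd0 : (g - Polynomial.C t).discr ≠ 0 := by
    obtain ⟨hm, hdeg⟩ := monic_fiber P hP hd 0 t
    rw [discr_ne_zero_iff _ hm (by omega), Polynomial.isCoprime_iff_aeval_ne_zero_of_isAlgClosed ℝ ℂ]
    intro z
    by_contra hcon
    push Not at hcon
    obtain ⟨e1, e2⟩ := hcon
    apply ht
    refine ⟨z, ?_, ?_⟩
    · simp only [Polynomial.derivative_sub, Polynomial.derivative_C, sub_zero] at e2
      simp only [Finset.mem_coe, Multiset.mem_toFinset]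
      rw [Polynomial.mem_roots (by simpa using hg')]
      rw [Polynomial.IsRoot, Polynomial.eval_map_algebraMap]
      exact e2
    · rw [map_sub, sub_eq_zero] at e1
      simp only
      rw [e1]; simp
  apply hd0
  rw [← key 0 t]
  simp

open Set Topology in
lemma comp_closed {Z : Set (ℝ × ℝ)} (hZ : IsClosed Z) (p : ℝ × ℝ) (hp : p ∈ Z) :
    IsClosed (connectedComponentIn Z p) := by
  rw [← closure_subset_iff_isClosed]
  exact (isPreconnected_connectedComponentIn.closure).subset_connectedComponentIn
    (subset_closure (mem_connectedComponentIn hp))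
    (hZ.closure_subset_iff.2 (connectedComponentIn_subset _ _))

/-- The number of points of the fibre `F(x, ·) = t`. -/
noncomputable def fibCount (P : Polynomial (Polynomial ℝ)) (x t : ℝ) : ℕ :=
  {y : ℝ | P.evalEval x y = t}.ncard

lemma fib_eq (P : Polynomial (Polynomial ℝ)) (hP : P.Monic) (hd : 0 < P.natDegree) (x t : ℝ) :
    {y : ℝ | P.evalEval x y = t} =
      ((P.map (Polynomial.evalRingHom x) - Polynomial.C t).roots.toFinset : Set ℝ) := by
  rw [← poly_fiber _ (by rw [hP.natDegree_map]; exact hd)]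
  simp only [Polynomial.map_evalRingHom_eval]

lemma fibCount_eq (P : Polynomial (Polynomial ℝ)) (hP : P.Monic) (hd : 0 < P.natDegree) (x t : ℝ) :
    fibCount P x t = (P.map (Polynomial.evalRingHom x) - Polynomial.C t).roots.toFinset.card := by
  rw [fibCount, fib_eq P hP hd, Set.ncard_coe_finset]

lemma fib_finite (P : Polynomial (Polynomial ℝ)) (hP : P.Monic) (hd : 0 < P.natDegree) (x t : ℝ) :
    {y : ℝ | P.evalEval x y = t}.Finite := by
  rw [fib_eq P hP hd]; exact Finset.finite_toSet _

open Set in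
lemma four_decomp (P : Polynomial (Polynomial ℝ)) (A X : ℝ) (hA : 0 < A) (hX : 0 < X) :
    {p : ℝ × ℝ | |P.evalEval p.1 p.2| = A ∧ |p.1| = X} =
      ((Prod.mk X '' {y : ℝ | P.evalEval X y = A}) ∪ (Prod.mk X '' {y : ℝ | P.evalEval X y = -A})) ∪
      ((Prod.mk (-X) '' {y : ℝ | P.evalEval (-X) y = A}) ∪
        (Prod.mk (-X) '' {y : ℝ | P.evalEval (-X) y = -A})) := by
  ext ⟨x, y⟩
  simp only [mem_ofPred_eq, mem_union, mem_image, Prod.mk.injEq]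
  rw [abs_eq hA.le, abs_eq hX.le]
  constructor
  · rintro ⟨h1, rfl | rfl⟩
    · left
      rcases h1 with h | h
      · exact Or.inl ⟨y, h, rfl, rfl⟩
      · exact Or.inr ⟨y, h, rfl, rfl⟩
    · right
      rcases h1 with h | h
      · exact Or.inl ⟨y, h, rfl, rfl⟩
      · exact Or.inr ⟨y, h, rfl, rfl⟩
  · rintro ((⟨y, h, rfl, rfl⟩ | ⟨y, h, rfl, rfl⟩) | (⟨y, h, rfl, rfl⟩ | ⟨y, h, rfl, rfl⟩)) <;> simp [h]

open Set in
lemma four_count (P : Polynomial (Polynomial ℝ)) (hP : P.Monic) (hd : 0 < P.natDegree)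
    (A X : ℝ) (hA : 0 < A) (hX : 0 < X) :
    {p : ℝ × ℝ | |P.evalEval p.1 p.2| = A ∧ |p.1| = X}.Finite ∧
    {p : ℝ × ℝ | |P.evalEval p.1 p.2| = A ∧ |p.1| = X}.ncard =
      fibCount P X A + fibCount P X (-A) + (fibCount P (-X) A + fibCount P (-X) (-A)) := by
  have hf := fib_finite P hP hd
  have hi : ∀ x t, (Prod.mk x '' {y : ℝ | P.evalEval x y = t}).Finite := fun x t => (hf x t).image _
  have hc : ∀ x t, (Prod.mk x '' {y : ℝ | P.evalEval x y = t}).ncard = fibCount P x t := fun x t =>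
    ncard_image_of_injective _ (Prod.mk_right_injective x)
  rw [four_decomp P A X hA hX]
  refine ⟨((hi _ _).union (hi _ _)).union ((hi _ _).union (hi _ _)), ?_⟩
  have hdis : ∀ x, Disjoint (Prod.mk x '' {y : ℝ | P.evalEval x y = A})
      (Prod.mk x '' {y : ℝ | P.evalEval x y = -A}) := by
    intro x
    rw [Set.disjoint_left]
    rintro _ ⟨y, hy, rfl⟩ ⟨y', hy', h⟩
    simp only [Prod.mk.injEq, true_and] at h
    subst h
    have h1 : P.evalEval x y' = A := hy
    have h2 : P.evalEval x y' = -A := hy'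
    linarith
  rw [ncard_union_eq _ ((hi _ _).union (hi _ _)) ((hi _ _).union (hi _ _)),
    ncard_union_eq (hdis X) (hi _ _) (hi _ _), ncard_union_eq (hdis (-X)) (hi _ _) (hi _ _)]
  · simp only [hc]
  · rw [Set.disjoint_left]
    rintro _ (⟨y, hy, rfl⟩ | ⟨y, hy, rfl⟩) (⟨y', hy', h⟩ | ⟨y', hy', h⟩) <;>
    · simp only [Prod.mk.injEq] at h
      linarith [h.1]

lemma fderiv_evalEval_snd (P : Polynomial (Polynomial ℝ)) (p : ℝ × ℝ) :
    fderiv ℝ (fun p : ℝ × ℝ => P.evalEval p.1 p.2) p (0, 1) =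
      (P.map (Polynomial.evalRingHom p.1)).derivative.eval p.2 := by
  have h1 : HasFDerivAt (fun p : ℝ × ℝ => P.evalEval p.1 p.2)
      (fderiv ℝ (fun p : ℝ × ℝ => P.evalEval p.1 p.2) p) (p.1, p.2) :=
    ((evalEval_cont P).differentiable (by norm_num) p).hasFDerivAt
  have h2 : HasDerivAt (fun y : ℝ => (p.1, y)) ((0, 1) : ℝ × ℝ) p.2 :=
    (hasDerivAt_const p.2 p.1).prodMk (hasDerivAt_id p.2)
  have h3 := h1.comp_hasDerivAt p.2 h2
  have h4 := (P.map (Polynomial.evalRingHom p.1)).hasDerivAt p.2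
  refine h3.unique (h4.congr_of_eventuallyEq ?_)
  filter_upwards with y
  simp [Polynomial.map_evalRingHom_eval]

open Set in
lemma four_parity (d n₁ n₂ n₃ n₄ k₁ k₂ k₃ k₄ c : ℕ) (D₁ D₂ D₃ D₄ : ℝ)
    (h1 : d = n₁ + 2 * k₁) (h2 : d = n₂ + 2 * k₂) (h3 : d = n₃ + 2 * k₃) (h4 : d = n₄ + 2 * k₄)
    (e1 : 0 < (-1) ^ k₁ * D₁) (e2 : 0 < (-1) ^ k₂ * D₂) (e3 : 0 < (-1) ^ k₃ * D₃)
    (e4 : 0 < (-1) ^ k₄ * D₄) (hD : 0 < D₁ * D₂ * (D₃ * D₄))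
    (hc : 2 * c = n₁ + n₂ + (n₃ + n₄)) : Even c := by
  have h := mul_pos (mul_pos e1 e2) (mul_pos e3 e4)
  have h' : (-1) ^ k₁ * D₁ * ((-1) ^ k₂ * D₂) * ((-1) ^ k₃ * D₃ * ((-1) ^ k₄ * D₄)) =
    (-1) ^ (k₁ + k₂ + k₃ + k₄) * (D₁ * D₂ * (D₃ * D₄)) := by ring
  rw [h'] at h
  have hs : (0 : ℝ) < (-1) ^ (k₁ + k₂ + k₃ + k₄) := pos_of_mul_pos_left h hD.le
  rcases Nat.even_or_odd (k₁ + k₂ + k₃ + k₄) with he | ho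
  · obtain ⟨m, hm⟩ := he
    refine ⟨d - m, ?_⟩
    omega
  · rw [ho.neg_one_pow] at hs
    norm_num at hs

open Set Topology in
theorem core_thm (P : Polynomial (Polynomial ℝ)) (hP : P.Monic) (hd : 0 < P.natDegree)
    (F : ℝ × ℝ → ℝ) (hF : F = fun p => P.evalEval p.1 p.2)
    (hfin : {p | fderiv ℝ F p = 0}.Finite) (t : ℝ) (hnc : ¬ IsCompact {p | F p = t}) :
    ∃ A₀ : ℝ, 0 < A₀ ∧ ∃ N : ℕ, 1 ≤ N ∧ ∀ A : ℝ, A₀ ≤ A →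
      Nat.card (ConnectedComponents ↥{p : ℝ × ℝ | |F p| = A}) = 2 * N ∧
      ∀ p ∈ {p : ℝ × ℝ | |F p| = A}, ¬ IsCompact (connectedComponentIn {p : ℝ × ℝ | |F p| = A} p) := by
  have hFC : ContDiff ℝ 2 F := by rw [hF]; exact evalEval_cont P
  obtain ⟨B, hB⟩ := no_ovals_abs F hFC hfin t hnc
  obtain ⟨D, hD0, hD⟩ := discr_poly P hP hd
  obtain ⟨K, hK⟩ : ∃ K, ∀ p, fderiv ℝ F p = 0 → |F p| < K := by
    obtain ⟨K, hK⟩ := (hfin.image fun p => |F p|).bddAbove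
    exact ⟨K + 1, fun p hp => by linarith [hK ⟨p, hp, rfl⟩]⟩
  obtain ⟨T, hT⟩ : ∃ T, ∀ s : ℝ, T ≤ |s| → D.leadingCoeff.eval s ≠ 0 := by
    have hr : D.leadingCoeff ≠ 0 := by simpa using hD0
    obtain ⟨T, hT⟩ := ((Finset.finite_toSet D.leadingCoeff.roots.toFinset).image fun s => |s|).bddAbove
    refine ⟨T + 1, fun s hs h0 => ?_⟩
    have := hT ⟨s, by simpa [hr] using h0, rfl⟩
    simp only at this
    linarith
  set A₀ := max 1 (max B (max K (max T |F (0, 0)|))) with hA₀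
  have a1 : 1 ≤ A₀ := le_max_left _ _
  have a2 : B ≤ A₀ := (le_max_left _ _).trans (le_max_right _ _)
  have a3 : K ≤ A₀ := ((le_max_left _ _).trans (le_max_right _ _)).trans (le_max_right _ _)
  have a4 : T ≤ A₀ := (((le_max_left _ _).trans (le_max_right _ _)).trans (le_max_right _ _)).trans
    (le_max_right _ _)
  have a5 : |F (0, 0)| ≤ A₀ := (((le_max_right _ _).trans (le_max_right _ _)).trans
    (le_max_right _ _)).trans (le_max_right _ _)
  -- the counting formula
  have hregy : ∀ x s, D.evalEval s x ≠ 0 → ∀ y, P.evalEval x y = s →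
      (P.map (Polynomial.evalRingHom x)).derivative.eval y ≠ 0 := by
    intro x s hxs y hy h0
    obtain ⟨hm, hdeg⟩ := monic_fiber P hP hd x s
    rw [hD, discr_ne_zero_iff _ hm (by omega)] at hxs
    obtain ⟨a, b, hab⟩ := hxs
    have := congrArg (Polynomial.eval y) hab
    simp only [Polynomial.eval_add, Polynomial.eval_mul, Polynomial.derivative_sub,
      Polynomial.derivative_C, sub_zero, h0, Polynomial.eval_sub, Polynomial.eval_C,
      Polynomial.map_evalRingHom_eval, hy, sub_self] at this
    simp at this
  have hcount : ∀ A, A₀ ≤ A → ∀ X, 0 < X →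
      (∀ x, X ≤ |x| → D.evalEval A x ≠ 0 ∧ D.evalEval (-A) x ≠ 0) →
      2 * Nat.card (ConnectedComponents ↥{p : ℝ × ℝ | |F p| = A}) =
        {p : ℝ × ℝ | |F p| = A ∧ |p.1| = X}.ncard := by
    intro A hA X hX hDX
    have hA0 : 0 < A := by linarith
    refine count_components F hFC A X hA0 hX ?_ ?_ ?_ (hB A (a2.trans hA)) ?_
    · intro p hp h0
      linarith [hK p h0]
    · intro Y
      rw [hF]; exact monic_bdd P hP hd A Y
    · intro p hp hpX
      rw [hF, fderiv_evalEval_snd]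
      rw [hF] at hp
      rcases eq_or_eq_neg_of_abs_eq hp with h | h
      · exact hregy p.1 A (hDX p.1 hpX).1 p.2 h
      · exact hregy p.1 (-A) (hDX p.1 hpX).2 p.2 h
    · rw [hF]; exact (four_count P hP hd A X hA0 hX).1
  -- good X for a compact range of A
  have hgood : ∀ A₁ A₂, A₀ ≤ A₁ → A₁ ≤ A₂ → ∃ X₀ > 0, ∀ x, X₀ < |x| → ∀ s,
      s ∈ Icc A₁ A₂ ∪ Icc (-A₂) (-A₁) →
      0 < D.evalEval s x * x ^ D.natDegree * D.leadingCoeff.eval s := by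
    intro A₁ A₂ h1 h2
    refine sign_at_infinity D _ (isCompact_Icc.union isCompact_Icc) ?_
    rintro s (⟨hs1, hs2⟩ | ⟨hs1, hs2⟩)
    · exact hT s ((a4.trans (h1.trans hs1)).trans (le_abs_self s))
    · exact hT s ((a4.trans (h1.trans (by linarith))).trans (neg_le_abs s))
  have hconst : ∀ A, A₀ ≤ A → Nat.card (ConnectedComponents ↥{p : ℝ × ℝ | |F p| = A}) =
      Nat.card (ConnectedComponents ↥{p : ℝ × ℝ | |F p| = A₀}) := by
    intro A hA
    obtain ⟨X₀, hX₀, hX⟩ := hgood A₀ A le_rfl hA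
    have hne : ∀ x, X₀ + 1 ≤ |x| → ∀ s, s ∈ Icc A₀ A ∪ Icc (-A) (-A₀) → D.evalEval s x ≠ 0 := by
      intro x hx s hs h0
      have := hX x (by linarith) s hs
      rw [h0] at this; simp at this
    have c1 := hcount A hA (X₀ + 1) (by linarith) (fun x hx =>
      ⟨hne x hx A (Or.inl ⟨hA, le_rfl⟩), hne x hx (-A) (Or.inr ⟨le_rfl, by linarith⟩)⟩)
    have c2 := hcount A₀ le_rfl (X₀ + 1) (by linarith) (fun x hx =>
      ⟨hne x hx A₀ (Or.inl ⟨le_rfl, hA⟩), hne x hx (-A₀) (Or.inr ⟨by linarith, le_rfl⟩)⟩)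
    rw [hF, (four_count P hP hd A (X₀ + 1) (by linarith) (by linarith)).2, ← hF] at c1
    rw [hF, (four_count P hP hd A₀ (X₀ + 1) (by linarith) (by linarith)).2, ← hF] at c2
    have hrc : ∀ x, X₀ + 1 ≤ |x| → fibCount P x A₀ = fibCount P x A ∧
        fibCount P x (-A) = fibCount P x (-A₀) := by
      intro x hx
      have hdeg : 0 < (P.map (Polynomial.evalRingHom x)).natDegree := by
        rw [hP.natDegree_map]; exact hd
      have r1 := root_count_const (P.map (Polynomial.evalRingHom x)) hdeg A₀ A hA (fun s hs y hy =>
        hregy x s (hne x hx s (Or.inl hs)) y (by rw [← Polynomial.map_evalRingHom_eval]; exact hy))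
      have r2 := root_count_const (P.map (Polynomial.evalRingHom x)) hdeg (-A) (-A₀) (by linarith)
        (fun s hs y hy =>
        hregy x s (hne x hx s (Or.inr hs)) y (by rw [← Polynomial.map_evalRingHom_eval]; exact hy))
      simp only [Polynomial.map_evalRingHom_eval] at r1 r2
      exact ⟨r1, r2⟩
    have hp1 := hrc (X₀ + 1) (le_abs_self _)
    have hp2 := hrc (-(X₀ + 1)) (by rw [abs_neg]; exact le_abs_self _)
    omega
  obtain ⟨X₀, hX₀, hX⟩ := hgood A₀ A₀ le_rfl le_rfl
  have hm1 : A₀ ∈ Icc A₀ A₀ ∪ Icc (-A₀) (-A₀) := Or.inl ⟨le_rfl, le_rfl⟩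
  have hm2 : -A₀ ∈ Icc A₀ A₀ ∪ Icc (-A₀) (-A₀) := Or.inr ⟨le_rfl, le_rfl⟩
  have hne : ∀ x, X₀ < |x| → D.evalEval A₀ x ≠ 0 ∧ D.evalEval (-A₀) x ≠ 0 := by
    intro x hx
    constructor
    · intro h0
      have := hX x hx _ hm1
      rw [h0] at this; simp at this
    · intro h0
      have := hX x hx _ hm2
      rw [h0] at this; simp at this
  have heven : Even (Nat.card (ConnectedComponents ↥{p : ℝ × ℝ | |F p| = A₀})) := by
    have c1 := hcount A₀ le_rfl (X₀ + 1) (by linarith) (fun x hx => hne x (by linarith))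
    rw [hF, (four_count P hP hd A₀ (X₀ + 1) (by linarith) (by linarith)).2, ← hF] at c1
    have hx1 : X₀ < |X₀ + 1| := lt_of_lt_of_le (by linarith) (le_abs_self _)
    have hx2 : X₀ < |-(X₀ + 1)| := by rw [abs_neg]; exact hx1
    have hsgn : ∀ x, X₀ < |x| → ∀ s, D.evalEval s x ≠ 0 → ∃ k : ℕ,
        P.natDegree = fibCount P x s + 2 * k ∧ 0 < (-1) ^ k * D.evalEval s x := by
      intro x hx s hs
      obtain ⟨hm, hdeg⟩ := monic_fiber P hP hd x s
      rw [hD] at hs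
      obtain ⟨k, hk⟩ := discr_sign P.natDegree _ hm hdeg hs
      refine ⟨k, ?_⟩
      rw [fibCount_eq P hP hd, hD]
      exact hk
    obtain ⟨k₁, u1, v1⟩ := hsgn _ hx1 _ (hne _ hx1).1
    obtain ⟨k₂, u2, v2⟩ := hsgn _ hx1 _ (hne _ hx1).2
    obtain ⟨k₃, u3, v3⟩ := hsgn _ hx2 _ (hne _ hx2).1
    obtain ⟨k₄, u4, v4⟩ := hsgn _ hx2 _ (hne _ hx2).2
    refine four_parity P.natDegree _ _ _ _ k₁ k₂ k₃ k₄ _ _ _ _ _ u1 u2 u3 u4 v1 v2 v3 v4 ?_ c1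
    have w := mul_pos (mul_pos (hX _ hx1 _ hm1) (hX _ hx1 _ hm2))
      (mul_pos (hX _ hx2 _ hm1) (hX _ hx2 _ hm2))
    set q := (X₀ + 1) ^ D.natDegree with hq
    set q' := (-(X₀ + 1)) ^ D.natDegree with hq'
    set r := D.leadingCoeff.eval A₀
    set r' := D.leadingCoeff.eval (-A₀)
    set D₁ := D.evalEval A₀ (X₀ + 1)
    set D₂ := D.evalEval (-A₀) (X₀ + 1)
    set D₃ := D.evalEval A₀ (-(X₀ + 1))
    set D₄ := D.evalEval (-A₀) (-(X₀ + 1))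
    have hw : D₁ * q * r * (D₂ * q * r') * (D₃ * q' * r * (D₄ * q' * r')) =
      (D₁ * D₂ * (D₃ * D₄)) * (q * q' * r * r') ^ 2 := by ring
    rw [hw] at w
    exact pos_of_mul_pos_left w (sq_nonneg _)
  obtain ⟨N, hN⟩ := heven
  refine ⟨A₀, by linarith, N, ?_, fun A hA => ⟨by rw [hconst A hA, hN]; ring, hB A (a2.trans hA)⟩⟩
  -- positivity
  by_contra hN0
  have hz : Nat.card (ConnectedComponents ↥{p : ℝ × ℝ | |F p| = A₀}) = 0 := by omega
  have hempty : ∀ p, |F p| = A₀ → |p.1| ≤ X₀ := by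
    intro p hp
    by_contra hlt
    push Not at hlt
    have c1 := hcount A₀ le_rfl |p.1| (by linarith) (fun x hx => hne x (by linarith))
    rw [hz, mul_zero, eq_comm, ncard_eq_zero (by
      rw [hF]; exact (four_count P hP hd A₀ |p.1| (by linarith) (by linarith)).1)] at c1
    have : p ∈ (∅ : Set (ℝ × ℝ)) := by rw [← c1]; exact ⟨hp, rfl⟩
    exact this
  have hcl : IsClosed {p : ℝ × ℝ | |F p| = A₀} := isClosed_eq hFC.continuous.abs continuous_const
  have hbd : Bornology.IsBounded {p : ℝ × ℝ | |F p| = A₀} := by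
    have := monic_bdd P hP hd A₀ X₀
    refine this.subset fun p hp => ⟨?_, hempty p hp⟩
    have h : |F p| = A₀ := hp
    rw [hF] at h; exact h
  obtain ⟨p, hp⟩ : ∃ p, |F p| = A₀ := by
    set g := P.map (Polynomial.evalRingHom (0 : ℝ)) with hg
    have hdeg : 0 < g.natDegree := by
      rw [hP.natDegree_map]; exact hd
    have htend := Polynomial.tendsto_norm_atTop g (Polynomial.natDegree_pos_iff_degree_pos.1 hdeg)
      (tendsto_norm_atTop_atTop : Tendsto (fun y : ℝ => ‖y‖) atTop atTop)
    obtain ⟨y, hy⟩ := (htend.eventually_ge_atTop A₀).exists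
    have hFg : ∀ y, F (0, y) = g.eval y := by
      intro y; rw [hF, hg, Polynomial.map_evalRingHom_eval]
    rw [Real.norm_eq_abs, ← hFg] at hy
    have hcont : Continuous fun y : ℝ => |F (0, y)| :=
      (hFC.continuous.comp (by fun_prop : Continuous fun y : ℝ => ((0 : ℝ), y))).abs
    obtain ⟨w, -, hw⟩ := isPreconnected_univ.intermediate_value (mem_univ (0 : ℝ)) (mem_univ y)
      hcont.continuousOn (show A₀ ∈ Icc |F (0, 0)| |F (0, y)| from ⟨a5, hy⟩)
    exact ⟨_, hw⟩
  refine hB A₀ a2 p hp ?_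
  exact Metric.isCompact_of_isClosed_isBounded (comp_closed hcl p hp)
    (hbd.subset (connectedComponentIn_subset _ _))


open Set Topology in
lemma card_components_congr {α β : Type} [TopologicalSpace α] [TopologicalSpace β] (h : α ≃ₜ β) :
    Nat.card (ConnectedComponents α) = Nat.card (ConnectedComponents β) := by
  refine Nat.card_congr ⟨h.continuous.connectedComponentsMap, h.symm.continuous.connectedComponentsMap,
    ?_, ?_⟩
  · intro x
    obtain ⟨a, rfl⟩ := ConnectedComponents.surjective_coe x
    change ((h.symm (h a) : α) : ConnectedComponents α) = a
    rw [h.symm_apply_apply]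
  · intro x
    obtain ⟨a, rfl⟩ := ConnectedComponents.surjective_coe x
    change ((h (h.symm a) : β) : ConnectedComponents β) = a
    rw [h.apply_symm_apply]

lemma evalP_hasFDerivAt (f : MvPolynomial (Fin 2) ℝ) (p : ℝ × ℝ) :
    HasFDerivAt (fun p : ℝ × ℝ => evalP f p.1 p.2)
      (evalP (pderiv 0 f) p.1 p.2 • ContinuousLinearMap.fst ℝ ℝ ℝ +
        evalP (pderiv 1 f) p.1 p.2 • ContinuousLinearMap.snd ℝ ℝ ℝ) p := by
  induction f using MvPolynomial.induction_on with
  | C a =>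
    simp only [evalP, pderiv_C, map_zero, zero_smul, add_zero, eval_C]
    exact hasFDerivAt_const a p
  | add f g hf hg =>
    have := hf.add hg
    simp only [evalP, map_add] at this ⊢
    refine this.congr_fderiv ?_
    ext <;> simp <;> ring
  | mul_X f i hf =>
    have hX : HasFDerivAt (fun p : ℝ × ℝ => evalP (MvPolynomial.X i) p.1 p.2)
        (evalP (pderiv 0 (MvPolynomial.X i)) p.1 p.2 • ContinuousLinearMap.fst ℝ ℝ ℝ +
        evalP (pderiv 1 (MvPolynomial.X i)) p.1 p.2 • ContinuousLinearMap.snd ℝ ℝ ℝ) p := by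
      fin_cases i
      · simpa [evalP, pderiv_X] using (hasFDerivAt_fst (𝕜 := ℝ) (p := p))
      · simpa [evalP, pderiv_X] using (hasFDerivAt_snd (𝕜 := ℝ) (p := p))
    have := hf.mul hX
    simp only [evalP, map_mul, map_add, Derivation.leibniz, smul_eq_mul] at this ⊢
    refine this.congr_fderiv ?_
    ext <;> simp <;> ring

lemma shear_normal_form (f : MvPolynomial (Fin 2) ℝ) (hnc : 0 < f.totalDegree) :
    ∃ (s c : ℝ) (P : Polynomial (Polynomial ℝ)), c ≠ 0 ∧ P.Monic ∧ 0 < P.natDegree ∧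
      ∀ x y, evalP f (x + s * y) y = c * P.evalEval x y := by
  set d := f.totalDegree with hd
  set h : Polynomial ℝ := ∑ m ∈ f.support.filter (fun m => m 0 + m 1 = d),
    Polynomial.monomial (m 0) (f.coeff m) with hh
  have hle : ∀ m ∈ f.support, m 0 + m 1 ≤ d := by
    intro m hm
    have := le_totalDegree hm
    rw [Finsupp.sum_fintype _ _ (fun _ => rfl), Fin.sum_univ_two] at this
    exact this
  have hh0 : h ≠ 0 := by
    have hne : f.support.Nonempty := by
      rw [Finset.nonempty_iff_ne_empty]
      intro he
      rw [support_eq_empty] at he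
      rw [he, totalDegree_zero] at hd
      omega
    obtain ⟨m, hm, hmd⟩ := Finset.exists_mem_eq_sup f.support hne (fun m => m.sum fun _ e => e)
    have hmd' : m 0 + m 1 = d := by
      rw [hd, totalDegree, hmd, Finsupp.sum_fintype _ _ (fun _ => rfl), Fin.sum_univ_two]
    intro h0
    have hc : h.coeff (m 0) = f.coeff m := by
      rw [hh, Polynomial.finset_sum_coeff, Finset.sum_eq_single m]
      · simp
      · intro m' hm' hne'
        rw [Polynomial.coeff_monomial, if_neg]
        intro he
        apply hne'
        ext i
        have := (Finset.mem_filter.1 hm').2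
        fin_cases i
        · exact he
        · change m' 1 = m 1
          omega
      · intro hmem
        exact absurd (Finset.mem_filter.2 ⟨hm, hmd'⟩) hmem
    rw [h0, Polynomial.coeff_zero] at hc
    exact (mem_support_iff.1 hm) hc.symm
  obtain ⟨s, hs⟩ : ∃ s, h.eval s ≠ 0 := by
    by_contra hall
    push Not at hall
    exact hh0 (Polynomial.funext fun r => by rw [hall r, Polynomial.eval_zero])
  set ℓ : Polynomial (Polynomial ℝ) := Polynomial.C Polynomial.X +
    Polynomial.C (Polynomial.C s) * Polynomial.X with hl
  have hℓd : ℓ.natDegree ≤ 1 := by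
    rw [hl, add_comm]; exact Polynomial.natDegree_linear_le
  have hℓc : ℓ.coeff 1 = Polynomial.C s := by
    simp [hl, Polynomial.coeff_C]
  set Q : Polynomial (Polynomial ℝ) := ∑ m ∈ f.support,
    Polynomial.C (Polynomial.C (f.coeff m)) * (ℓ ^ (m 0) * Polynomial.X ^ (m 1)) with hQ
  have hterm : ∀ a b : ℕ, (ℓ ^ a * Polynomial.X ^ b).natDegree ≤ a + b := by
    intro a b
    refine Polynomial.natDegree_mul_le.trans ?_
    have h1 : (ℓ ^ a).natDegree ≤ a := Polynomial.natDegree_pow_le.trans (by nlinarith)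
    have h2 : (Polynomial.X ^ b : Polynomial (Polynomial ℝ)).natDegree ≤ b :=
      Polynomial.natDegree_X_pow_le b
    omega
  have hQd : Q.natDegree ≤ d := by
    apply Polynomial.natDegree_sum_le_of_forall_le
    intro m hm
    exact (Polynomial.natDegree_C_mul_le _ _).trans ((hterm _ _).trans (hle m hm))
  have hQc : Q.coeff d = Polynomial.C (h.eval s) := by
    rw [hQ, Polynomial.finset_sum_coeff, hh, Polynomial.eval_finset_sum, map_sum, Finset.sum_filter]
    apply Finset.sum_congr rfl
    intro m hm
    rw [Polynomial.coeff_C_mul]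
    split_ifs with hmd
    · rw [← hmd, Polynomial.coeff_mul_X_pow]
      have := Polynomial.coeff_pow_of_natDegree_le (m := m 0) hℓd
      rw [mul_one] at this
      rw [this, hℓc, Polynomial.eval_monomial, map_mul, map_pow]
    · rw [Polynomial.coeff_eq_zero_of_natDegree_lt, mul_zero]
      have := hle m hm
      exact (hterm _ _).trans_lt (by omega)
  have hQe : ∀ x y, Q.evalEval x y = evalP f (x + s * y) y := by
    intro x y
    rw [hQ, Polynomial.evalEval_finset_sum, evalP, MvPolynomial.eval_eq']
    apply Finset.sum_congr rfl
    intro m hm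
    rw [Fin.prod_univ_two]
    simp [hl, Polynomial.evalEval_C]
  refine ⟨s, h.eval s, Polynomial.C (Polynomial.C (h.eval s)⁻¹) * Q, hs, ?_, ?_, ?_⟩
  · apply Polynomial.monic_of_natDegree_le_of_coeff_eq_one d
    · exact (Polynomial.natDegree_C_mul_le _ _).trans hQd
    · rw [Polynomial.coeff_C_mul, hQc, ← map_mul, inv_mul_cancel₀ hs, map_one]
  · refine lt_of_lt_of_le hnc (Polynomial.le_natDegree_of_ne_zero (n := d) ?_)
    rw [Polynomial.coeff_C_mul, hQc, ← map_mul, inv_mul_cancel₀ hs, map_one]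
    exact one_ne_zero
  · intro x y
    rw [Polynomial.evalEval_mul, Polynomial.evalEval_C, Polynomial.eval_C, hQe, ← mul_assoc,
      mul_inv_cancel₀ hs, one_mul]

/-- The shear homeomorphism `(x, y) ↦ (x + s y, y)`. -/
def shearHomeo (s : ℝ) : ℝ × ℝ ≃ₜ ℝ × ℝ where
  toFun p := (p.1 + s * p.2, p.2)
  invFun p := (p.1 - s * p.2, p.2)
  left_inv p := by simp
  right_inv p := by simp
  continuous_toFun := by fun_prop
  continuous_invFun := by fun_prop

theorem large_absolute_level_sets_have_2N_noncompact_components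
    (f : MvPolynomial (Fin 2) ℝ) (hnc : 0 < f.totalDegree)
    (hfin : {p : ℝ × ℝ | IsCriticalPt f p}.Finite)
    (hnoncpt : ∃ t : ℝ, ¬ IsCompact {p : ℝ × ℝ | evalP f p.1 p.2 = t}) :
    ∃ A₀ : ℝ, 0 < A₀ ∧ ∃ N : ℕ, 1 ≤ N ∧ ∀ A : ℝ, A₀ ≤ A →
      Nat.card (ConnectedComponents ↥{p : ℝ × ℝ | |evalP f p.1 p.2| = A}) = 2 * N ∧
      ∀ p ∈ {p : ℝ × ℝ | |evalP f p.1 p.2| = A},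
        ¬ IsCompact (connectedComponentIn {p : ℝ × ℝ | |evalP f p.1 p.2| = A} p) := by
  obtain ⟨s, c, P, hc, hP, hd, hPe⟩ := shear_normal_form f hnc
  obtain ⟨t, ht⟩ := hnoncpt
  set L := shearHomeo s with hL
  have hLa : ∀ p, L p = (p.1 + s * p.2, p.2) := fun p => rfl
  set F : ℝ × ℝ → ℝ := fun p => P.evalEval p.1 p.2 with hF
  have hFL : ∀ p, evalP f (L p).1 (L p).2 = c * F p := fun p => hPe p.1 p.2
  have hfin' : {p | fderiv ℝ F p = 0}.Finite := by
    refine (hfin.preimage (f := L) L.injective.injOn).subset ?_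
    intro p hp
    have hp0 : fderiv ℝ F p = 0 := hp
    have hlin : HasFDerivAt (fun p : ℝ × ℝ => (p.1 + s * p.2, p.2))
        ((ContinuousLinearMap.fst ℝ ℝ ℝ + s • ContinuousLinearMap.snd ℝ ℝ ℝ).prod
          (ContinuousLinearMap.snd ℝ ℝ ℝ)) p :=
      (hasFDerivAt_fst.add (hasFDerivAt_snd.const_mul s)).prodMk hasFDerivAt_snd
    have h1 := (evalP_hasFDerivAt f (L p)).comp p hlin
    have h2 : HasFDerivAt F (fderiv ℝ F p) p :=
      ((evalEval_cont P).differentiable (by norm_num) p).hasFDerivAt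
    rw [hp0] at h2
    have h3 := h2.const_mul c
    have h4 := h1.unique (h3.congr_of_eventuallyEq (Eventually.of_forall fun q => hFL q))
    have e1 := congrArg (fun T : ℝ × ℝ →L[ℝ] ℝ => T (1, 0)) h4
    have e2 := congrArg (fun T : ℝ × ℝ →L[ℝ] ℝ => T (-s, 1)) h4
    simp at e1 e2
    exact ⟨e1, e2⟩
  have hcpt : ¬ IsCompact {p | F p = t / c} := by
    intro hcon
    apply ht
    convert hcon.image L.continuous using 1
    ext q
    obtain ⟨p, rfl⟩ := L.surjective q
    rw [L.injective.mem_set_image]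
    change evalP f (L p).1 (L p).2 = t ↔ F p = t / c
    rw [hFL, eq_div_iff hc, mul_comm]
  obtain ⟨A₀, hA₀, N, hN, hmain⟩ := core_thm P hP hd F hF hfin' (t / c) hcpt
  have hc' : 0 < |c| := abs_pos.2 hc
  refine ⟨A₀ * |c|, by positivity, N, hN, fun A hA => ?_⟩
  obtain ⟨h1, h2⟩ := hmain (A / |c|) ((le_div_iff₀ hc').2 hA)
  have himg : L '' {p | |F p| = A / |c|} = {p : ℝ × ℝ | |evalP f p.1 p.2| = A} := by
    ext q
    obtain ⟨p, rfl⟩ := L.surjective q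
    rw [L.injective.mem_set_image]
    change |F p| = A / |c| ↔ |evalP f (L p).1 (L p).2| = A
    rw [hFL, abs_mul, eq_div_iff hc'.ne', mul_comm]
  rw [← himg]
  refine ⟨?_, ?_⟩
  · rw [← h1]
    exact (card_components_congr (L.image _)).symm
  · rintro _ ⟨p, hp, rfl⟩ hcon
    apply h2 p hp
    rw [← L.image_connectedComponentIn hp] at hcon
    exact L.isCompact_image.1 hcon
end
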